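/- arXiv:2210.04967 — 2 statements merged into one kernel-verified Lean document; each statement's English description precedes it below -/
import Mathlib

section
/- Let H be a finite simple graph with maximum degree Δ(H) ≥ 6 and clique number ω(H) ≤ Δ(H) − 1, and let p ≥ 4 and q ≥ 2 be integers with p + q = Δ(H) + 1. Then there exists a partition of V(H) into two sets V_1 and V_2 such that the induced subgraph H[V_1] is K_p-free and the induced subgraph H[V_2] is K_q-free. -/
namespace KK
open Finset
open scoped Classical

/-- One step data of the Haxell argument. -/
def State {V ι : Type*} (P : ι → Finset V) (R : V → V → Prop) (T : Finset ι) (m : ℕ) : Prop :=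
  ∃ (F : Set (ι → V)) (X : Finset V) (W : Finset ι) (f₀ : ι → V),
    f₀ ∈ F ∧ W ⊆ T ∧ X.card ≤ W.card ∧ m ≤ W.card ∧
    (∀ f ∈ F, (∀ i ∈ T, f i ∈ P i) ∧ ∀ i ∈ T, ∀ j ∈ T, i ≠ j → ¬ R (f i) (f j)) ∧
    (∀ f ∈ F, ∀ i ∈ W, f i = f₀ i) ∧
    (∀ f ∈ F, ∀ i ∈ T, i ∉ W → ∀ v ∈ P i, (∀ x ∈ X, ¬ R x v) →
      (∀ j ∈ T, j ≠ i → ¬ R v (f j)) → Function.update f i v ∈ F) ∧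
    (∀ f ∈ F, ∀ i ∈ W, ∀ v ∈ P i, (∀ x ∈ X, ¬ R x v) → (∀ j ∈ T, ¬ R v (f j)) → False)

lemma state_step {V ι : Type*} [Fintype V] (P : ι → Finset V)
    (hdisj : ∀ i j, i ≠ j → Disjoint (P i) (P j)) (R : V → V → Prop)
    (hsymm : ∀ a b, R a b → R b a)
    (hd2 : ∀ v, (univ.filter (R v)).card ≤ 2)
    (hdP : ∀ i, ∀ v ∈ P i, (univ.filter (R v)).card + 2 ≤ (P i).card)
    (hne : ∀ i, (P i).Nonempty)
    (T : Finset ι) (i₀ : ι) (hi₀ : i₀ ∉ T)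
    (hno : ∀ f : ι → V, (∀ i ∈ T, f i ∈ P i) → (∀ i ∈ T, ∀ j ∈ T, i ≠ j → ¬ R (f i) (f j)) →
      ∀ v ∈ P i₀, ¬ ∀ j ∈ T, ¬ R v (f j))
    (m : ℕ) (h : State P R T m) : State P R T (m+1) := by
  obtain ⟨F, X, W, f₀, hf₀, hWT, hXW, hmW, hgood, hagree, hclos, hkey⟩ := h
  -- undominated vertex
  have hund : ∃ i ∈ insert i₀ W, ∃ x ∈ P i, (∀ y ∈ X, ¬ R y x) ∧ ∀ j ∈ W, ¬ R x (f₀ j) := by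
    by_contra hcon
    push Not at hcon
    have hsub : (insert i₀ W).biUnion P ⊆
        X.biUnion (fun y => univ.filter (R y)) ∪ W.biUnion (fun j => univ.filter (R (f₀ j))) := by
      intro x hx
      rw [mem_biUnion] at hx
      obtain ⟨i, hi, hxi⟩ := hx
      rw [mem_union, mem_biUnion, mem_biUnion]
      by_cases hX : ∃ y ∈ X, R y x
      · obtain ⟨y, hy, hyx⟩ := hX
        exact Or.inl ⟨y, hy, by simpa using hyx⟩
      · push Not at hX
        obtain ⟨j, hj, hjx⟩ := hcon i hi x hxi hX
        exact Or.inr ⟨j, hj, by simpa using hsymm _ _ hjx⟩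
    have h1 := card_le_card hsub
    rw [card_biUnion (fun i _ j _ hij => hdisj i j hij)] at h1
    have hi₀W : i₀ ∉ W := fun h => hi₀ (hWT h)
    rw [sum_insert hi₀W] at h1
    have h2 := card_union_le (X.biUnion (fun y => univ.filter (R y)))
      (W.biUnion (fun j => univ.filter (R (f₀ j))))
    have h3 : (X.biUnion (fun y => univ.filter (R y))).card ≤ X.card * 2 :=
      card_biUnion_le_card_mul _ _ _ (fun y _ => hd2 y)
    have h4 : (W.biUnion (fun j => univ.filter (R (f₀ j)))).card
        ≤ ∑ j ∈ W, (univ.filter (R (f₀ j))).card := card_biUnion_le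
    have h5 : ∑ j ∈ W, ((univ.filter (R (f₀ j))).card + 2) ≤ ∑ j ∈ W, (P j).card :=
      sum_le_sum (fun j hj => hdP j _ ((hgood f₀ hf₀).1 j (hWT hj)))
    rw [sum_add_distrib, sum_const, smul_eq_mul] at h5
    have h6 := (hne i₀).card_pos
    omega
  obtain ⟨i, hi, x, hxi, hxX, hxW⟩ := hund
  let N : (ι → V) → Finset ι := fun f => T.filter (fun j => R x (f j))
  obtain ⟨f, hfF, hfmin⟩ : ∃ f ∈ F, ∀ g ∈ F, (N f).card ≤ (N g).card := by
    have : ∃ n, ∃ f ∈ F, (N f).card = n := ⟨_, f₀, hf₀, rfl⟩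
    obtain ⟨f, hf, hfn⟩ := Nat.find_spec this
    refine ⟨f, hf, fun g hg => ?_⟩
    rw [hfn]
    exact Nat.find_min' this ⟨g, hg, rfl⟩
  have hNne : (N f).Nonempty := by
    by_contra hem
    have hem' : ∀ j ∈ T, ¬ R x (f j) := by
      intro j hj hr
      exact hem ⟨j, by simp [N, hj, hr]⟩
    rcases mem_insert.1 hi with rfl | hiW
    · exact hno f (hgood f hfF).1 (hgood f hfF).2 x hxi hem'
    · exact hkey f hfF i hiW x hxi hxX hem'
  have hdisjN : Disjoint W (N f) := by
    rw [disjoint_left]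
    intro j hj hjN
    have : R x (f j) := (mem_filter.1 hjN).2
    rw [hagree f hfF j hj] at this
    exact hxW j hj this
  refine ⟨{g | g ∈ F ∧ N g = N f ∧ ∀ j ∈ N f, g j = f j}, insert x X, W ∪ N f, f,
    ⟨hfF, rfl, fun _ _ => rfl⟩, union_subset hWT (filter_subset _ _), ?_, ?_, ?_, ?_, ?_, ?_⟩
  · rw [card_union_of_disjoint hdisjN]
    have := hNne.card_pos
    have := card_insert_le x X
    omega
  · rw [card_union_of_disjoint hdisjN]
    have := hNne.card_pos
    omega
  · rintro g ⟨hg, -⟩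
    exact hgood g hg
  · rintro g ⟨hg, -, hgN⟩ j hj
    rcases mem_union.1 hj with hj | hj
    · rw [hagree g hg j hj, hagree f hfF j hj]
    · exact hgN j hj
  · rintro g ⟨hg, hgN, hgf⟩ j hj hjW v hv hvX hvT
    rw [mem_union, not_or] at hjW
    have hup := hclos g hg j hj hjW.1 v hv (fun y hy => hvX y (mem_insert_of_mem hy)) hvT
    refine ⟨hup, ?_, ?_⟩
    · rw [← hgN]
      ext l
      simp only [N, mem_filter]
      by_cases hl : l = j
      · subst hl
        have h1 : ¬ R x v := hvX x (mem_insert_self _ _)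
        have h2 : ¬ (l ∈ T ∧ R x (g l)) := by
          intro h
          apply hjW.2
          rw [← hgN]
          exact mem_filter.2 h
        simp only [Function.update_self]
        tauto
      · rw [Function.update_of_ne hl]
    · intro l hl
      have : l ≠ j := by rintro rfl; exact hjW.2 hl
      rw [Function.update_of_ne this]
      exact hgf l hl
  · rintro g ⟨hg, hgN, hgf⟩ j hj v hv hvX hvT
    have hvX' : ∀ y ∈ X, ¬ R y v := fun y hy => hvX y (mem_insert_of_mem hy)
    rcases mem_union.1 hj with hj | hj
    · exact hkey g hg j hj v hv hvX' hvT
    · have hjT : j ∈ T := (mem_filter.1 hj).1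
      have hup := hclos g hg j hjT (disjoint_right.1 hdisjN hj) v hv hvX' (fun l hl _ => hvT l hl)
      have h1 := hfmin _ hup
      have h2 : N (Function.update g j v) ⊆ (N f).erase j := by
        intro l hl
        simp only [N, mem_filter] at hl
        have hlj : l ≠ j := by
          rintro rfl
          rw [Function.update_self] at hl
          exact hvX x (mem_insert_self _ _) hl.2
        rw [Function.update_of_ne hlj] at hl
        rw [mem_erase, ← hgN]
        exact ⟨hlj, mem_filter.2 hl⟩
      have h3 := card_le_card h2
      rw [card_erase_of_mem hj] at h3
      have := card_pos.2 ⟨j, hj⟩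
      omega

/-- Haxell-type theorem (lopsided version, maximum degree two). -/
theorem haxell {V ι : Type*} [Fintype V] [Fintype ι] (P : ι → Finset V)
    (hdisj : ∀ i j, i ≠ j → Disjoint (P i) (P j)) (R : V → V → Prop)
    (hsymm : ∀ a b, R a b → R b a)
    (hd2 : ∀ v, (univ.filter (R v)).card ≤ 2)
    (hdP : ∀ i, ∀ v ∈ P i, (univ.filter (R v)).card + 2 ≤ (P i).card)
    (hne : ∀ i, (P i).Nonempty) :
    ∃ f : ι → V, (∀ i, f i ∈ P i) ∧ ∀ i j, i ≠ j → ¬ R (f i) (f j) := by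
  suffices h : ∀ T : Finset ι, ∃ f : ι → V, (∀ i ∈ T, f i ∈ P i) ∧
      ∀ i ∈ T, ∀ j ∈ T, i ≠ j → ¬ R (f i) (f j) by
    obtain ⟨f, h1, h2⟩ := h univ
    exact ⟨f, fun i => h1 i (mem_univ _), fun i j => h2 i (mem_univ _) j (mem_univ _)⟩
  intro T
  induction T using Finset.induction_on with
  | empty => exact ⟨fun i => (hne i).choose, by simp, by simp⟩
  | insert i₀ T hi₀ ih =>
    obtain ⟨f₀, hf1, hf2⟩ := ih
    by_contra hcon
    have hno : ∀ f : ι → V, (∀ i ∈ T, f i ∈ P i) →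
        (∀ i ∈ T, ∀ j ∈ T, i ≠ j → ¬ R (f i) (f j)) →
        ∀ v ∈ P i₀, ¬ ∀ j ∈ T, ¬ R v (f j) := by
      intro f h1 h2 v hv hvT
      apply hcon
      have hne' : ∀ i ∈ T, i ≠ i₀ := by rintro i hi rfl; exact hi₀ hi
      refine ⟨Function.update f i₀ v, ?_, ?_⟩
      · intro i hi
        rcases mem_insert.1 hi with rfl | hi
        · simpa using hv
        · rw [Function.update_of_ne (hne' i hi)]; exact h1 i hi
      · intro i hi j hj hij
        rcases mem_insert.1 hi with hi1 | hi1
        · rcases mem_insert.1 hj with hj1 | hj1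
          · exact absurd (hi1.trans hj1.symm) hij
          · rw [hi1, Function.update_self, Function.update_of_ne (hne' j hj1)]
            exact hvT j hj1
        · rw [Function.update_of_ne (hne' i hi1)]
          rcases mem_insert.1 hj with hj1 | hj1
          · rw [hj1, Function.update_self]
            exact fun h => hvT i hi1 (hsymm _ _ h)
          · rw [Function.update_of_ne (hne' j hj1)]
            exact h2 i hi1 j hj1 hij
    have hall : ∀ m, State P R T m := by
      intro m
      induction m with
      | zero =>
        refine ⟨{f | (∀ i ∈ T, f i ∈ P i) ∧ ∀ i ∈ T, ∀ j ∈ T, i ≠ j → ¬ R (f i) (f j)}, ∅, ∅, f₀,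
          ⟨hf1, hf2⟩, by simp, by simp, by simp, fun f hf => hf, by simp, ?_, by simp⟩
        rintro f ⟨h1, h2⟩ i hi - v hv - hvT
        refine ⟨?_, ?_⟩
        · intro j hj
          by_cases hji : j = i
          · subst hji; simpa using hv
          · rw [Function.update_of_ne hji]; exact h1 j hj
        · intro j hj l hl hjl
          by_cases hji : j = i
          · subst hji
            rw [Function.update_self, Function.update_of_ne (Ne.symm hjl)]
            exact hvT l hl (Ne.symm hjl)
          · rw [Function.update_of_ne hji]
            by_cases hli : l = i
            · subst hli
              rw [Function.update_self]
              exact fun h => hvT j hj hji (hsymm _ _ h)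
            · rw [Function.update_of_ne hli]
              exact h2 j hj l hl hjl
      | succ m ihm => exact state_step P hdisj R hsymm hd2 hdP hne T i₀ hi₀ hno m ihm
    obtain ⟨F, X, W, f, -, hWT, -, hm, -⟩ := hall (T.card + 1)
    have := card_le_card hWT
    omega

/-- neighbour set -/
noncomputable def nb {V : Type*} [Fintype V] (G : SimpleGraph V) (v : V) : Finset V :=
  univ.filter (G.Adj v)

lemma mem_nb {V : Type*} [Fintype V] {G : SimpleGraph V} {v u : V} : u ∈ nb G v ↔ G.Adj v u := by
  simp [nb]

/-- Cliques of size `k`. -/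
abbrev Kq {V : Type*} (G : SimpleGraph V) (k : ℕ) := {Q : Finset V // G.IsNClique k Q}

/-- Two cliques are in the same cluster. -/
def Same {V : Type*} {G : SimpleGraph V} {k : ℕ} (Q Q' : Kq G k) : Prop :=
  Relation.EqvGen (fun A B : Kq G k => ¬ Disjoint A.1 B.1) Q Q'

lemma same_closed {V : Type*} {G : SimpleGraph V} {k : ℕ} (p : Kq G k → Prop)
    (hp : ∀ A B : Kq G k, ¬ Disjoint A.1 B.1 → p A → p B) {Q Q' : Kq G k} (h : Same Q Q') :
    p Q ↔ p Q' := by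
  induction h with
  | rel A B h => exact ⟨hp A B h, hp B A (fun h' => h h'.symm)⟩
  | refl => rfl
  | symm _ _ _ ih => exact ih.symm
  | trans _ _ _ _ _ ih1 ih2 => exact ih1.trans ih2

lemma same_refl {V : Type*} {G : SimpleGraph V} {k : ℕ} (Q : Kq G k) : Same Q Q :=
  Relation.EqvGen.refl _

lemma same_of_meet {V : Type*} {G : SimpleGraph V} {k : ℕ} {Q A B : Kq G k} (h : Same Q A)
    (hab : ¬ Disjoint A.1 B.1) : Same Q B :=
  Relation.EqvGen.trans _ _ _ h (Relation.EqvGen.rel _ _ hab)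

/-- A gadget for the cluster of `Q`. -/
def Gadget {V : Type*} [Fintype V] (G : SimpleGraph V) (k : ℕ) (Ok : Finset V → Prop)
    (Q : Kq G k) : Prop :=
  ∃ (U C : Finset V) (F : V → Finset V),
    (∀ Q' : Kq G k, Same Q Q' → Q'.1 ⊆ U) ∧
    (∀ u ∈ U, ∃ Q' : Kq G k, Same Q Q' ∧ u ∈ Q'.1) ∧
    C.Nonempty ∧ C ⊆ U ∧
    ∀ v ∈ C, (nb G v \ U).card ≤ 2 ∧ (nb G v \ U).card + 2 ≤ C.card ∧ F v ⊆ U ∧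
      (∀ Q' : Kq G k, Same Q Q' → ∃ u ∈ F v, u ∈ Q'.1) ∧
      (∀ u ∈ F v, u ≠ v → nb G u ⊆ U) ∧ Ok (F v)

theorem assemble {V : Type*} [Fintype V] (G : SimpleGraph V) (k : ℕ) (Ok : Finset V → Prop)
    (h : ∀ Q : Kq G k, Gadget G k Ok Q) :
    ∃ J : Finset V, (∀ Q, G.IsNClique k Q → ∃ u ∈ J, u ∈ Q) ∧
      (∀ a ∈ J, ∃ Q, G.IsNClique k Q ∧ a ∈ Q) ∧
      (∀ a ∈ J, ∀ b ∈ J, G.Adj a b →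
        ∃ F, Ok F ∧ a ∈ F ∧ b ∈ F ∧ ∀ c ∈ J, G.Adj a c → c ∈ F) := by
  let S : Setoid (Kq G k) :=
    Relation.EqvGen.setoid (fun A B : Kq G k => ¬ Disjoint A.1 B.1)
  let ι := Quotient S
  have : Fintype ι := Fintype.ofFinite _
  choose U C F hU1 hU2 hCne hCU hC using fun i : ι => h i.out
  have hout : ∀ Q : Kq G k, Same (Quotient.mk S Q).out Q := by
    intro Q
    have h1 : (Quotient.mk S Q).out ≈ Q := Quotient.exact (Quotient.out_eq (Quotient.mk S Q))
    exact h1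
  have hUd : ∀ i j : ι, ∀ x, x ∈ U i → x ∈ U j → i = j := by
    intro i j x hi hj
    obtain ⟨Q, hQ, hxQ⟩ := hU2 i x hi
    obtain ⟨Q', hQ', hxQ'⟩ := hU2 j x hj
    have h1 : Same Q Q' := Relation.EqvGen.rel _ _ (not_disjoint_iff.2 ⟨x, hxQ, hxQ'⟩)
    have h2 : Same i.out j.out :=
      Relation.EqvGen.trans _ _ _ hQ (Relation.EqvGen.trans _ _ _ h1 (Relation.EqvGen.symm _ _ hQ'))
    have h3 : Quotient.mk S i.out = Quotient.mk S j.out := Quotient.sound h2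
    rwa [Quotient.out_eq, Quotient.out_eq] at h3
  obtain ⟨R, hR⟩ : ∃ R : V → V → Prop, ∀ a b, R a b ↔
      (G.Adj a b ∧ ∃ i j : ι, i ≠ j ∧ a ∈ C i ∧ b ∈ C j) := ⟨_, fun _ _ => Iff.rfl⟩
  have hRsub : ∀ i, ∀ v ∈ C i, univ.filter (R v) ⊆ nb G v \ U i := by
    intro i v hv u hu
    obtain ⟨hadj, i', j, hij, hvi, huj⟩ := (hR _ _).1 (mem_filter.1 hu).2
    have : i' = i := hUd _ _ v (hCU _ hvi) (hCU _ hv)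
    subst this
    rw [mem_sdiff, mem_nb]
    exact ⟨hadj, fun hui => hij (hUd _ _ u hui (hCU _ huj))⟩
  obtain ⟨f, hf1, hf2⟩ := haxell C
    (fun i j hij => disjoint_left.2 fun x hi hj => hij (hUd i j x (hCU _ hi) (hCU _ hj))) R
    (by
      intro a b hab'
      obtain ⟨hab, i, j, hij, ha, hb⟩ := (hR _ _).1 hab'
      exact (hR _ _).2 ⟨hab.symm, j, i, hij.symm, hb, ha⟩)
    (by
      intro v
      by_cases hv : ∃ i, v ∈ C i
      · obtain ⟨i, hv⟩ := hv
        exact (card_le_card (hRsub i v hv)).trans (hC i v hv).1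
      · have : univ.filter (R v) = ∅ := by
          rw [filter_eq_empty_iff]
          intro u _ hru
          obtain ⟨-, i, j, -, hvi, -⟩ := (hR _ _).1 hru
          exact hv ⟨i, hvi⟩
        rw [this]; simp)
    (by
      intro i v hv
      have := card_le_card (hRsub i v hv)
      have := (hC i v hv).2.1
      omega) hCne
  have hFU : ∀ i, F i (f i) ⊆ U i := fun i => (hC i _ (hf1 i)).2.2.1
  have hcross : ∀ i j a b, a ∈ F i (f i) → b ∈ F j (f j) → G.Adj a b → i = j := by
    intro i j a b ha hb hab
    by_contra hij
    have h1 : a = f i := by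
      by_contra hne
      have := (hC i _ (hf1 i)).2.2.2.2.1 a ha hne (mem_nb.2 hab)
      exact hij (hUd _ _ b this (hFU j hb))
    have h2 : b = f j := by
      by_contra hne
      have := (hC j _ (hf1 j)).2.2.2.2.1 b hb hne (mem_nb.2 hab.symm)
      exact hij (hUd _ _ a (hFU i ha) this)
    subst h1 h2
    exact hf2 i j hij ((hR _ _).2 ⟨hab, i, j, hij, hf1 i, hf1 j⟩)
  refine ⟨univ.biUnion (fun i => F i (f i)), ?_, ?_, ?_⟩
  · intro Q hQ
    obtain ⟨u, hu, huQ⟩ := (hC _ _ (hf1 (Quotient.mk S ⟨Q, hQ⟩))).2.2.2.1 ⟨Q, hQ⟩ (hout _)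
    exact ⟨u, mem_biUnion.2 ⟨_, mem_univ _, hu⟩, huQ⟩
  · intro a ha
    obtain ⟨i, -, hi⟩ := mem_biUnion.1 ha
    obtain ⟨Q, -, hQ⟩ := hU2 i a (hFU i hi)
    exact ⟨Q.1, Q.2, hQ⟩
  · intro a ha b hb hab
    obtain ⟨i, -, hi⟩ := mem_biUnion.1 ha
    obtain ⟨j, -, hj⟩ := mem_biUnion.1 hb
    obtain rfl := hcross i j a b hi hj hab
    refine ⟨F i (f i), (hC i _ (hf1 i)).2.2.2.2.2, hi, hj, ?_⟩
    intro c hc hac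
    obtain ⟨l, -, hl⟩ := mem_biUnion.1 hc
    obtain rfl := hcross i l a c hi hl hac
    exact hl

/-- Two meeting cliques share at least `k - 2` vertices. -/
lemma meet_card {V : Type*} [Fintype V] (G : SimpleGraph V) (k : ℕ)
    (hdeg : ∀ v, (nb G v).card ≤ k + 1) {A B : Finset V} (hA : G.IsNClique k A)
    (hB : G.IsNClique k B) (h : ¬ Disjoint A B) : k ≤ (A ∩ B).card + 2 := by
  obtain ⟨x, hxA, hxB⟩ := not_disjoint_iff.1 h
  have h1 : (A ∪ B).erase x ⊆ nb G x := by
    intro u hu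
    rw [mem_erase, mem_union] at hu
    rw [mem_nb]
    rcases hu.2 with h | h
    · exact hA.1 hxA h (Ne.symm hu.1)
    · exact hB.1 hxB h (Ne.symm hu.1)
  have h2 := card_le_card h1
  rw [card_erase_of_mem (mem_union_left _ hxA)] at h2
  have h3 := card_union_add_card_inter A B
  have := hA.2
  have := hB.2
  have := hdeg x
  omega

/-- Hajnal's lemma for a pairwise meeting family of cliques. -/
lemma hajnal {V : Type*} [Fintype V] (G : SimpleGraph V) (k : ℕ) (hk : 4 ≤ k)
    (hdeg : ∀ v, (nb G v).card ≤ k + 1) (hω : G.CliqueFree (k + 1))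
    (S : Finset (Finset V)) (hS : S.Nonempty) (hcl : ∀ A ∈ S, G.IsNClique k A)
    (hmeet : ∀ A ∈ S, ∀ B ∈ S, ¬ Disjoint A B) :
    ∃ I : Finset V, (∀ v, v ∈ I ↔ ∀ A ∈ S, v ∈ A) ∧ I.Nonempty ∧ 
      2 * k ≤ I.card + (S.biUnion id).card := by
  have star : ∀ (S : Finset (Finset V)) (I : Finset V), S.Nonempty → (∀ A ∈ S, G.IsNClique k A) →
      (∀ v, v ∈ I ↔ ∀ A ∈ S, v ∈ A) → I.Nonempty → (S.biUnion id).card ≤ k + 2 := by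
    intro S I hS hcl hI hne
    obtain ⟨x, hx⟩ := hne
    have h1 : (S.biUnion id).erase x ⊆ nb G x := by
      intro u hu
      rw [mem_erase, mem_biUnion] at hu
      obtain ⟨hux, A, hA, huA⟩ := hu
      rw [mem_nb]
      exact (hcl A hA).1 ((hI x).1 hx A hA) huA (Ne.symm hux)
    have h2 := card_le_card h1
    have h3 := pred_card_le_card_erase (s := S.biUnion id) (a := x)
    have := hdeg x
    omega
  induction hS using Finset.Nonempty.cons_induction with
  | singleton Q =>
    have := (hcl Q (by simp)).2
    refine ⟨Q, by simp, ?_, ?_⟩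
    · rw [← card_pos]; omega
    · simp; omega
  | cons Q S hQS hS ih =>
    have hQ := hcl Q (by simp)
    have hcl' : ∀ A ∈ S, G.IsNClique k A := fun A hA => hcl A (by simp [hA])
    obtain ⟨I, hI, hIne, hIU⟩ := ih hcl'
      (fun A hA B hB => hmeet A (by simp [hA]) B (by simp [hB]))
    have hU2 := star S I hS hcl' hI hIne
    set U := S.biUnion id with hU
    obtain ⟨Q₁, hQ₁⟩ := hS
    have hIsubU : I ⊆ U := by
      intro x hx
      exact mem_biUnion.2 ⟨Q₁, hQ₁, (hI x).1 hx Q₁ hQ₁⟩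
    -- the clique
    have hclq : G.IsClique (↑(I ∪ (Q ∩ U)) : Set V) := by
      have hIadj : ∀ x ∈ I, ∀ y ∈ U, x ≠ y → G.Adj x y := by
        intro x hx y hy hxy
        obtain ⟨A, hA, hyA⟩ := mem_biUnion.1 hy
        exact (hcl' A hA).1 ((hI x).1 hx A hA) hyA hxy
      intro x hx y hy hxy
      rw [mem_coe, mem_union, mem_inter] at hx hy
      rcases hx with hx | hx
      · rcases hy with hy | hy
        · exact hIadj x hx y (hIsubU hy) hxy
        · exact hIadj x hx y hy.2 hxy
      · rcases hy with hy | hy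
        · exact (hIadj y hy x hx.2 hxy.symm).symm
        · exact hQ.1 hx.1 hy.1 hxy
    have hsz : (I ∪ (Q ∩ U)).card ≤ k := by
      by_contra hgt
      obtain ⟨t, ht, htc⟩ := exists_subset_card_eq (s := I ∪ (Q ∩ U)) (n := k + 1) (by omega)
      exact hω t ⟨hclq.subset (by exact_mod_cast ht), htc⟩
    have e1 := card_union_add_card_inter I (Q ∩ U)
    have e2 : I ∩ (Q ∩ U) = I ∩ Q := by
      ext x; simp only [mem_inter]
      constructor
      · tauto
      · rintro ⟨a, b⟩; exact ⟨a, b, hIsubU a⟩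
    rw [e2] at e1
    have e3 := card_union_add_card_inter Q U
    have e4 := hQ.2
    have hne : (I ∩ Q).Nonempty := by
      by_contra hem
      rw [not_nonempty_iff_eq_empty] at hem
      rw [hem, card_empty] at e1
      have hall : ∀ A ∈ S, Q ∩ A = Q ∩ U := by
        intro A hA
        apply eq_of_subset_of_card_le
        · exact inter_subset_inter_left (subset_biUnion_of_mem id hA)
        · have := meet_card G k hdeg hQ (hcl' A hA) (hmeet Q (by simp) A (by simp [hA]))
          omega
      obtain ⟨x, hxQ, hx1⟩ := not_disjoint_iff.1 (hmeet Q (by simp) Q₁ (by simp [hQ₁]))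
      have hxU : x ∈ Q ∩ U := by rw [← hall Q₁ hQ₁]; exact mem_inter.2 ⟨hxQ, hx1⟩
      have : x ∈ I ∩ Q := by
        rw [mem_inter, hI]
        refine ⟨fun A hA => ?_, hxQ⟩
        rw [← hall A hA] at hxU
        exact (mem_inter.1 hxU).2
      rw [hem] at this
      simp at this
    refine ⟨I ∩ Q, ?_, hne, ?_⟩
    · intro v
      simp only [mem_inter, hI, mem_cons, forall_eq_or_imp]
      tauto
    · have : (cons Q S hQS).biUnion id = Q ∪ U := by
        ext x; simp [hU]
      rw [this]
      omega

/-- Gadget for a pairwise meeting cluster. -/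
lemma core_gadget {V : Type*} [Fintype V] (G : SimpleGraph V) (k : ℕ) (hk : 4 ≤ k)
    (hdeg : ∀ v, (nb G v).card ≤ k + 1) (hω : G.CliqueFree (k + 1)) (Ok : Finset V → Prop)
    (hOk : ∀ v, Ok {v}) (Q : Kq G k)
    (hmeet : ∀ A B : Kq G k, Same Q A → Same Q B → ¬ Disjoint A.1 B.1) : Gadget G k Ok Q := by
  let S : Finset (Finset V) := univ.filter (fun A => ∃ h : G.IsNClique k A, Same Q ⟨A, h⟩)
  have hmemS : ∀ A, A ∈ S ↔ ∃ h : G.IsNClique k A, Same Q ⟨A, h⟩ := by intro A; simp [S]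
  have hQS : Q.1 ∈ S := (hmemS _).2 ⟨Q.2, same_refl _⟩
  obtain ⟨I, hI, hIne, hIU⟩ := hajnal G k hk hdeg hω S ⟨_, hQS⟩
    (fun A hA => ((hmemS A).1 hA).1)
    (by
      intro A hA B hB
      obtain ⟨h1, h2⟩ := (hmemS A).1 hA
      obtain ⟨h3, h4⟩ := (hmemS B).1 hB
      exact hmeet _ _ h2 h4)
  have hIQ : ∀ v ∈ I, ∀ Q' : Kq G k, Same Q Q' → v ∈ Q'.1 := fun v hv Q' h =>
    (hI v).1 hv _ ((hmemS _).2 ⟨Q'.2, h⟩)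
  have hQU : Q.1 ⊆ S.biUnion id := subset_biUnion_of_mem id hQS
  refine ⟨S.biUnion id, I, fun v => {v}, ?_, ?_, hIne, ?_, ?_⟩
  · intro Q' h
    exact subset_biUnion_of_mem id ((hmemS _).2 ⟨Q'.2, h⟩)
  · intro u hu
    obtain ⟨A, hA, huA⟩ := mem_biUnion.1 hu
    obtain ⟨h1, h2⟩ := (hmemS A).1 hA
    exact ⟨_, h2, huA⟩
  · intro v hv
    exact hQU (hIQ v hv Q (same_refl _))
  · intro v hv
    have hvU := hQU (hIQ v hv Q (same_refl _))
    have hsub : (S.biUnion id).erase v ⊆ nb G v := by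
      intro u hu
      rw [mem_erase, mem_biUnion] at hu
      obtain ⟨hux, A, hA, huA⟩ := hu
      rw [mem_nb]
      exact ((hmemS A).1 hA).1.1 ((hI v).1 hv A hA) huA (Ne.symm hux)
    have h1 : nb G v \ S.biUnion id ⊆ nb G v \ (S.biUnion id).erase v :=
      sdiff_subset_sdiff (le_refl _) (erase_subset _ _)
    have h2 := card_le_card h1
    rw [card_sdiff_of_subset hsub, card_erase_of_mem hvU] at h2
    have h3 := card_le_card hQU
    have h6 := card_le_card hsub
    rw [card_erase_of_mem hvU] at h6
    have h4 := Q.2.2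
    have h5 := hdeg v
    refine ⟨by omega, by omega, by simpa using hvU, ?_, ?_, hOk v⟩
    · intro Q' h
      exact ⟨v, by simp, hIQ v hv Q' h⟩
    · intro u hu hne
      exact absurd (mem_singleton.1 hu) hne

/-- If meeting is transitive within the cluster then the cluster is pairwise meeting. -/
lemma pairwise_of_trans {V : Type*} {G : SimpleGraph V} {k : ℕ} (hk : 0 < k) (Q : Kq G k)
    (h : ∀ A B C : Kq G k, Same Q A → ¬ Disjoint A.1 B.1 → ¬ Disjoint B.1 C.1 →
      ¬ Disjoint A.1 C.1) :
    ∀ A B : Kq G k, Same Q A → Same Q B → ¬ Disjoint A.1 B.1 := by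
  intro A B hA hB
  have hAB : Same A B := Relation.EqvGen.trans _ _ _ (Relation.EqvGen.symm _ _ hA) hB
  refine (same_closed (fun X => ¬ Disjoint A.1 X.1) (fun X Y hXY hX => h A X Y hA hX hXY) hAB).1 ?_
  rw [disjoint_self_iff_empty, ← ne_eq, ← nonempty_iff_ne_empty, ← card_pos, A.2.2]
  exact hk

/-- An independent set hitting all cliques of size `k ≥ 5`, in a graph of maximum degree
at most `k + 1` without cliques of size `k + 1`. -/
theorem hit_indep {V : Type*} [Fintype V] (G : SimpleGraph V) (k : ℕ) (hk : 5 ≤ k)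
    (hdeg : ∀ v, (nb G v).card ≤ k + 1) (hω : G.CliqueFree (k + 1)) :
    ∃ J : Finset V, (∀ Q, G.IsNClique k Q → ∃ u ∈ J, u ∈ Q) ∧ ∀ a ∈ J, ∀ b ∈ J, ¬ G.Adj a b := by
  obtain ⟨J, h1, -, h3⟩ := assemble G k (fun F => ∀ a ∈ F, ∀ b ∈ F, ¬ G.Adj a b) (by
    intro Q
    apply core_gadget G k (by omega) hdeg hω _ (by simp)
    apply pairwise_of_trans (by omega)
    intro A B C _ hAB hBC hAC
    have e1 := meet_card G k hdeg A.2 B.2 hAB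
    have e2 := meet_card G k hdeg B.2 C.2 hBC
    have e3 : Disjoint (A.1 ∩ B.1) (B.1 ∩ C.1) :=
      hAC.mono inter_subset_left inter_subset_right
    have e4 := card_le_card (union_subset (inter_subset_right (s₁ := A.1) (s₂ := B.1))
      (inter_subset_left (s₁ := B.1) (s₂ := C.1)))
    rw [card_union_of_disjoint e3, B.2.2] at e4
    omega)
  refine ⟨J, h1, fun a ha b hb hab => ?_⟩
  obtain ⟨F, hF, haF, hbF, -⟩ := h3 a ha b hb hab
  exact hF a haF b hbF hab

/-- Saturated pairs. -/
lemma sat {V : Type*} [Fintype V] (G : SimpleGraph V) (hdeg : ∀ v, (nb G v).card ≤ 5)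
    {X Y Z : Finset V} (hX : X.card = 2) (hY : Y.card = 2) (hZ : Z.card = 2)
    (hXY : Disjoint X Y) (hXZ : Disjoint X Z) (hYZ : Disjoint Y Z)
    (h1 : G.IsNClique 4 (X ∪ Y)) (h2 : G.IsNClique 4 (Y ∪ Z)) {v : V} (hv : v ∈ Y) :
    nb G v = (X ∪ Y ∪ Z).erase v := by
  symm
  apply eq_of_subset_of_card_le
  · intro u hu
    rw [mem_erase, mem_union] at hu
    rw [mem_nb]
    rcases hu.2 with h | h
    · exact h1.1 (mem_coe.2 (mem_union_right _ hv)) (mem_coe.2 h) (Ne.symm hu.1)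
    · exact h2.1 (mem_coe.2 (mem_union_left _ hv)) (mem_coe.2 (mem_union_right _ h)) (Ne.symm hu.1)
  · rw [card_erase_of_mem (by simp [hv]), card_union_of_disjoint
      (disjoint_union_left.2 ⟨hXZ, hYZ⟩), card_union_of_disjoint hXY, hX, hY, hZ]
    exact hdeg v

/-- A chain of `n` pairs, consecutive pairs spanning cliques from `D`. -/
structure Chain {V : Type*} (D : Finset V → Prop) (n : ℕ) (P : ℕ → Finset V) : Prop where
  card : ∀ i, i < n → (P i).card = 2
  disj : ∀ i j, i < n → j < n → i ≠ j → Disjoint (P i) (P j)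
  mem : ∀ i, i + 1 < n → D (P i ∪ P (i + 1))

lemma Chain.rev {V : Type*} {D : Finset V → Prop} {n : ℕ} {P : ℕ → Finset V}
    (h : Chain D n P) : Chain D n (fun i => P (n - 1 - i)) where
  card i hi := h.card _ (by omega)
  disj i j hi hj hij := h.disj _ _ (by omega) (by omega) (by omega)
  mem i hi := by
    have h1 := h.mem (n - 1 - (i + 1)) (by omega)
    have h2 : n - 1 - (i + 1) + 1 = n - 1 - i := by omega
    rw [h2] at h1
    rwa [union_comm]

section chain
variable {V : Type*} [Fintype V] {G : SimpleGraph V} {D : Finset V → Prop} {n : ℕ}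
  {P : ℕ → Finset V}

lemma Chain.index_unique (h : Chain D n P) {x : V} {i j : ℕ} (hi : i < n) (hj : j < n)
    (hxi : x ∈ P i) (hxj : x ∈ P j) : i = j := by
  by_contra hij
  exact disjoint_left.1 (h.disj i j hi hj hij) hxi hxj

lemma Chain.sat_mid (hdeg : ∀ v, (nb G v).card ≤ 5) (hD : ∀ A, D A → G.IsNClique 4 A)
    (h : Chain D n P) {i : ℕ} (hi : i + 2 < n) {v : V} (hv : v ∈ P (i + 1)) :
    nb G v = (P i ∪ P (i + 1) ∪ P (i + 2)).erase v :=
  sat G hdeg (h.card _ (by omega)) (h.card _ (by omega)) (h.card _ (by omega))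
    (h.disj _ _ (by omega) (by omega) (by omega)) (h.disj _ _ (by omega) (by omega) (by omega))
    (h.disj _ _ (by omega) (by omega) (by omega)) (hD _ (h.mem i (by omega)))
    (hD _ (h.mem (i + 1) (by omega))) hv

lemma Chain.adj_mid (hdeg : ∀ v, (nb G v).card ≤ 5) (hD : ∀ A, D A → G.IsNClique 4 A)
    (h : Chain D n P) {i j : ℕ} (hi0 : 0 < i) (hi : i + 1 < n) (hj : j < n) {v u : V}
    (hv : v ∈ P i) (hu : u ∈ P j) (huv : G.Adj v u) : i ≤ j + 1 ∧ j ≤ i + 1 := by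
  obtain ⟨i, rfl⟩ : ∃ l, i = l + 1 := ⟨i - 1, by omega⟩
  have h1 := h.sat_mid hdeg hD (by omega) hv
  have h2 : u ∈ nb G v := mem_nb.2 huv
  rw [h1, mem_erase, mem_union, mem_union] at h2
  rcases h2.2 with (h3 | h3) | h3
  · have := h.index_unique hj (by omega) hu h3; omega
  · have := h.index_unique hj (by omega) hu h3; omega
  · have := h.index_unique hj (by omega) hu h3; omega

lemma Chain.far (hdeg : ∀ v, (nb G v).card ≤ 5) (hD : ∀ A, D A → G.IsNClique 4 A)
    (h : Chain D n P) {i j : ℕ} (hij : i + 2 ≤ j) (hj : j < n) {v u : V}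
    (hv : v ∈ P i) (hu : u ∈ P j) (huv : G.Adj v u) : i = 0 ∧ j + 1 = n := by
  by_contra hcon
  by_cases hi : 0 < i
  · have := h.adj_mid hdeg hD hi (by omega) hj hv hu huv
    omega
  · have := h.adj_mid hdeg hD (i := j) (j := i) (by omega) (by omega) (by omega) hu hv huv.symm
    omega

lemma pair_subset {A B : Finset V} (hB : B.card = 2) (h : 2 ≤ (A ∩ B).card) : B ⊆ A := by
  have : A ∩ B = B := eq_of_subset_of_card_le inter_subset_right (by omega)
  exact inter_eq_right.1 this

/-- Cliques meeting the last pair. -/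
lemma Chain.end_clique (hdeg : ∀ v, (nb G v).card ≤ 5) (hD : ∀ A, D A → G.IsNClique 4 A)
    (hD2 : ∀ A B, D A → G.IsNClique 4 B → ¬ Disjoint A B → D B)
    (h : Chain D n P) (hn : 4 ≤ n) (hmax : ∀ P', ¬ Chain D (n + 1) P') {Q : Finset V}
    (hQ : G.IsNClique 4 Q) {z : V} (hz : z ∈ Q) (hz' : z ∈ P (n - 1)) :
    Q = P (n - 2) ∪ P (n - 1) ∨ Q = P (n - 1) ∪ P 0 := by
  have hT : D (P (n - 2) ∪ P (n - 1)) := by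
    have := h.mem (n - 2) (by omega)
    rwa [show n - 2 + 1 = n - 1 by omega] at this
  have hcn : ∀ i j, i < n → j < n → i ≠ j → (P i ∪ P j).card = 4 := by
    intro i j hi hj hij
    rw [card_union_of_disjoint (h.disj i j hi hj hij), h.card i hi, h.card j hj]
  have hadjQ : ∀ x ∈ Q, ∀ y ∈ Q, x ≠ y → G.Adj x y := fun x hx y hy hxy => hQ.1 hx hy hxy
  by_cases hmeet : ∃ v ∈ Q, v ∈ P (n - 2)
  · left
    obtain ⟨v, hvQ, hv⟩ := hmeet
    apply eq_of_subset_of_card_le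
    · intro y hy
      by_cases hyv : y = v
      · subst hyv; exact mem_union_left _ hv
      have h1 := h.sat_mid hdeg hD (i := n - 3) (v := v) (by omega)
        (by rwa [show n - 3 + 1 = n - 2 by omega])
      have h2 : y ∈ nb G v := mem_nb.2 (hadjQ v hvQ y hy (Ne.symm hyv))
      rw [h1, mem_erase, mem_union, mem_union, show n - 3 + 1 = n - 2 by omega,
        show n - 3 + 2 = n - 1 by omega] at h2
      rcases h2.2 with (h3 | h3) | h3
      · exfalso
        have hyz : y ≠ z := by
          rintro rfl
          have := h.index_unique (by omega) (by omega) h3 hz'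
          omega
        have := h.far hdeg hD (i := n - 3) (j := n - 1) (by omega) (by omega) h3 hz'
          (hadjQ y hy z hz hyz)
        omega
      · exact mem_union_left _ h3
      · exact mem_union_right _ h3
    · rw [hcn _ _ (by omega) (by omega) (by omega), hQ.2]
  · right
    push Not at hmeet
    have hc1 := meet_card G 4 hdeg hQ (hD _ hT)
      (not_disjoint_iff.2 ⟨z, hz, mem_union_right _ hz'⟩)
    have hc2 : Q ∩ (P (n - 2) ∪ P (n - 1)) = Q ∩ P (n - 1) := by
      ext x
      simp only [mem_inter, mem_union]
      constructor
      · rintro ⟨a, b | b⟩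
        · exact absurd b (hmeet x a)
        · exact ⟨a, b⟩
      · tauto
    rw [hc2] at hc1
    have hsub : P (n - 1) ⊆ Q := pair_subset (h.card _ (by omega)) (by omega)
    have hmid : ∀ r ∈ Q, ∀ i, 0 < i → i + 1 < n → r ∉ P i := by
      intro r hr i hi0 hi hri
      have hrz : r ≠ z := by
        rintro rfl
        have := h.index_unique (by omega) (by omega) hri hz'
        omega
      have h1 := h.adj_mid hdeg hD hi0 hi (j := n - 1) (by omega) hri hz' (hadjQ r hr z hz hrz)
      have : i = n - 2 := by omega
      subst this
      exact hmeet r hr hri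
    by_cases hR : ∃ r ∈ Q, r ∈ P 0
    · obtain ⟨r, hr, hr0⟩ := hR
      have hc1 := meet_card G 4 hdeg hQ (hD _ (h.mem 0 (by omega)))
        (not_disjoint_iff.2 ⟨r, hr, mem_union_left _ hr0⟩)
      have hc2 : Q ∩ (P 0 ∪ P (0 + 1)) = Q ∩ P 0 := by
        ext x
        simp only [mem_inter, mem_union]
        constructor
        · rintro ⟨a, b | b⟩
          · exact ⟨a, b⟩
          · exact absurd b (hmid x a _ (by omega) (by omega))
        · tauto
      rw [hc2] at hc1
      have hsub0 : P 0 ⊆ Q := pair_subset (h.card _ (by omega)) (by omega)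
      symm
      apply eq_of_subset_of_card_le (union_subset hsub hsub0)
      rw [hcn _ _ (by omega) (by omega) (by omega), hQ.2]
    · exfalso
      push Not at hR
      have hRc : (Q \ P (n - 1)).card = 2 := by
        rw [card_sdiff_of_subset hsub, hQ.2, h.card _ (by omega)]
      have hRd : ∀ i, i < n → Disjoint (P i) (Q \ P (n - 1)) := by
        intro i hi
        rw [disjoint_left]
        intro x hx hx'
        rw [mem_sdiff] at hx'
        rcases Nat.eq_zero_or_pos i with h0 | h0
        · subst h0; exact hR x hx'.1 hx
        · by_cases hi' : i + 1 < n
          · exact hmid x hx'.1 i h0 hi' hx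
          · have : i = n - 1 := by omega
            subst this
            exact hx'.2 hx
      apply hmax (Function.update P n (Q \ P (n - 1)))
      have hup : ∀ i, i < n → Function.update P n (Q \ P (n - 1)) i = P i := by
        intro i hi
        rw [Function.update_of_ne (by omega)]
      have hupn : Function.update P n (Q \ P (n - 1)) n = Q \ P (n - 1) := Function.update_self ..
      refine ⟨?_, ?_, ?_⟩
      · intro i hi
        rcases Nat.lt_succ_iff_lt_or_eq.1 hi with h1 | h1
        · rw [hup i h1]; exact h.card i h1
        · rw [h1, hupn, hRc]
      · intro i j hi hj hij
        rcases Nat.lt_succ_iff_lt_or_eq.1 hi with h1 | h1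
        · rw [hup i h1]
          rcases Nat.lt_succ_iff_lt_or_eq.1 hj with h2 | h2
          · rw [hup j h2]; exact h.disj i j h1 h2 hij
          · rw [h2, hupn]; exact hRd i h1
        · rcases Nat.lt_succ_iff_lt_or_eq.1 hj with h2 | h2
          · rw [hup j h2, h1, hupn]; exact (hRd j h2).symm
          · omega
      · intro i hi
        rcases Nat.lt_succ_iff_lt_or_eq.1 hi with h1 | h1
        · rw [hup i (by omega), hup (i + 1) h1]; exact h.mem i h1
        · rw [hup i (by omega), h1, hupn, show i = n - 1 by omega, union_sdiff_of_subset hsub]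
          exact hD2 _ _ hT hQ (not_disjoint_iff.2 ⟨z, mem_union_right _ hz', hz⟩)

/-- All cliques meeting a maximal chain. -/
lemma Chain.all_cliques (hdeg : ∀ v, (nb G v).card ≤ 5) (hD : ∀ A, D A → G.IsNClique 4 A)
    (hD2 : ∀ A B, D A → G.IsNClique 4 B → ¬ Disjoint A B → D B)
    (h : Chain D n P) (hn : 4 ≤ n) (hmax : ∀ P', ¬ Chain D (n + 1) P') {Q : Finset V}
    (hQ : G.IsNClique 4 Q) {z : V} {i : ℕ} (hi : i < n) (hz : z ∈ Q) (hz' : z ∈ P i) :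
    (∃ j, j + 1 < n ∧ Q = P j ∪ P (j + 1)) ∨ Q = P (n - 1) ∪ P 0 := by
  rcases Nat.eq_zero_or_pos i with h0 | h0
  · subst h0
    rcases h.rev.end_clique hdeg hD hD2 hn hmax hQ hz (by simpa using hz') with h1 | h1
    · left
      refine ⟨0, by omega, ?_⟩
      rw [h1, union_comm]
      congr 2 <;> omega
    · right
      rw [h1, union_comm]
      congr 2; omega
  by_cases hi1 : i + 1 < n
  · left
    obtain ⟨i, rfl⟩ : ∃ l, i = l + 1 := ⟨i - 1, by omega⟩
    have hsub : ∀ y ∈ Q, y ∈ P i ∨ y ∈ P (i + 1) ∨ y ∈ P (i + 2) := by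
      intro y hy
      by_cases hyz : y = z
      · subst hyz; tauto
      have h2 : y ∈ nb G z := mem_nb.2 (hQ.1 hz hy (Ne.symm hyz))
      rw [h.sat_mid hdeg hD (by omega) hz', mem_erase, mem_union, mem_union] at h2
      tauto
    have hcn : ∀ j, j + 1 < n → (P j ∪ P (j + 1)).card ≤ Q.card := by
      intro j hj
      rw [card_union_of_disjoint (h.disj j (j + 1) (by omega) (by omega) (by omega)),
        h.card j (by omega), h.card _ hj, hQ.2]
    by_cases hlow : ∃ y ∈ Q, y ∈ P i
    · obtain ⟨y, hy, hyi⟩ := hlow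
      refine ⟨i, by omega, eq_of_subset_of_card_le ?_ (hcn i (by omega))⟩
      · intro w hw
        rw [mem_union]
        rcases hsub w hw with h1 | h1 | h1
        · exact Or.inl h1
        · exact Or.inr h1
        · exfalso
          have hyw : y ≠ w := by
            rintro rfl
            have := h.index_unique (by omega) (by omega) hyi h1
            omega
          have := h.far hdeg hD (i := i) (j := i + 2) (by omega) (by omega) hyi h1
            (hQ.1 hy hw hyw)
          omega
    · refine ⟨i + 1, by omega, eq_of_subset_of_card_le ?_ (hcn (i + 1) (by omega))⟩
      intro w hw
      rw [mem_union]
      rcases hsub w hw with h1 | h1 | h1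
      · exact absurd ⟨w, hw, h1⟩ hlow
      · exact Or.inl h1
      · exact Or.inr h1
  · have : i = n - 1 := by omega
    subst this
    rcases h.end_clique hdeg hD hD2 hn hmax hQ hz hz' with h1 | h1
    · left
      refine ⟨n - 2, by omega, ?_⟩
      rw [h1, show n - 2 + 1 = n - 1 by omega]
    · exact Or.inr h1

/-- labels along a closed chain -/
lemma Chain.labels (h : Chain D n P) (hn : 4 ≤ n) (L : V → V → Prop)
    (huniq : ∀ i, i < n → ∀ v ∈ P i, ∀ x y, L x v → L y v → x = y)
    (hL : ∀ x, (univ.filter (L x)).card ≤ 6) :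
    ∃ i u v, i + 1 < n ∧ u ∈ P i ∧ v ∈ P (i + 1) ∧ ∀ x, ¬ (L x u ∧ L x v) := by
  by_contra hcon
  push Not at hcon
  have hne : ∀ i, i < n → (P i).Nonempty := fun i hi => by
    rw [← card_pos, h.card i hi]; omega
  obtain ⟨a, ha⟩ := hne 0 (by omega)
  obtain ⟨b, hb⟩ := hne 1 (by omega)
  obtain ⟨x, hxa, hxb⟩ := hcon 0 a b (by omega) ha hb
  have hall : ∀ i, i < n → ∀ v ∈ P i, L x v := by
    intro i
    induction i with
    | zero =>
      intro _ v hv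
      obtain ⟨y, hyv, hyb⟩ := hcon 0 v b (by omega) hv hb
      rwa [huniq 1 (by omega) b hb x y hxb hyb]
    | succ i ih =>
      intro hi v hv
      obtain ⟨w, hw⟩ := hne i (by omega)
      obtain ⟨y, hyw, hyv⟩ := hcon i w v hi hw hv
      rwa [huniq i (by omega) w hw x y (ih (by omega) w hw) hyw]
  have hsub : (range n).biUnion P ⊆ univ.filter (L x) := by
    intro v hv
    obtain ⟨i, hi, hvi⟩ := mem_biUnion.1 hv
    exact mem_filter.2 ⟨mem_univ _, hall i (mem_range.1 hi) v hvi⟩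
  have h1 := (card_le_card hsub).trans (hL x)
  rw [card_biUnion (fun i hi j hj hij => h.disj i j (mem_range.1 hi) (mem_range.1 hj) hij),
    sum_congr rfl (fun i hi => h.card i (mem_range.1 hi)), sum_const, card_range] at h1
  simp at h1
  omega
end chain

section chain2
variable {V : Type*} [Fintype V] {G : SimpleGraph V} {D : Finset V → Prop} {n : ℕ}
  {P : ℕ → Finset V}

lemma Chain.image_adj (hdeg : ∀ v, (nb G v).card ≤ 5) (hD : ∀ A, D A → G.IsNClique 4 A)
    (h : Chain D n P) {K : Finset ℕ} {s : ℕ → V} (hK : ∀ i ∈ K, i < n)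
    (hs : ∀ i ∈ K, s i ∈ P i) {a b : V} (ha : a ∈ K.image s) (hb : b ∈ K.image s)
    (hab : G.Adj a b) :
    (∃ i, i ∈ K ∧ i + 1 ∈ K ∧ ((a = s i ∧ b = s (i + 1)) ∨ (a = s (i + 1) ∧ b = s i))) ∨
      (0 ∈ K ∧ n - 1 ∈ K) := by
  obtain ⟨i, hi, rfl⟩ := mem_image.1 ha
  obtain ⟨j, hj, rfl⟩ := mem_image.1 hb
  have hin := hK i hi
  have hjn := hK j hj
  have hij : i ≠ j := by rintro rfl; exact G.loopless.irrefl _ hab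
  by_cases h1 : j = i + 1
  · subst h1; exact Or.inl ⟨i, hi, hj, Or.inl ⟨rfl, rfl⟩⟩
  by_cases h2 : i = j + 1
  · subst h2; exact Or.inl ⟨j, hj, hi, Or.inr ⟨rfl, rfl⟩⟩
  right
  by_cases h3 : i < j
  · obtain ⟨e1, e2⟩ := h.far hdeg hD (i := i) (j := j) (by omega) hjn (hs i hi) (hs j hj) hab
    subst e1
    rw [show n - 1 = j by omega]; exact ⟨hi, hj⟩
  · obtain ⟨e1, e2⟩ := h.far hdeg hD (i := j) (j := i) (by omega) hin (hs j hj) (hs i hi) hab.symm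
    subst e1
    rw [show n - 1 = i by omega]; exact ⟨hj, hi⟩

/-- the admissible pieces -/
def OkL (G : SimpleGraph V) (L : V → V → Prop) (F : Finset V) : Prop :=
  ∀ a ∈ F, ∀ b ∈ F, G.Adj a b → (∀ x, ¬ (L x a ∧ L x b)) ∧ ∀ c ∈ F, ¬ (G.Adj a c ∧ G.Adj b c)

lemma chain_gadget (hdeg : ∀ v, (nb G v).card ≤ 5) (L : V → V → Prop)
    (hLu : ∀ v, 5 ≤ (nb G v).card → ∀ x y, L x v → L y v → x = y)
    (hL : ∀ x, (univ.filter (L x)).card ≤ 6) (Q : Kq G 4)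
    (h : Chain (fun A => ∃ hA : G.IsNClique 4 A, Same Q ⟨A, hA⟩) n P) (hn : 4 ≤ n)
    (hmax : ∀ P', ¬ Chain (fun A => ∃ hA : G.IsNClique 4 A, Same Q ⟨A, hA⟩) (n + 1) P') :
    Gadget G 4 (OkL G L) Q := by
  have hD : ∀ A, (∃ hA : G.IsNClique 4 A, Same Q ⟨A, hA⟩) → G.IsNClique 4 A :=
    fun A hA => hA.1
  have hD2 : ∀ A B, (∃ hA : G.IsNClique 4 A, Same Q ⟨A, hA⟩) → G.IsNClique 4 B →
      ¬ Disjoint A B → ∃ hA : G.IsNClique 4 B, Same Q ⟨B, hA⟩ := by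
    rintro A B ⟨hA, hA'⟩ hB hAB
    exact ⟨hB, same_of_meet hA' hAB⟩
  have hne : ∀ i, i < n → ∃ v, v ∈ P i := fun i hi => by
    have : (P i).Nonempty := by rw [← card_pos, h.card i hi]; omega
    exact this
  have hVne : ∃ a : ℕ → V, ∀ i, i < n → a i ∈ P i := by
    obtain ⟨w, -⟩ := hne 0 (by omega)
    refine ⟨fun i => if hi : i < n then (hne i hi).choose else w, fun i hi => ?_⟩
    simp only [hi, dif_pos]
    exact (hne i hi).choose_spec
  obtain ⟨a, ha⟩ := hVne
  set U := (range n).biUnion P with hU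
  have hmU : ∀ x, x ∈ U ↔ ∃ i, i < n ∧ x ∈ P i := by intro x; simp [hU]
  have hPU : ∀ i, i < n → P i ⊆ U := fun i hi x hx => (hmU x).2 ⟨i, hi, hx⟩
  have hclass : ∀ Q' : Kq G 4, Same Q Q' →
      (∃ j, j + 1 < n ∧ Q'.1 = P j ∪ P (j + 1)) ∨ Q'.1 = P (n - 1) ∪ P 0 := by
    intro Q' hQ'
    obtain ⟨h0, h0'⟩ := h.mem 0 (by omega)
    have hs : Same ⟨_, h0⟩ Q' := Relation.EqvGen.trans _ _ _ (Relation.EqvGen.symm _ _ h0') hQ'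
    have := (same_closed (fun X => ∃ i z, i < n ∧ z ∈ X.1 ∧ z ∈ P i) (by
      rintro A B hAB ⟨i, z, hi, hzA, hz⟩
      obtain ⟨w, hwA, hwB⟩ := not_disjoint_iff.1 hAB
      rcases h.all_cliques hdeg hD hD2 hn hmax A.2 hi hzA hz with ⟨j, hj, hA⟩ | hA
      · rw [hA, mem_union] at hwA
        rcases hwA with hw | hw
        · exact ⟨j, w, by omega, hwB, hw⟩
        · exact ⟨j + 1, w, by omega, hwB, hw⟩
      · rw [hA, mem_union] at hwA
        rcases hwA with hw | hw
        · exact ⟨n - 1, w, by omega, hwB, hw⟩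
        · exact ⟨0, w, by omega, hwB, hw⟩) hs).1
      ⟨0, a 0, by omega, mem_union_left _ (ha 0 (by omega)), ha 0 (by omega)⟩
    obtain ⟨i, z, hi, hz, hz'⟩ := this
    exact h.all_cliques hdeg hD hD2 hn hmax Q'.2 hi hz hz'
  have g1 : ∀ Q' : Kq G 4, Same Q Q' → Q'.1 ⊆ U := by
    intro Q' hQ'
    rcases hclass Q' hQ' with ⟨j, hj, e⟩ | e
    · rw [e]; exact union_subset (hPU j (by omega)) (hPU _ hj)
    · rw [e]; exact union_subset (hPU _ (by omega)) (hPU _ (by omega))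
  have g2 : ∀ u ∈ U, ∃ Q' : Kq G 4, Same Q Q' ∧ u ∈ Q'.1 := by
    intro u hu
    obtain ⟨i, hi, hui⟩ := (hmU u).1 hu
    by_cases hi1 : i + 1 < n
    · obtain ⟨e1, e2⟩ := h.mem i hi1
      exact ⟨_, e2, mem_union_left _ hui⟩
    · obtain ⟨e1, e2⟩ := h.mem (i - 1) (by omega)
      refine ⟨_, e2, mem_union_right _ ?_⟩
      rwa [show i - 1 + 1 = i by omega]
  have hmidU : ∀ i, 0 < i → i + 1 < n → ∀ v ∈ P i, nb G v ⊆ U := by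
    intro i hi0 hi v hv
    obtain ⟨i, rfl⟩ : ∃ l, i = l + 1 := ⟨i - 1, by omega⟩
    rw [h.sat_mid hdeg hD (by omega) hv]
    exact (erase_subset _ _).trans (union_subset (union_subset (hPU _ (by omega))
      (hPU _ (by omega))) (hPU _ (by omega)))
  -- the hitting property
  have hhit : ∀ (K : Finset ℕ) (s : ℕ → V), (∀ i ∈ K, s i ∈ P i) →
      (∀ i, i + 1 < n → i ∈ K ∨ i + 1 ∈ K) →
      (G.IsNClique 4 (P (n - 1) ∪ P 0) → n - 1 ∈ K ∨ 0 ∈ K) →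
      ∀ Q' : Kq G 4, Same Q Q' → ∃ u ∈ K.image s, u ∈ Q'.1 := by
    intro K s hs hK1 hK2 Q' hQ'
    rcases hclass Q' hQ' with ⟨j, hj, e⟩ | e
    · rw [e]
      rcases hK1 j hj with hk | hk
      · exact ⟨s j, mem_image_of_mem _ hk, mem_union_left _ (hs j hk)⟩
      · exact ⟨s (j + 1), mem_image_of_mem _ hk, mem_union_right _ (hs _ hk)⟩
    · have := Q'.2
      rw [e] at this ⊢
      rcases hK2 this with hk | hk
      · exact ⟨s (n - 1), mem_image_of_mem _ hk, mem_union_left _ (hs _ hk)⟩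
      · exact ⟨s 0, mem_image_of_mem _ hk, mem_union_right _ (hs _ hk)⟩
  have himU : ∀ (K : Finset ℕ) (s : ℕ → V), (∀ i ∈ K, i < n) → (∀ i ∈ K, s i ∈ P i) →
      K.image s ⊆ U := by
    intro K s hK hs x hx
    obtain ⟨i, hi, rfl⟩ := mem_image.1 hx
    exact hPU i (hK i hi) (hs i hi)
  have hok : ∀ (K : Finset ℕ) (s : ℕ → V), (∀ i ∈ K, i < n) → (∀ i ∈ K, s i ∈ P i) →
      (∀ i ∈ K, i + 1 ∉ K) → ¬ (0 ∈ K ∧ n - 1 ∈ K) → OkL G L (K.image s) := by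
    intro K s hK hs h1 h2 x hx y hy hxy
    exfalso
    rcases h.image_adj hdeg hD hK hs hx hy hxy with ⟨i, hi, hi', -⟩ | h3
    · exact h1 i hi hi'
    · exact h2 h3
  rcases Nat.even_or_odd n with hev | hodd
  · -- even number of pairs
    have hn2 : n % 2 = 0 := Nat.even_iff.1 hev
    let F : V → Finset V := fun v =>
      if v ∈ P 0 then ((range n).filter (fun i => i % 2 = 0)).image (Function.update a 0 v)
      else ((range n).filter (fun i => i % 2 = 1)).image (Function.update a (n - 1) v)
    have hCc : (P 0 ∪ P (n - 1)).card = 4 := by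
      rw [card_union_of_disjoint (h.disj _ _ (by omega) (by omega) (by omega)),
        h.card _ (by omega), h.card _ (by omega)]
    have hout : ∀ j l, j < n → l < n → j ≠ l → G.IsNClique 4 (P j ∪ P l) → ∀ v ∈ P j,
        (nb G v \ U).card ≤ 2 := by
      intro j l hj hl hjl hcl v hv
      have hsub : (P j ∪ P l).erase v ⊆ nb G v := by
        intro u hu
        rw [mem_erase] at hu
        rw [mem_nb]
        exact hcl.1 (mem_coe.2 (mem_union_left _ hv)) (mem_coe.2 hu.2) (Ne.symm hu.1)
      have h1 : nb G v \ U ⊆ nb G v \ (P j ∪ P l).erase v :=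
        sdiff_subset_sdiff (le_refl _)
          ((erase_subset _ _).trans (union_subset (hPU j hj) (hPU l hl)))
      have h2 := card_le_card h1
      rw [card_sdiff_of_subset hsub, card_erase_of_mem (mem_union_left _ hv), hcl.2] at h2
      have := hdeg v
      omega
    refine ⟨U, P 0 ∪ P (n - 1), F, g1, g2, ⟨a 0, mem_union_left _ (ha 0 (by omega))⟩,
      union_subset (hPU _ (by omega)) (hPU _ (by omega)), ?_⟩
    intro v hv
    have hd : (nb G v \ U).card ≤ 2 := by
      rcases mem_union.1 hv with hv | hv
      · exact hout 0 1 (by omega) (by omega) (by omega) (h.mem 0 (by omega)).1 v hv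
      · refine hout (n - 1) (n - 2) (by omega) (by omega) (by omega) ?_ v hv
        have := (h.mem (n - 2) (by omega)).1
        rw [show n - 2 + 1 = n - 1 by omega] at this
        rwa [union_comm]
    refine ⟨hd, by omega, ?_⟩
    by_cases hv0 : v ∈ P 0
    · have hF : F v = ((range n).filter (fun i => i % 2 = 0)).image (Function.update a 0 v) :=
        if_pos hv0
      rw [hF]
      have hs : ∀ i ∈ (range n).filter (fun i => i % 2 = 0), Function.update a 0 v i ∈ P i := by
        intro i hi
        rw [mem_filter, mem_range] at hi
        by_cases h0 : i = 0
        · subst h0; simpa using hv0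
        · rw [Function.update_of_ne h0]; exact ha i hi.1
      have hK : ∀ i ∈ (range n).filter (fun i => i % 2 = 0), i < n := by
        intro i hi; simp at hi; exact hi.1
      refine ⟨himU _ _ hK hs, hhit _ _ hs ?_ ?_, ?_, hok _ _ hK hs ?_ ?_⟩
      · intro i hi; simp only [mem_filter, mem_range]; omega
      · intro _; right; simp only [mem_filter, mem_range]; exact ⟨by omega, trivial⟩
      · intro u hu huv
        obtain ⟨i, hi, rfl⟩ := mem_image.1 hu
        have hi' := hi
        rw [mem_filter, mem_range] at hi'
        by_cases h0 : i = 0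
        · subst h0; simp at huv
        · exact hmidU i (by omega) (by omega) _ (hs i hi)
      · intro i hi; simp only [mem_filter, mem_range] at hi ⊢; omega
      · simp only [mem_filter, mem_range]; omega
    · have hF : F v = ((range n).filter (fun i => i % 2 = 1)).image
          (Function.update a (n - 1) v) := if_neg hv0
      have hvn : v ∈ P (n - 1) := (mem_union.1 hv).resolve_left hv0
      rw [hF]
      have hs : ∀ i ∈ (range n).filter (fun i => i % 2 = 1),
          Function.update a (n - 1) v i ∈ P i := by
        intro i hi
        rw [mem_filter, mem_range] at hi
        by_cases h0 : i = n - 1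
        · subst h0; simpa using hvn
        · rw [Function.update_of_ne h0]; exact ha i hi.1
      have hK : ∀ i ∈ (range n).filter (fun i => i % 2 = 1), i < n := by
        intro i hi; simp at hi; exact hi.1
      refine ⟨himU _ _ hK hs, hhit _ _ hs ?_ ?_, ?_, hok _ _ hK hs ?_ ?_⟩
      · intro i hi; simp only [mem_filter, mem_range]; omega
      · intro _; simp only [mem_filter, mem_range]; omega
      · intro u hu huv
        obtain ⟨i, hi, rfl⟩ := mem_image.1 hu
        have hi' := hi
        rw [mem_filter, mem_range] at hi'
        by_cases h0 : i = n - 1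
        · subst h0; simp at huv
        · exact hmidU i (by omega) (by omega) _ (hs i hi)
      · intro i hi; simp only [mem_filter, mem_range] at hi ⊢; omega
      · simp only [mem_filter, mem_range]; omega
  · have hn2 : n % 2 = 1 := Nat.odd_iff.1 hodd
    -- it suffices to give one set all of whose vertices have no outside neighbours
    suffices hsuff : ∃ (K : Finset ℕ) (s : ℕ → V), (∀ i ∈ K, i < n) ∧ (∀ i ∈ K, s i ∈ P i) ∧
        (∀ i, i + 1 < n → i ∈ K ∨ i + 1 ∈ K) ∧
        (G.IsNClique 4 (P (n - 1) ∪ P 0) → n - 1 ∈ K ∨ 0 ∈ K) ∧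
        (∀ i ∈ K, nb G (s i) ⊆ U) ∧ OkL G L (K.image s) by
      obtain ⟨K, s, hK, hs, h1, h2, h3, h4⟩ := hsuff
      refine ⟨U, P 1, fun _ => K.image s, g1, g2, ⟨a 1, ha 1 (by omega)⟩, hPU 1 (by omega), ?_⟩
      intro v hv
      have : nb G v \ U = ∅ := sdiff_eq_empty_iff_subset.2 (hmidU 1 (by omega) (by omega) v hv)
      rw [this, h.card 1 (by omega)]
      refine ⟨by simp, by simp, himU K s hK hs, hhit K s hs h1 h2, ?_, h4⟩
      intro u hu _
      obtain ⟨i, hi, rfl⟩ := mem_image.1 hu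
      exact h3 i hi
    by_cases hcl : G.IsNClique 4 (P (n - 1) ∪ P 0)
    · -- odd cycle
      have hsat0 : ∀ v ∈ P 0, nb G v = (P (n - 1) ∪ P 0 ∪ P 1).erase v := fun v hv =>
        sat G hdeg (h.card _ (by omega)) (h.card _ (by omega)) (h.card _ (by omega))
          (h.disj _ _ (by omega) (by omega) (by omega))
          (h.disj _ _ (by omega) (by omega) (by omega))
          (h.disj _ _ (by omega) (by omega) (by omega)) hcl (h.mem 0 (by omega)).1 hv
      have hsatn : ∀ v ∈ P (n - 1), nb G v = (P (n - 2) ∪ P (n - 1) ∪ P 0).erase v := fun v hv =>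
        sat G hdeg (h.card _ (by omega)) (h.card _ (by omega)) (h.card _ (by omega))
          (h.disj _ _ (by omega) (by omega) (by omega))
          (h.disj _ _ (by omega) (by omega) (by omega))
          (h.disj _ _ (by omega) (by omega) (by omega))
          (by
            have := (h.mem (n - 2) (by omega)).1
            rwa [show n - 2 + 1 = n - 1 by omega] at this) hcl hv
      have hcard3 : ∀ i j l, i < n → j < n → l < n → i ≠ j → i ≠ l → j ≠ l → ∀ v ∈ P j,
          ((P i ∪ P j ∪ P l).erase v).card = 5 := by
        intro i j l hi hj hl hij hil hjl v hv
        rw [card_erase_of_mem (by simp [hv]), card_union_of_disjoint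
          (disjoint_union_left.2 ⟨h.disj _ _ hi hl hil, h.disj _ _ hj hl hjl⟩),
          card_union_of_disjoint (h.disj _ _ hi hj hij), h.card i hi, h.card j hj, h.card l hl]
      have hdeg5 : ∀ i, i < n → ∀ v ∈ P i, 5 ≤ (nb G v).card := by
        intro i hi v hv
        by_cases h0 : i = 0
        · subst h0
          rw [hsat0 v hv, hcard3 _ _ _ (by omega) (by omega) (by omega) (by omega) (by omega)
            (by omega) v hv]
        by_cases h1 : i = n - 1
        · subst h1
          rw [hsatn v hv, hcard3 _ _ _ (by omega) (by omega) (by omega) (by omega) (by omega)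
            (by omega) v hv]
        · obtain ⟨i, rfl⟩ : ∃ l, i = l + 1 := ⟨i - 1, by omega⟩
          rw [h.sat_mid hdeg hD (by omega) hv, hcard3 _ _ _ (by omega) (by omega) (by omega)
            (by omega) (by omega) (by omega) v hv]
      have hallU : ∀ i, i < n → ∀ v ∈ P i, nb G v ⊆ U := by
        intro i hi v hv
        by_cases h0 : i = 0
        · subst h0
          rw [hsat0 v hv]
          exact (erase_subset _ _).trans (union_subset (union_subset (hPU _ (by omega))
            (hPU _ (by omega))) (hPU _ (by omega)))
        by_cases h1 : i = n - 1
        · subst h1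
          rw [hsatn v hv]
          exact (erase_subset _ _).trans (union_subset (union_subset (hPU _ (by omega))
            (hPU _ (by omega))) (hPU _ (by omega)))
        · exact hmidU i (by omega) (by omega) v hv
      obtain ⟨r, u, v, hr, hu, hv, huv⟩ := h.labels hn L
        (fun i hi v hv => hLu v (hdeg5 i hi v hv)) hL
      let K := (range n).filter (fun j => (j ≤ r ∧ j % 2 = r % 2) ∨ (r + 1 ≤ j ∧ j % 2 = (r + 1) % 2))
      have hKm : ∀ j, j ∈ K ↔ j < n ∧ ((j ≤ r ∧ j % 2 = r % 2) ∨
          (r + 1 ≤ j ∧ j % 2 = (r + 1) % 2)) := by intro j; simp [K]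
      let s := Function.update (Function.update a r u) (r + 1) v
      have hsr : s r = u := by simp [s]
      have hsr1 : s (r + 1) = v := by simp [s]
      have hK : ∀ i ∈ K, i < n := fun i hi => ((hKm i).1 hi).1
      have hs : ∀ i ∈ K, s i ∈ P i := by
        intro i hi
        by_cases h0 : i = r
        · rw [h0, hsr]; exact hu
        by_cases h1 : i = r + 1
        · rw [h1, hsr1]; exact hv
        · simp only [s]
          rw [Function.update_of_ne h1, Function.update_of_ne h0]
          exact ha i (hK i hi)
      refine ⟨K, s, hK, hs, ?_, ?_, fun i hi => hallU i (hK i hi) _ (hs i hi), ?_⟩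
      · intro i hi; rw [hKm, hKm]; omega
      · intro _; rw [hKm, hKm]; omega
      · have honly : ∀ x ∈ K.image s, ∀ y ∈ K.image s, G.Adj x y →
            (x = u ∧ y = v) ∨ (x = v ∧ y = u) := by
          intro x hx y hy hxy
          rcases h.image_adj hdeg hD hK hs hx hy hxy with ⟨i, hi, hi', e⟩ | ⟨e1, e2⟩
          · rw [hKm] at hi hi'
            have : i = r := by omega
            subst this
            rwa [hsr, hsr1] at e
          · rw [hKm] at e1 e2
            omega
        intro x hx y hy hxy
        constructor
        · intro w hw
          rcases honly x hx y hy hxy with ⟨rfl, rfl⟩ | ⟨rfl, rfl⟩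
          · exact huv w hw
          · exact huv w hw.symm
        · rintro c hc ⟨hxc, hyc⟩
          have e1 := honly x hx y hy hxy
          have e2 := honly x hx c hc hxc
          have e3 := honly y hy c hc hyc
          have n1 := hxy.ne
          have n2 := hxc.ne
          have n3 := hyc.ne
          grind
    · have hK : ∀ i ∈ (range n).filter (fun i => i % 2 = 1), i < n := by
        intro i hi; simp at hi; exact hi.1
      have hs : ∀ i ∈ (range n).filter (fun i => i % 2 = 1), a i ∈ P i :=
        fun i hi => ha i (hK i hi)
      refine ⟨(range n).filter (fun i => i % 2 = 1), a, hK, hs, ?_, fun hc => absurd hc hcl, ?_,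
        hok _ _ hK hs ?_ ?_⟩
      · intro i hi; simp only [mem_filter, mem_range]; omega
      · intro i hi
        have hi' := hi
        simp only [mem_filter, mem_range] at hi'
        exact hmidU i (by omega) (by omega) _ (hs i hi)
      · intro i hi; simp only [mem_filter, mem_range] at hi ⊢; omega
      · simp only [mem_filter, mem_range]; omega

/-- Every cluster of `K_4`s has a gadget. -/
lemma four_gadget (hdeg : ∀ v, (nb G v).card ≤ 5) (hω : G.CliqueFree 5) (L : V → V → Prop)
    (hLu : ∀ v, 5 ≤ (nb G v).card → ∀ x y, L x v → L y v → x = y)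
    (hL : ∀ x, (univ.filter (L x)).card ≤ 6) (Q : Kq G 4) : Gadget G 4 (OkL G L) Q := by
  by_cases htr : ∀ A B C : Kq G 4, Same Q A → ¬ Disjoint A.1 B.1 → ¬ Disjoint B.1 C.1 →
      ¬ Disjoint A.1 C.1
  · apply core_gadget G 4 le_rfl hdeg hω _ _ Q (pairwise_of_trans (by omega) Q htr)
    intro v a ha b hb hab
    rw [mem_singleton] at ha hb
    subst ha hb
    exact absurd rfl hab.ne
  · push Not at htr
    obtain ⟨A, B, C, hA, hAB, hBC, hAC⟩ := htr
    have hB := same_of_meet hA hAB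
    have hC := same_of_meet hB hBC
    have e1 := meet_card G 4 hdeg A.2 B.2 hAB
    have e2 := meet_card G 4 hdeg B.2 C.2 hBC
    have e3 : Disjoint (A.1 ∩ B.1) (B.1 ∩ C.1) :=
      hAC.mono inter_subset_left inter_subset_right
    have hsubB := union_subset (inter_subset_right (s₁ := A.1) (s₂ := B.1))
      (inter_subset_left (s₁ := B.1) (s₂ := C.1))
    have e4 := card_le_card hsubB
    rw [card_union_of_disjoint e3, B.2.2] at e4
    have hBeq : A.1 ∩ B.1 ∪ B.1 ∩ C.1 = B.1 := by
      apply eq_of_subset_of_card_le hsubB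
      rw [card_union_of_disjoint e3, B.2.2]; omega
    have c0 := card_sdiff_add_card_inter A.1 B.1
    have c3 := card_sdiff_add_card_inter C.1 B.1
    rw [A.2.2] at c0
    rw [C.2.2, inter_comm] at c3
    let D : Finset V → Prop := fun A => ∃ hA : G.IsNClique 4 A, Same Q ⟨A, hA⟩
    let P : ℕ → Finset V := fun i =>
      if i = 0 then A.1 \ B.1 else if i = 1 then A.1 ∩ B.1 else if i = 2 then B.1 ∩ C.1
      else C.1 \ B.1
    have hchain : Chain D 4 P := by
      refine ⟨?_, ?_, ?_⟩
      · intro i hi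
        interval_cases i <;> simp only [P] <;> norm_num <;> omega
      · have hsym : ∀ i j, i < 4 → j < 4 → i < j → Disjoint (P i) (P j) := by
          intro i j hi hj hij
          rw [disjoint_left] at hAC ⊢
          intro x
          have := @hAC x
          interval_cases j <;> interval_cases i <;> simp [P] <;> tauto
        intro i j hi hj hij
        rcases lt_or_gt_of_ne hij with h | h
        · exact hsym i j hi hj h
        · exact (hsym j i hj hi h).symm
      · intro i hi
        have hi' : i < 3 := by omega
        interval_cases i
        · have : P 0 ∪ P (0 + 1) = A.1 := by simp [P, sdiff_union_inter]
          rw [this]; exact ⟨A.2, hA⟩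
        · have : P 1 ∪ P (1 + 1) = B.1 := by simpa [P] using hBeq
          rw [this]; exact ⟨B.2, hB⟩
        · have : P 2 ∪ P (2 + 1) = C.1 := by
            simp only [P]; norm_num
            rw [inter_comm, union_comm, sdiff_union_inter]
          rw [this]; exact ⟨C.2, hC⟩
    have hbound : ∀ n, (∃ P, Chain D n P) → n ≤ Fintype.card V := by
      rintro n ⟨P, h⟩
      have h1 := card_le_univ ((range n).biUnion P)
      rw [card_biUnion (fun i hi j hj hij => h.disj i j (mem_range.1 hi) (mem_range.1 hj) hij),
        sum_congr rfl (fun i hi => h.card i (mem_range.1 hi)), sum_const, card_range] at h1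
      simp at h1
      omega
    have hex := Nat.findGreatest_spec (P := fun n => ∃ P, Chain D n P) (hbound 4 ⟨P, hchain⟩)
      ⟨P, hchain⟩
    have hge := Nat.le_findGreatest (P := fun n => ∃ P, Chain D n P) (hbound 4 ⟨P, hchain⟩)
      ⟨P, hchain⟩
    obtain ⟨P', hP'⟩ := hex
    refine chain_gadget hdeg L hLu hL Q hP' hge ?_
    intro P'' hP''
    have := Nat.le_findGreatest (P := fun n => ∃ P, Chain D n P) (hbound _ ⟨P'', hP''⟩)
      ⟨P'', hP''⟩
    omega
end chain2

section main
variable {V : Type*} [Fintype V]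

/-- delete the vertices in `I` (keeping them as isolated vertices) -/
def del (H : SimpleGraph V) (I : Finset V) : SimpleGraph V where
  Adj a b := H.Adj a b ∧ a ∉ I ∧ b ∉ I
  symm := ⟨fun _ _ h => ⟨h.1.symm, h.2.2, h.2.1⟩⟩
  loopless := ⟨fun _ h => H.loopless.irrefl _ h.1⟩

/-- An independent set hitting all `k`-cliques, and dominating. -/
lemma hit_max (H : SimpleGraph V) (k : ℕ) (hk : 5 ≤ k)
    (hdeg : ∀ v, (nb H v).card ≤ k + 1) (hω : H.CliqueFree (k + 1)) :
    ∃ I : Finset V, (∀ a ∈ I, ∀ b ∈ I, ¬ H.Adj a b) ∧ (∀ v, (nb (del H I) v).card ≤ k) ∧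
      (del H I).CliqueFree k := by
  let p : Finset V → Prop := fun J => (∀ Q, H.IsNClique k Q → ∃ u ∈ J, u ∈ Q) ∧
    ∀ a ∈ J, ∀ b ∈ J, ¬ H.Adj a b
  obtain ⟨I, hI, hmaxI⟩ := exists_max_image (univ.filter p) card (by
    obtain ⟨J, hJ⟩ := hit_indep H k hk hdeg hω
    exact ⟨J, mem_filter.2 ⟨mem_univ _, hJ⟩⟩)
  obtain ⟨-, hhit, hind⟩ := mem_filter.1 hI
  refine ⟨I, hind, ?_, ?_⟩
  · intro v
    by_cases hv : v ∈ I
    · have : nb (del H I) v = ∅ := by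
        ext u; simp [mem_nb, del, hv]
      rw [this]; simp
    · obtain ⟨w, hw, hwv⟩ : ∃ w ∈ I, H.Adj v w := by
        by_contra hcon
        push Not at hcon
        have := hmaxI (insert v I) (by
          refine mem_filter.2 ⟨mem_univ _, ?_, ?_⟩
          · intro Q hQ
            obtain ⟨u, hu, huQ⟩ := hhit Q hQ
            exact ⟨u, mem_insert_of_mem hu, huQ⟩
          · intro a ha b hb hab
            rcases mem_insert.1 ha with ha | ha
            · rcases mem_insert.1 hb with hb | hb
              · exact hab.ne (ha.trans hb.symm)
              · exact hcon b hb (ha ▸ hab)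
            · rcases mem_insert.1 hb with hb | hb
              · exact hcon a ha (hb ▸ hab.symm)
              · exact hind a ha b hb hab)
        rw [card_insert_of_notMem hv] at this
        omega
      have hsub : nb (del H I) v ⊆ (nb H v).erase w := by
        intro u hu
        rw [mem_nb] at hu
        rw [mem_erase, mem_nb]
        exact ⟨fun e => hu.2.2 (e ▸ hw), hu.1⟩
      have h1 := card_le_card hsub
      rw [card_erase_of_mem (mem_nb.2 hwv)] at h1
      have := hdeg v
      omega
  · intro Q hQ
    have hQ' : H.IsNClique k Q := ⟨fun a ha b hb hab => (hQ.1 ha hb hab).1, hQ.2⟩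
    obtain ⟨u, hu, huQ⟩ := hhit Q hQ'
    obtain ⟨w, hw, hwu⟩ := exists_mem_ne (s := Q) (by rw [hQ.2]; omega) u
    exact (hQ.1 huQ hw hwu.symm).2.1 hu

/-- the partition statement -/
def Part (p q : ℕ) : Prop :=
  ∀ H : SimpleGraph V, (∀ v, (nb H v).card + 1 ≤ p + q) → H.CliqueFree (p + q - 1) →
    ∃ B : Finset V, (∀ Q, H.IsNClique p Q → ∃ u ∈ Q, u ∈ B) ∧
      ∀ Q, H.IsNClique q Q → ∃ u ∈ Q, u ∉ B

lemma part_one (p : ℕ) : Part (V := V) p 1 := by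
  intro H _ hω
  refine ⟨∅, ?_, ?_⟩
  · intro Q hQ
    exact absurd hQ (by simpa using hω Q)
  · intro Q hQ
    have : Q.Nonempty := by rw [← card_pos, hQ.2]; omega
    obtain ⟨u, hu⟩ := this
    exact ⟨u, hu, by simp⟩

lemma part_step (p q : ℕ) (hp : 2 ≤ p) (hq : 1 ≤ q) (hpq : 6 ≤ p + q) (h : Part (V := V) p q) :
    Part (V := V) p (q + 1) := by
  intro H hdeg hω
  obtain ⟨I, hind, hd, hc⟩ := hit_max H (p + q - 1) (by omega)
    (fun v => by have := hdeg v; omega)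
    (by rwa [show p + q - 1 + 1 = p + (q + 1) - 1 by omega])
  obtain ⟨B, hB1, hB2⟩ := h (del H I) (fun v => by have := hd v; omega) hc
  refine ⟨B ∪ I, ?_, ?_⟩
  · intro Q hQ
    by_contra hcon
    push Not at hcon
    have hQ' : (del H I).IsNClique p Q := by
      refine ⟨fun a ha b hb hab => ⟨hQ.1 ha hb hab, ?_, ?_⟩, hQ.2⟩
      · exact fun h => hcon a ha (mem_union_right _ h)
      · exact fun h => hcon b hb (mem_union_right _ h)
    obtain ⟨u, hu, huB⟩ := hB1 Q hQ'
    exact hcon u hu (mem_union_left _ huB)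
  · intro Q hQ
    by_contra hcon
    push Not at hcon
    have hone : (Q ∩ I).card ≤ 1 := by
      rw [card_le_one]
      intro a ha b hb
      by_contra hab
      rw [mem_inter] at ha hb
      exact hind a ha.2 b hb.2 (hQ.1 ha.1 hb.1 hab)
    have hc := card_sdiff_add_card_inter Q I
    rw [hQ.2] at hc
    obtain ⟨t, ht, htc⟩ := exists_subset_card_eq (s := Q \ I) (n := q) (by omega)
    have htQ : ∀ x ∈ t, x ∈ Q ∧ x ∉ I := fun x hx => mem_sdiff.1 (ht hx)
    obtain ⟨u, hu, huB⟩ := hB2 t ⟨fun a ha b hb hab =>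
      ⟨hQ.1 (htQ a ha).1 (htQ b hb).1 hab, (htQ a ha).2, (htQ b hb).2⟩, htc⟩
    rcases mem_union.1 (hcon u (htQ u hu).1) with h | h
    · exact huB h
    · exact (htQ u hu).2 h

lemma part_four_three : Part (V := V) 4 3 := by
  intro H hdeg hω
  have hdeg' : ∀ v, (nb H v).card ≤ 6 := fun v => by have := hdeg v; omega
  obtain ⟨I, hind, hd, hc⟩ := hit_max H 5 le_rfl hdeg' hω
  obtain ⟨L, hLdef⟩ : ∃ L : V → V → Prop, ∀ x v, L x v ↔ x ∈ I ∧ H.Adj x v :=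
    ⟨_, fun _ _ => Iff.rfl⟩
  have hLu : ∀ v, 5 ≤ (nb (del H I) v).card → ∀ x y, L x v → L y v → x = y := by
    intro v hv x y hx hy
    by_contra hxy
    rw [hLdef] at hx hy
    have hsub : insert x (insert y (nb (del H I) v)) ⊆ nb H v := by
      intro u hu
      rw [mem_nb]
      rcases mem_insert.1 hu with rfl | hu
      · exact hx.2.symm
      rcases mem_insert.1 hu with rfl | hu
      · exact hy.2.symm
      · exact (mem_nb.1 hu).1
    have h1 : y ∉ nb (del H I) v := fun h => (mem_nb.1 h).2.2 hy.1
    have h2 : x ∉ insert y (nb (del H I) v) := by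
      rw [mem_insert, not_or]
      exact ⟨hxy, fun h => (mem_nb.1 h).2.2 hx.1⟩
    have h3 := card_le_card hsub
    rw [card_insert_of_notMem h2, card_insert_of_notMem h1] at h3
    have := hdeg' v
    omega
  have hL : ∀ x, (univ.filter (L x)).card ≤ 6 := by
    intro x
    refine (card_le_card ?_).trans (hdeg' x)
    intro u hu
    exact mem_nb.2 ((hLdef _ _).1 (mem_filter.1 hu).2).2
  obtain ⟨J, hJ1, hJ2, hJ3⟩ := assemble (del H I) 4 (OkL (del H I) L)
    (four_gadget hd hc L hLu hL)
  have hJI : ∀ a ∈ J, a ∉ I := by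
    intro a ha
    obtain ⟨Q, hQ, haQ⟩ := hJ2 a ha
    obtain ⟨w, hw, hwu⟩ := exists_mem_ne (s := Q) (by rw [hQ.2]; omega) a
    exact (hQ.1 haQ hw hwu.symm).2.1
  refine ⟨J ∪ I, ?_, ?_⟩
  · intro Q hQ
    by_contra hcon
    push Not at hcon
    have hQ' : (del H I).IsNClique 4 Q := by
      refine ⟨fun a ha b hb hab => ⟨hQ.1 ha hb hab, ?_, ?_⟩, hQ.2⟩
      · exact fun h => hcon a ha (mem_union_right _ h)
      · exact fun h => hcon b hb (mem_union_right _ h)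
    obtain ⟨u, hu, huB⟩ := hJ1 Q hQ'
    exact hcon u huB (mem_union_left _ hu)
  · intro Q hQ
    by_contra hcon
    push Not at hcon
    -- triangles with at most one vertex in `I`
    have key1 : ∀ a b c, a ∈ J → b ∈ J → c ∈ I → H.Adj a b → H.Adj c a → H.Adj c b → False := by
      intro a b c ha hb hc hab hca hcb
      obtain ⟨F, hF, haF, hbF, -⟩ := hJ3 a ha b hb ⟨hab, hJI a ha, hJI b hb⟩
      exact (hF a haF b hbF ⟨hab, hJI a ha, hJI b hb⟩).1 c
        ⟨(hLdef _ _).2 ⟨hc, hca⟩, (hLdef _ _).2 ⟨hc, hcb⟩⟩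
    have key2 : ∀ a b c, a ∈ J → b ∈ J → c ∈ J → H.Adj a b → H.Adj a c → H.Adj b c → False := by
      intro a b c ha hb hc hab hac hbc
      have gab : (del H I).Adj a b := ⟨hab, hJI a ha, hJI b hb⟩
      have gac : (del H I).Adj a c := ⟨hac, hJI a ha, hJI c hc⟩
      have gbc : (del H I).Adj b c := ⟨hbc, hJI b hb, hJI c hc⟩
      obtain ⟨F, hF, haF, hbF, hcF⟩ := hJ3 a ha b hb gab
      exact (hF a haF b hbF gab).2 c (hcF c hc gac) ⟨gac, gbc⟩
    obtain ⟨a, b, c, hab, hac, hbc, rfl⟩ := SimpleGraph.is3Clique_iff.1 hQ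
    have ha := mem_union.1 (hcon a (by simp))
    have hb := mem_union.1 (hcon b (by simp))
    have hc := mem_union.1 (hcon c (by simp))
    rcases ha with ha | ha
    · rcases hb with hb | hb
      · rcases hc with hc | hc
        · exact key2 a b c ha hb hc hab hac hbc
        · exact key1 a b c ha hb hc hab hac.symm hbc.symm
      · rcases hc with hc | hc
        · exact key1 a c b ha hc hb hac hab.symm hbc
        · exact hind b hb c hc hbc
    · rcases hb with hb | hb
      · rcases hc with hc | hc
        · exact key1 b c a hb hc ha hbc hab hac
        · exact hind a ha c hc hac
      · exact hind a ha b hb hab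

lemma part_all (p q : ℕ) (hp : 4 ≤ p) (hq : 2 ≤ q) (hpq : 7 ≤ p + q) : Part (V := V) p q := by
  by_cases h5 : 5 ≤ p
  · have : ∀ m, Part (V := V) p (m + 1) := by
      intro m
      induction m with
      | zero => exact part_one p
      | succ m ih => exact part_step p (m + 1) (by omega) (by omega) (by omega) ih
    have h := this (q - 1)
    rwa [show q - 1 + 1 = q by omega] at h
  · obtain rfl : p = 4 := by omega
    have : ∀ m, Part (V := V) 4 (m + 3) := by
      intro m
      induction m with
      | zero => exact part_four_three
      | succ m ih => exact part_step 4 (m + 3) (by omega) (by omega) (by omega) ih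
    have h := this (q - 3)
    rwa [show q - 3 + 3 = q by omega] at h
end main

end KK

/-- Let `H` be a finite simple graph with `Δ(H) ≥ 6` and `ω(H) ≤ Δ(H) − 1`, and let
`p ≥ 4`, `q ≥ 2` be integers with `p + q = Δ(H) + 1`. Then `V(H)` can be partitioned
into two sets `V₁, V₂` such that `H[V₁]` is `K_p`-free and `H[V₂]` is `K_q`-free. -/
theorem statement1 {V : Type*} [Fintype V] (H : SimpleGraph V) [DecidableRel H.Adj]
    (hΔ : 6 ≤ H.maxDegree) (hω : H.cliqueNum ≤ H.maxDegree - 1)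
    (p q : ℕ) (hp : 4 ≤ p) (hq : 2 ≤ q) (hpq : p + q = H.maxDegree + 1) :
    ∃ V₁ V₂ : Set V, V₁ ∪ V₂ = Set.univ ∧ Disjoint V₁ V₂ ∧
      H.CliqueFreeOn V₁ p ∧ H.CliqueFreeOn V₂ q := by
  have hdeg : ∀ v, (KK.nb H v).card + 1 ≤ p + q := by
    intro v
    have h1 := H.degree_le_maxDegree v
    have h2 : KK.nb H v = H.neighborFinset v := by
      ext u
      rw [KK.mem_nb, SimpleGraph.mem_neighborFinset]
    rw [h2, SimpleGraph.card_neighborFinset_eq_degree]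
    omega
  have hcf : H.CliqueFree (p + q - 1) := by
    intro Q hQ
    have h1 := hQ.1.card_le_cliqueNum
    rw [hQ.2] at h1
    omega
  obtain ⟨B, hB1, hB2⟩ := KK.part_all p q hp hq (by omega) H hdeg hcf
  refine ⟨(↑B : Set V)ᶜ, ↑B, by simp, disjoint_compl_left, ?_, ?_⟩
  · intro Q hQB hQ
    obtain ⟨u, hu, huB⟩ := hB1 Q hQ
    exact hQB hu huB
  · intro Q hQB hQ
    obtain ⟨u, hu, huB⟩ := hB2 Q hQ
    exact huB (hQB hu)
end

section
/- Let p ≥ 4 be an integer and let H be a finite simple graph with maximum degree Δ(H) ≥ 6 and clique number ω(H) ≤ Δ(H) − 1. Then χ_{K_p}(H) ≤ ⌈(Δ(H) − 1)/(p − 1)⌉, i.e., V(H) can be partitioned into at most ⌈(Δ(H) − 1)/(p − 1)⌉ sets each of which induces a K_p-free subgraph. -/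
namespace KpFree
open Classical in
/-- neighbourhood as a finset -/
noncomputable def nb {V : Type*} [Fintype V] (G : SimpleGraph V) (v : V) : Finset V :=
  Finset.univ.filter (fun w => G.Adj v w)

/-- delete (isolate) the vertices of `S` -/
def del {V : Type*} (G : SimpleGraph V) (S : Finset V) : SimpleGraph V where
  Adj a b := G.Adj a b ∧ a ∉ S ∧ b ∉ S
  symm := ⟨fun _ _ h => ⟨h.1.symm, h.2.2, h.2.1⟩⟩
  loopless := ⟨fun _ h => h.1.ne rfl⟩

def Clq {V : Type*} (G : SimpleGraph V) (Q : Finset V) : Prop :=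
  ∀ a ∈ Q, ∀ b ∈ Q, a ≠ b → G.Adj a b

section
variable {V : Type*} [Fintype V]

theorem mem_nb {G : SimpleGraph V} {v w : V} : w ∈ nb G v ↔ G.Adj v w := by
  classical
  simp [nb]

open Classical in
theorem haxell_root {ι : Type*} : ∀ (n : ℕ) (G : SimpleGraph V) (J : Finset ι) (P : ι → Finset V)
    (R : Finset V), J.card + G.edgeSet.ncard ≤ n →
    (∀ i ∈ J, Disjoint R (P i)) → (∀ i ∈ J, ∀ j ∈ J, i ≠ j → Disjoint (P i) (P j)) →
    (∃ f : ι → V, (∀ j ∈ J, f j ∈ P j) ∧ ∀ i ∈ J, ∀ j ∈ J, i ≠ j → ¬ G.Adj (f i) (f j)) →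
    (¬ ∃ (f : ι → V) (r : V), r ∈ R ∧ (∀ j ∈ J, f j ∈ P j) ∧
      (∀ i ∈ J, ∀ j ∈ J, i ≠ j → ¬ G.Adj (f i) (f j)) ∧ ∀ j ∈ J, ¬ G.Adj r (f j)) →
    ∃ S ⊆ J, ∃ x y : ι → V, (∀ s ∈ S, y s ∈ P s) ∧
      (∀ s ∈ S, x s ∈ R ∨ ∃ t ∈ S, x s ∈ P t) ∧
      ∀ v, (v ∈ R ∨ ∃ t ∈ S, v ∈ P t) → ∃ s ∈ S, G.Adj (x s) v ∨ G.Adj (y s) v := by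
  intro n
  induction n with
  | zero =>
    intro G J P R hn hRP hPP hf hno
    have hJ : J = ∅ := by
      rw [← Finset.card_eq_zero]; omega
    subst hJ
    refine ⟨∅, by simp, ?_⟩
    obtain ⟨f, hf1, hf2⟩ := hf
    have hR : ∀ v, v ∉ R := by
      intro v hv
      exact hno ⟨f, v, hv, by simp, by simp, by simp⟩
    exact ⟨f, f, by simp, by simp, by intro v hv; simp [hR] at hv⟩
  | succ n ih =>
    intro G J P R hn hRP hPP hf hno
    by_cases hE : ∃ x ∈ R, ∃ j ∈ J, ∃ y ∈ P j, G.Adj x y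
    · obtain ⟨x, hx, j, hj, y, hy, hxy⟩ := hE
      by_cases hdel : ∃ (f : ι → V) (r : V), r ∈ R ∧ (∀ j ∈ J, f j ∈ P j) ∧
          (∀ i ∈ J, ∀ j ∈ J, i ≠ j → ¬ (G.deleteEdges {s(x, y)}).Adj (f i) (f j)) ∧
          ∀ j ∈ J, ¬ (G.deleteEdges {s(x, y)}).Adj r (f j)
      · -- contraction
        obtain ⟨f, r, hr, hfP, hff, hrf⟩ := hdel
        simp only [SimpleGraph.deleteEdges_adj, Set.mem_singleton_iff, not_and, not_not] at hff hrf
        have hxP : ∀ i ∈ J, x ∉ P i := fun i hi h => Finset.disjoint_left.1 (hRP i hi) hx h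
        have hff' : ∀ i ∈ J, ∀ k ∈ J, i ≠ k → ¬ G.Adj (f i) (f k) := by
          intro i hi k hk hik hadj
          have := hff i hi k hk hik hadj
          rw [Sym2.eq_iff] at this
          rcases this with ⟨h1, h2⟩ | ⟨h1, h2⟩
          · exact hxP i hi (h1 ▸ hfP i hi)
          · exact hxP k hk (h2 ▸ hfP k hk)
        have hrx : r = x ∧ f j = y := by
          by_contra hcon
          apply hno
          refine ⟨f, r, hr, hfP, hff', ?_⟩
          intro k hk hadj
          have := hrf k hk hadj
          rw [Sym2.eq_iff] at this
          rcases this with ⟨h1, h2⟩ | ⟨h1, h2⟩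
          · by_cases hkj : k = j
            · subst hkj; exact hcon ⟨h1, h2⟩
            · exact Finset.disjoint_left.1 (hPP k hk j hj hkj) (hfP k hk) (h2 ▸ hy)
          · exact hxP k hk (h2 ▸ hfP k hk)
        obtain ⟨rfl, rfl⟩ := hrx
        have key := ih G (J.erase j) (fun i => (P i).filter (fun v => ¬ G.Adj r v ∧ ¬ G.Adj (f j) v))
          ((R ∪ P j).filter (fun v => ¬ G.Adj r v ∧ ¬ G.Adj (f j) v))
          (by
            have := Finset.card_erase_add_one hj
            omega)
          (by
            intro i hi
            rw [Finset.mem_erase] at hi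
            rw [Finset.disjoint_left]
            intro v hv hv'
            simp only [Finset.mem_filter, Finset.mem_union] at hv hv'
            rcases hv.1 with h | h
            · exact Finset.disjoint_left.1 (hRP i hi.2) h hv'.1
            · exact Finset.disjoint_left.1 (hPP i hi.2 j hj hi.1) hv'.1 h)
          (by
            intro i hi k hk hik
            rw [Finset.mem_erase] at hi hk
            exact Finset.disjoint_filter_filter (hPP i hi.2 k hk.2 hik))
          (by
            refine ⟨f, ?_, ?_⟩
            · intro i hi
              rw [Finset.mem_erase] at hi
              simp only [Finset.mem_filter]
              refine ⟨hfP i hi.2, ?_, hff' j hj i hi.2 (Ne.symm hi.1)⟩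
              intro hadj
              have := hrf i hi.2 hadj
              rw [Sym2.eq_iff] at this
              rcases this with ⟨h1, h2⟩ | ⟨h1, h2⟩
              · exact Finset.disjoint_left.1 (hPP i hi.2 j hj hi.1) (hfP i hi.2) (h2 ▸ hy)
              · exact hxP i hi.2 (h2 ▸ hfP i hi.2)
            · intro i hi k hk hik
              exact hff' i (Finset.mem_of_mem_erase hi) k (Finset.mem_of_mem_erase hk) hik)
          (by
            rintro ⟨g, w, hw, hgP, hgg, hwg⟩
            simp only [Finset.mem_filter, Finset.mem_union, Finset.mem_erase] at hw hgP hgg hwg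
            rcases hw with ⟨hwR | hwP, hw1, hw2⟩
            · apply hno
              refine ⟨Function.update g j (f j), w, hwR, ?_, ?_, ?_⟩
              · intro i hi
                by_cases hij : i = j
                · subst hij; simpa using hy
                · simpa [hij] using (hgP i ⟨hij, hi⟩).1
              · intro i hi k hk hik
                by_cases hij : i = j
                · subst hij
                  have hki : k ≠ i := Ne.symm hik
                  simpa [hki] using (hgP k ⟨hki, hk⟩).2.2
                · by_cases hkj : k = j
                  · subst hkj
                    have := (hgP i ⟨hij, hi⟩).2.2
                    simpa [hij, G.adj_comm] using this
                  · simpa [hij, hkj] using hgg i ⟨hij, hi⟩ k ⟨hkj, hk⟩ hik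
              · intro i hi
                by_cases hij : i = j
                · subst hij
                  simpa [G.adj_comm] using hw2
                · simpa [hij] using hwg i ⟨hij, hi⟩
            · apply hno
              refine ⟨Function.update g j w, r, hr, ?_, ?_, ?_⟩
              · intro i hi
                by_cases hij : i = j
                · subst hij; simpa using hwP
                · simpa [hij] using (hgP i ⟨hij, hi⟩).1
              · intro i hi k hk hik
                by_cases hij : i = j
                · subst hij
                  have hki : k ≠ i := Ne.symm hik
                  simpa [hki] using hwg k ⟨hki, hk⟩
                · by_cases hkj : k = j
                  · subst hkj
                    have := hwg i ⟨hij, hi⟩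
                    simpa [hij, G.adj_comm] using this
                  · simpa [hij, hkj] using hgg i ⟨hij, hi⟩ k ⟨hkj, hk⟩ hik
              · intro i hi
                by_cases hij : i = j
                · subst hij
                  simpa using hw1
                · simpa [hij] using (hgP i ⟨hij, hi⟩).2.1)
        obtain ⟨S, hS, x', y', hy', hx', hdom⟩ := key
        have hjS : j ∉ S := fun h => by simpa using hS h
        have hne : ∀ s ∈ S, s ≠ j := fun s hs h => hjS (h ▸ hs)
        refine ⟨insert j S, ?_, Function.update x' j r, Function.update y' j (f j), ?_, ?_, ?_⟩
        · intro s hs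
          rcases Finset.mem_insert.1 hs with rfl | hs
          · exact hj
          · exact Finset.mem_of_mem_erase (hS hs)
        · intro s hs
          rcases Finset.mem_insert.1 hs with rfl | hs
          · simpa using hy
          · have := hy' s hs
            simp only [Finset.mem_filter] at this
            simpa [hne s hs] using this.1
        · intro s hs
          rcases Finset.mem_insert.1 hs with rfl | hs
          · left; simpa using hr
          · have := hx' s hs
            simp only [Finset.mem_filter, Finset.mem_union] at this
            simp only [Function.update_of_ne (hne s hs)]
            rcases this with ⟨h | h, -⟩ | ⟨t, ht, h, -⟩
            · left; exact h
            · right; exact ⟨j, Finset.mem_insert_self _ _, h⟩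
            · right; exact ⟨t, Finset.mem_insert_of_mem ht, h⟩
        · intro v hv
          by_cases hvd : G.Adj r v ∨ G.Adj (f j) v
          · exact ⟨j, Finset.mem_insert_self _ _, by simpa using hvd⟩
          · push Not at hvd
            have : (v ∈ (R ∪ P j).filter (fun v => ¬ G.Adj r v ∧ ¬ G.Adj (f j) v) ∨
              ∃ t ∈ S, v ∈ (P t).filter (fun v => ¬ G.Adj r v ∧ ¬ G.Adj (f j) v)) := by
              simp only [Finset.mem_filter, Finset.mem_union]
              rcases hv with h | ⟨t, ht, h⟩
              · left; exact ⟨Or.inl h, hvd⟩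
              · rcases Finset.mem_insert.1 ht with rfl | ht
                · left; exact ⟨Or.inr h, hvd⟩
                · right; exact ⟨t, ht, h, hvd⟩
            obtain ⟨s, hs, h⟩ := hdom v this
            exact ⟨s, Finset.mem_insert_of_mem hs, by simpa [hne s hs] using h⟩
      · -- deletion
        obtain ⟨f, hf1, hf2⟩ := hf
        have hlt : (G.deleteEdges {s(x, y)}).edgeSet.ncard < G.edgeSet.ncard := by
          apply Set.ncard_lt_ncard _ (Set.toFinite _)
          rw [SimpleGraph.edgeSet_ssubset_edgeSet]
          refine lt_of_le_of_ne (SimpleGraph.deleteEdges_le _) ?_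
          intro h
          have := h ▸ hxy
          simp at this
        obtain ⟨S, hS, x', y', h1, h2, h3⟩ := ih (G.deleteEdges {s(x, y)}) J P R (by omega) hRP hPP
          ⟨f, hf1, fun i hi k hk hik h => hf2 i hi k hk hik (SimpleGraph.deleteEdges_le _ h)⟩ hdel
        refine ⟨S, hS, x', y', h1, h2, fun v hv => ?_⟩
        obtain ⟨s, hs, h⟩ := h3 v hv
        exact ⟨s, hs, h.imp (fun h => SimpleGraph.deleteEdges_le _ h)
          (fun h => SimpleGraph.deleteEdges_le _ h)⟩
    · push Not at hE
      obtain ⟨f, hf1, hf2⟩ := hf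
      have hR : ∀ v, v ∉ R := by
        intro v hv
        exact hno ⟨f, v, hv, hf1, hf2, fun j hj => hE v hv j hj _ (hf1 j hj)⟩
      exact ⟨∅, by simp, f, f, by simp, by simp, by intro v hv; simp [hR] at hv⟩

open Classical in
theorem haxell {ι : Type*} (G : SimpleGraph V) (J : Finset ι) (P : ι → Finset V)
    (hPP : ∀ i ∈ J, ∀ j ∈ J, i ≠ j → Disjoint (P i) (P j))
    (hne : ∀ i ∈ J, (P i).Nonempty) [Nonempty V]
    (hdeg : ∀ j ∈ J, ∀ v ∈ P j,
      ((nb G v).filter (fun w => ∃ i ∈ J, i ≠ j ∧ w ∈ P i)).card ≤ 2 ∧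
      ((nb G v).filter (fun w => ∃ i ∈ J, i ≠ j ∧ w ∈ P i)).card + 2 ≤ (P j).card) :
    ∃ f : ι → V, (∀ j ∈ J, f j ∈ P j) ∧ ∀ i ∈ J, ∀ j ∈ J, i ≠ j → ¬ G.Adj (f i) (f j) := by
  suffices H : ∀ J' ⊆ J, ∃ f : ι → V, (∀ j ∈ J', f j ∈ P j) ∧
      ∀ i ∈ J', ∀ j ∈ J', i ≠ j → ¬ G.Adj (f i) (f j) from H J (Finset.Subset.refl _)
  intro J'
  induction J' using Finset.induction_on with
  | empty => intro _; exact ⟨fun _ => Classical.arbitrary V, by simp, by simp⟩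
  | insert r K hr ih =>
    intro hKJ
    have hKJ' : K ⊆ J := fun x hx => hKJ (Finset.mem_insert_of_mem hx)
    have hrJ : r ∈ J := hKJ (Finset.mem_insert_self _ _)
    obtain ⟨f0, hf0, hf0'⟩ := ih hKJ'
    let G0 : SimpleGraph V :=
      { Adj := fun a b => G.Adj a b ∧ ∃ i ∈ J, ∃ j ∈ J, i ≠ j ∧ a ∈ P i ∧ b ∈ P j
        symm := ⟨by
          rintro a b ⟨h, i, hi, j, hj, hij, ha, hb⟩
          exact ⟨h.symm, j, hj, i, hi, hij.symm, hb, ha⟩⟩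
        loopless := ⟨fun a h => h.1.ne rfl⟩ }
    by_contra hno
    have key := haxell_root _ G0 K P (P r) le_rfl
      (fun i hi => hPP r hrJ i (hKJ' hi) (fun h => hr (h ▸ hi)))
      (fun i hi j hj hij => hPP i (hKJ' hi) j (hKJ' hj) hij)
      ⟨f0, hf0, fun i hi j hj hij h => hf0' i hi j hj hij h.1⟩
      (by
        rintro ⟨f, a, ha, hfP, hff, haf⟩
        apply hno
        have hneq : ∀ i ∈ K, i ≠ r := fun i hi h => hr (h ▸ hi)
        refine ⟨Function.update f r a, ?_, ?_⟩
        · intro j hj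
          rcases Finset.mem_insert.1 hj with rfl | hj
          · simpa using ha
          · simpa [hneq j hj] using hfP j hj
        · intro i hi j hj hij hadj
          rcases Finset.mem_insert.1 hi with hi1 | hi1
          · rcases Finset.mem_insert.1 hj with hj1 | hj1
            · exact hij (hi1.trans hj1.symm)
            · rw [hi1, Function.update_self, Function.update_of_ne (hneq j hj1)] at hadj
              exact haf j hj1 ⟨hadj, r, hrJ, j, hKJ' hj1, (hneq j hj1).symm, ha, hfP j hj1⟩
          · rcases Finset.mem_insert.1 hj with hj1 | hj1
            · rw [hj1, Function.update_self, Function.update_of_ne (hneq i hi1)] at hadj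
              exact haf i hi1 ⟨hadj.symm, r, hrJ, i, hKJ' hi1, (hneq i hi1).symm, ha, hfP i hi1⟩
            · simp only [Function.update_of_ne (hneq i hi1), Function.update_of_ne (hneq j hj1)] at hadj
              exact hff i hi1 j hj1 hij
                ⟨hadj, i, hKJ' hi1, j, hKJ' hj1, hij, hfP i hi1, hfP j hj1⟩)
    obtain ⟨S, hS, x, y, hy, hx, hdom⟩ := key
    have hSJ : S ⊆ J := fun s hs => hKJ' (hS hs)
    have hrS : r ∉ S := fun h => hr (hS h)
    -- degree bounds in G0
    have hsub : ∀ j ∈ J, ∀ v ∈ P j, nb G0 v ⊆ (nb G v).filter (fun w => ∃ i ∈ J, i ≠ j ∧ w ∈ P i) := by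
      intro j hj v hv w hw
      rw [mem_nb] at hw
      obtain ⟨h, i, hi, k, hk, hik, hvi, hwk⟩ := hw
      have hij : i = j := by
        by_contra hij
        exact Finset.disjoint_left.1 (hPP i hi j hj hij) hvi hv
      subst hij
      simp only [Finset.mem_filter, mem_nb]
      exact ⟨h, k, hk, hik.symm, hwk⟩
    have hycard : ∀ s ∈ S, (nb G0 (y s)).card + 2 ≤ (P s).card := fun s hs =>
      le_trans (Nat.add_le_add_right (Finset.card_le_card (hsub s (hSJ hs) _ (hy s hs))) 2)
        (hdeg s (hSJ hs) _ (hy s hs)).2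
    have hxcard : ∀ s ∈ S, (nb G0 (x s)).card ≤ 2 := by
      intro s hs
      rcases hx s hs with h | ⟨t, ht, h⟩
      · exact le_trans (Finset.card_le_card (hsub r hrJ _ h)) (hdeg r hrJ _ h).1
      · exact le_trans (Finset.card_le_card (hsub t (hSJ ht) _ h)) (hdeg t (hSJ ht) _ h).1
    have hcov : (insert r S).biUnion P ⊆ S.biUnion (fun s => nb G0 (x s) ∪ nb G0 (y s)) := by
      intro v hv
      simp only [Finset.mem_biUnion, Finset.mem_insert, Finset.mem_union, mem_nb] at hv ⊢
      apply hdom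
      obtain ⟨t, rfl | ht, hvt⟩ := hv
      · exact Or.inl hvt
      · exact Or.inr ⟨t, ht, hvt⟩
    have h1 : ((insert r S).biUnion P).card = (P r).card + ∑ s ∈ S, (P s).card := by
      rw [Finset.card_biUnion, Finset.sum_insert hrS]
      intro i hi j hj hij
      have hJ : ∀ k ∈ insert r S, k ∈ J := by
        intro k hk
        rcases Finset.mem_insert.1 hk with rfl | hk
        · exact hrJ
        · exact hSJ hk
      exact hPP i (hJ i hi) j (hJ j hj) hij
    have h2 : (S.biUnion (fun s => nb G0 (x s) ∪ nb G0 (y s))).card ≤ ∑ s ∈ S, (P s).card := by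
      refine le_trans Finset.card_biUnion_le (Finset.sum_le_sum fun s hs => ?_)
      have := Finset.card_union_le (nb G0 (x s)) (nb G0 (y s))
      have := hycard s hs
      have := hxcard s hs
      omega
    have h3 := Finset.card_le_card hcov
    have h4 := (hne r hrJ).card_pos
    omega

end
end KpFree

set_option linter.unusedSectionVars false
namespace KpFree
section
open Classical
variable {V : Type*} [Fintype V]

def Indep (G : SimpleGraph V) (S : Finset V) : Prop := ∀ a ∈ S, ∀ b ∈ S, ¬ G.Adj a b

theorem exists_max (p : Finset V → Prop) (S0 : Finset V) (h0 : p S0) :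
    ∃ S, p S ∧ ∀ S', p S' → S'.card ≤ S.card := by
  obtain ⟨S, hS, hmax⟩ := Finset.exists_max_image (Finset.univ.filter p) Finset.card
    ⟨S0, by simpa using h0⟩
  exact ⟨S, by simpa using hS, fun S' h' => hmax S' (by simpa using h')⟩

def Big (G : SimpleGraph V) (e : ℕ) (Q : Finset V) : Prop := Clq G Q ∧ Q.card = e

def Wit (G : SimpleGraph V) (e : ℕ) (x : V) (Q R : Finset V) : Prop :=
  Big G e Q ∧ Big G e R ∧ x ∈ Q ∧ x ∈ R ∧ (Q ∩ R).card + 2 = e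

def Full (G : SimpleGraph V) (e : ℕ) (x : V) : Prop := ∃ Q R, Wit G e x Q R

noncomputable def cls (G : SimpleGraph V) (e : ℕ) (x : V) : Finset V :=
  Finset.univ.filter (fun y => ∀ R, Big G e R → x ∈ R → y ∈ R)

/-- degree and clique hypotheses -/
def Hyp (G : SimpleGraph V) (e : ℕ) : Prop :=
  (∀ v, (nb G v).card ≤ e + 1) ∧ ∀ Q, Clq G Q → Q.card ≤ e

noncomputable def cn (G : SimpleGraph V) (x : V) : Finset V := insert x (nb G x)

theorem mem_cn {G : SimpleGraph V} {x y : V} : y ∈ cn G x ↔ y = x ∨ G.Adj x y := by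
  simp [cn, mem_nb]

theorem card_cn (G : SimpleGraph V) (x : V) : (cn G x).card = (nb G x).card + 1 := by
  rw [cn, Finset.card_insert_of_notMem]
  rw [mem_nb]; exact fun h => h.ne rfl

theorem clq_sub_cn {G : SimpleGraph V} {Q : Finset V} (h : Clq G Q) {x : V} (hx : x ∈ Q) :
    Q ⊆ cn G x := by
  intro y hy
  rw [mem_cn]
  by_cases hxy : y = x
  · exact Or.inl hxy
  · exact Or.inr (h x hx y hy (Ne.symm hxy))

theorem clq_insert {G : SimpleGraph V} {Q : Finset V} (h : Clq G Q) {y : V} (hy : Q ⊆ cn G y) :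
    Clq G (insert y Q) := by
  intro a ha b hb hab
  rcases Finset.mem_insert.1 ha with ha1 | ha1
  · rcases Finset.mem_insert.1 hb with hb1 | hb1
    · exact absurd (ha1.trans hb1.symm) hab
    · have := hy hb1
      rw [mem_cn] at this
      rcases this with h1 | h1
      · exact absurd (ha1.trans h1.symm) hab
      · rw [ha1]; exact h1
  · rcases Finset.mem_insert.1 hb with hb1 | hb1
    · have := hy ha1
      rw [mem_cn] at this
      rcases this with h1 | h1
      · exact absurd (h1.trans hb1.symm) hab
      · rw [hb1]; exact h1.symm
    · exact h a ha1 b hb1 hab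

theorem clq_mono {G : SimpleGraph V} {Q R : Finset V} (h : Clq G Q) (hR : R ⊆ Q) : Clq G R :=
  fun a ha b hb hab => h a (hR ha) b (hR hb) hab

section cluster
variable {G : SimpleGraph V} {e : ℕ}

theorem meet_union (H : Hyp G e) {Q R : Finset V} (hQ : Big G e Q) (hR : Big G e R) {x : V}
    (hx : x ∈ Q) (hx' : x ∈ R) : (Q ∪ R).card ≤ e + 2 := by
  have h1 : Q ∪ R ⊆ cn G x := Finset.union_subset (clq_sub_cn hQ.1 hx) (clq_sub_cn hR.1 hx')
  have h2 := Finset.card_le_card h1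
  have h3 := H.1 x
  rw [card_cn] at h2
  omega

theorem meet_inter (H : Hyp G e) {Q R : Finset V} (hQ : Big G e Q) (hR : Big G e R) {x : V}
    (hx : x ∈ Q) (hx' : x ∈ R) : e ≤ (Q ∩ R).card + 2 := by
  have := meet_union H hQ hR hx hx'
  have h2 := Finset.card_union_add_card_inter Q R
  have := hQ.2
  have := hR.2
  omega

theorem wit_cn (H : Hyp G e) {x : V} {Q R : Finset V} (h : Wit G e x Q R) : Q ∪ R = cn G x := by
  obtain ⟨hQ, hR, hx, hx', hc⟩ := h
  have h1 : Q ∪ R ⊆ cn G x := Finset.union_subset (clq_sub_cn hQ.1 hx) (clq_sub_cn hR.1 hx')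
  apply Finset.eq_of_subset_of_card_le h1
  have h2 := Finset.card_union_add_card_inter Q R
  have h3 := H.1 x
  rw [card_cn]
  have := hQ.2
  have := hR.2
  omega

theorem wit_of_mem {x y : V} {Q R : Finset V} (h : Wit G e x Q R) (hy : y ∈ Q ∩ R) :
    Wit G e y Q R := by
  rw [Finset.mem_inter] at hy
  exact ⟨h.1, h.2.1, hy.1, hy.2, h.2.2.2.2⟩

theorem wit_sub (H : Hyp G e) {x : V} {Q R T : Finset V} (h : Wit G e x Q R) (hT : Big G e T)
    (hx : x ∈ T) : Q ∩ R ⊆ T := by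
  intro y hy
  by_contra hyT
  have h1 : T ⊆ cn G y := by
    rw [← wit_cn H (wit_of_mem h hy), wit_cn H h]
    exact clq_sub_cn hT.1 hx
  have h2 := H.2 _ (clq_insert hT.1 h1)
  rw [Finset.card_insert_of_notMem hyT, hT.2] at h2
  omega

theorem cls_eq (H : Hyp G e) {x : V} {Q R : Finset V} (h : Wit G e x Q R) :
    cls G e x = Q ∩ R := by
  ext y
  simp only [cls, Finset.mem_filter, Finset.mem_univ, true_and]
  constructor
  · intro hy
    exact Finset.mem_inter.2 ⟨hy Q h.1 h.2.2.1, hy R h.2.1 h.2.2.2.1⟩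
  · intro hy T hT hx
    exact wit_sub H h hT hx hy

theorem mem_cls_self (G : SimpleGraph V) (e : ℕ) (x : V) : x ∈ cls G e x := by
  simp [cls]

theorem cls_sub {x : V} {R : Finset V} (hR : Big G e R) (hx : x ∈ R) : cls G e x ⊆ R := by
  intro y hy
  simp only [cls, Finset.mem_filter, Finset.mem_univ, true_and] at hy
  exact hy R hR hx

theorem cls_card (H : Hyp G e) {x : V} (hx : Full G e x) : (cls G e x).card + 2 = e := by
  obtain ⟨Q, R, h⟩ := hx
  rw [cls_eq H h]; exact h.2.2.2.2

theorem full_of_mem (H : Hyp G e) {x y : V} (hx : Full G e x) (hy : y ∈ cls G e x) :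
    Full G e y ∧ cls G e y = cls G e x ∧ cn G y = cn G x := by
  obtain ⟨Q, R, h⟩ := hx
  rw [cls_eq H h] at hy
  have h' := wit_of_mem h hy
  exact ⟨⟨Q, R, h'⟩, by rw [cls_eq H h, cls_eq H h'], by rw [← wit_cn H h, ← wit_cn H h']⟩

theorem adj_big (H : Hyp G e) {x y : V} (hx : Full G e x) (hxy : G.Adj x y) :
    ∃ R, Big G e R ∧ x ∈ R ∧ y ∈ R := by
  obtain ⟨Q, R, h⟩ := hx
  have : y ∈ Q ∪ R := by rw [wit_cn H h, mem_cn]; exact Or.inr hxy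
  rcases Finset.mem_union.1 this with hy | hy
  · exact ⟨Q, h.1, h.2.2.1, hy⟩
  · exact ⟨R, h.2.1, h.2.2.2.1, hy⟩

theorem full_cn_card (H : Hyp G e) {x : V} (hx : Full G e x) : (cn G x).card = e + 2 := by
  obtain ⟨Q, R, h⟩ := hx
  rw [← wit_cn H h]
  have h2 := Finset.card_union_add_card_inter Q R
  have := h.1.2
  have := h.2.1.2
  have := h.2.2.2.2
  omega

theorem cls_eq_of_mem (H : Hyp G e) {x y z : V} (hx : Full G e x) (hy : Full G e y)
    (h1 : z ∈ cls G e x) (h2 : z ∈ cls G e y) : cls G e x = cls G e y := by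
  rw [← (full_of_mem H hx h1).2.1, ← (full_of_mem H hy h2).2.1]

theorem cls_eq_of_adj (H : Hyp G e) (he : 5 ≤ e) {x y : V} (hx : Full G e x) (hy : Full G e y)
    (hxy : G.Adj x y) : cls G e x = cls G e y := by
  obtain ⟨R, hR, hxR, hyR⟩ := adj_big H hx hxy
  by_contra hne
  have hd : Disjoint (cls G e x) (cls G e y) := by
    rw [Finset.disjoint_left]
    intro z h1 h2
    exact hne (cls_eq_of_mem H hx hy h1 h2)
  have h1 := Finset.card_le_card (Finset.union_subset (cls_sub hR hxR) (cls_sub hR hyR))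
  rw [Finset.card_union_of_disjoint hd, hR.2] at h1
  have := cls_card H hx
  have := cls_card H hy
  omega

def NF (G : SimpleGraph V) (e : ℕ) (Q : Finset V) : Prop := Big G e Q ∧ ∀ x ∈ Q, ¬ Full G e x

theorem nf_meet (H : Hyp G e) {Q R : Finset V} (hQ : NF G e Q) (hR : Big G e R) {x : V}
    (hx : x ∈ Q) (hx' : x ∈ R) : e ≤ (Q ∩ R).card + 1 := by
  have h1 := meet_inter H hQ.1 hR hx hx'
  by_contra hcon
  exact hQ.2 x hx ⟨Q, R, hQ.1, hR, hx, hx', by omega⟩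

theorem nf_meet_nf (H : Hyp G e) (he : 4 ≤ e) {Q R : Finset V} (hQ : NF G e Q) (hR : Big G e R)
    {x : V} (hx : x ∈ Q) (hx' : x ∈ R) : NF G e R := by
  refine ⟨hR, fun y hy hfy => ?_⟩
  have h1 : cls G e y ⊆ R \ Q := by
    intro z hz
    rw [Finset.mem_sdiff]
    exact ⟨cls_sub hR hy hz, fun hzQ => hQ.2 z hzQ (full_of_mem H hfy hz).1⟩
  have h2 := Finset.card_le_card h1
  have h3 := cls_card H hfy
  have h4 := nf_meet H hQ hR hx hx'
  have h5 := Finset.card_sdiff_add_card_inter R Q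
  rw [Finset.inter_comm] at h5
  have := hR.2
  omega

theorem nf_not_adj_full (H : Hyp G e) (he : 4 ≤ e) {Q : Finset V} (hQ : NF G e Q) {t x : V}
    (ht : t ∈ Q) (hx : Full G e x) : ¬ G.Adj t x := by
  intro h
  obtain ⟨R, hR, hxR, htR⟩ := adj_big H hx h.symm
  exact (nf_meet_nf H he hQ hR ht htR).2 x hxR hx

theorem nf_trans (H : Hyp G e) (he : 4 ≤ e) {Q R T : Finset V} (hQ : NF G e Q) (hR : Big G e R)
    (hT : Big G e T) (h1 : (Q ∩ R).Nonempty) (h2 : (R ∩ T).Nonempty) : (Q ∩ T).Nonempty := by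
  obtain ⟨x, hx⟩ := h1
  obtain ⟨y, hy⟩ := h2
  rw [Finset.mem_inter] at hx hy
  have hR' := nf_meet_nf H he hQ hR hx.1 hx.2
  have h1 := nf_meet H hQ hR hx.1 hx.2
  have h2 := nf_meet H hR' hT hy.1 hy.2
  by_contra hcon
  have hd : Disjoint (Q ∩ R) (R ∩ T) := by
    rw [Finset.disjoint_left]
    intro z hz hz'
    rw [Finset.mem_inter] at hz hz'
    exact hcon ⟨z, Finset.mem_inter.2 ⟨hz.1, hz'.2⟩⟩
  have h3 := Finset.card_le_card (Finset.union_subset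
    (Finset.inter_subset_right (s₁ := Q) (s₂ := R)) (Finset.inter_subset_left (s₁ := R) (s₂ := T)))
  rw [Finset.card_union_of_disjoint hd, hR.2] at h3
  omega

noncomputable def core (G : SimpleGraph V) (e : ℕ) (Q : Finset V) : Finset V :=
  Finset.univ.filter (fun y => ∀ R, Big G e R → (Q ∩ R).Nonempty → y ∈ R)

theorem mem_core {Q : Finset V} {y : V} :
    y ∈ core G e Q ↔ ∀ R, Big G e R → (Q ∩ R).Nonempty → y ∈ R := by
  simp [core]

theorem core_sub (he : 4 ≤ e) {Q : Finset V} (hQ : Big G e Q) : core G e Q ⊆ Q := by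
  intro y hy
  rw [mem_core] at hy
  apply hy Q hQ
  rw [Finset.inter_self, ← Finset.card_pos, hQ.2]; omega

theorem core_eq_of_meet (H : Hyp G e) (he : 4 ≤ e) {Q R : Finset V} (hQ : NF G e Q)
    (hR : Big G e R) (h : (Q ∩ R).Nonempty) : core G e Q = core G e R := by
  have hR' : NF G e R := by
    obtain ⟨x, hx⟩ := h
    rw [Finset.mem_inter] at hx
    exact nf_meet_nf H he hQ hR hx.1 hx.2
  ext y
  rw [mem_core, mem_core]
  constructor
  · intro hy T hT hm
    exact hy T hT (nf_trans H he hQ hR hT h hm)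
  · intro hy T hT hm
    exact hy T hT (nf_trans H he hR' hQ.1 hT (by rwa [Finset.inter_comm]) hm)

theorem core_eq_inter (H : Hyp G e) (he : 4 ≤ e) {Q R : Finset V} (hQ : NF G e Q)
    (hR : Big G e R) (h : (Q ∩ R).Nonempty) (hne : Q ≠ R) :
    core G e Q = Q ∩ R ∧ (Q ∩ R).card + 1 = e := by
  obtain ⟨x, hx⟩ := h
  have hx2 := Finset.mem_inter.1 hx
  have hR' := nf_meet_nf H he hQ hR hx2.1 hx2.2
  have h1 := nf_meet H hQ hR hx2.1 hx2.2
  have h2 : (Q ∩ R).card ≠ e := by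
    intro hc
    have e1 : Q ∩ R = Q := Finset.eq_of_subset_of_card_le Finset.inter_subset_left
      (by rw [hc, hQ.1.2])
    have e2 : Q ∩ R = R := Finset.eq_of_subset_of_card_le Finset.inter_subset_right
      (by rw [hc, hR.2])
    exact hne (e1.symm.trans e2)
  have h3 := Finset.card_le_card (Finset.inter_subset_left (s₁ := Q) (s₂ := R))
  rw [hQ.1.2] at h3
  refine ⟨?_, by omega⟩
  apply Finset.Subset.antisymm
  · intro y hy
    have hyQ := core_sub he hQ.1 hy
    rw [core_eq_of_meet H he hQ hR ⟨x, hx⟩] at hy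
    exact Finset.mem_inter.2 ⟨hyQ, core_sub he hR hy⟩
  · intro y hy
    rw [mem_core]
    intro T hT hm
    by_contra hyT
    have hy2 := Finset.mem_inter.1 hy
    have aux : ∀ S, NF G e S → y ∈ S → (S ∩ T).Nonempty → ∀ z ∈ S, z ≠ y → z ∈ T := by
      intro S hS hyS ⟨w, hw⟩ z hz hzy
      rw [Finset.mem_inter] at hw
      by_contra hzT
      have a1 := nf_meet H hS hT hw.1 hw.2
      have a2 := Finset.card_sdiff_add_card_inter S T
      have a3 : ({z, y} : Finset V) ⊆ S \ T := by
        intro u hu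
        simp only [Finset.mem_insert, Finset.mem_singleton] at hu
        rw [Finset.mem_sdiff]
        rcases hu with rfl | rfl
        · exact ⟨hz, hzT⟩
        · exact ⟨hyS, hyT⟩
      have a4 := Finset.card_le_card a3
      rw [Finset.card_pair hzy] at a4
      have := hS.1.2
      omega
    have hmR : (R ∩ T).Nonempty :=
      nf_trans H he hR' hQ.1 hT (by rw [Finset.inter_comm]; exact ⟨x, hx⟩) hm
    have hin : ∀ z ∈ Q ∪ R, z ≠ y → z ∈ T := by
      intro z hz hzy
      rcases Finset.mem_union.1 hz with hz | hz
      · exact aux Q hQ hy2.1 hm z hz hzy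
      · exact aux R hR' hy2.2 hmR z hz hzy
    have hsubcn : Q ∪ R ⊆ cn G y :=
      Finset.union_subset (clq_sub_cn hQ.1.1 hy2.1) (clq_sub_cn hR.1 hy2.2)
    have hclq : Clq G (insert y ((Q ∪ R).erase y)) := by
      apply clq_insert
      · apply clq_mono hT.1
        intro z hz
        rw [Finset.mem_erase] at hz
        exact hin z hz.2 hz.1
      · exact fun z hz => hsubcn (Finset.mem_of_mem_erase hz)
    rw [Finset.insert_erase (Finset.mem_union_left _ hy2.1)] at hclq
    have b1 := H.2 _ hclq
    have b2 := Finset.card_union_add_card_inter Q R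
    have := hQ.1.2
    have := hR.2
    omega

theorem nonfullHit (H : Hyp G e) (he : 4 ≤ e) :
    ∃ T, Indep G T ∧ (∀ Q, NF G e Q → ∃ t ∈ T, t ∈ Q) ∧ ∀ t ∈ T, ∃ Q, NF G e Q ∧ t ∈ Q := by
  rcases isEmpty_or_nonempty V with hV | hV
  · refine ⟨∅, fun a ha => by simp at ha, fun Q hQ => ?_, fun t ht => by simp at ht⟩
    have : Q = ∅ := Finset.eq_empty_of_isEmpty Q
    have h2 := hQ.1.2
    rw [this, Finset.card_empty] at h2
    omega
  let J : Finset (Finset V) := (Finset.univ.filter (fun Q => NF G e Q)).image (core G e)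
  have hJ : ∀ i, i ∈ J ↔ ∃ Q, NF G e Q ∧ core G e Q = i := by
    intro i
    simp [J]
  -- a member of another core avoids all big cliques meeting `Q`
  have hother : ∀ Q, NF G e Q → ∀ i ∈ J, i ≠ core G e Q → ∀ w ∈ i, ∀ R, Big G e R →
      (Q ∩ R).Nonempty → w ∉ R := by
    intro Q hQ i hi hne w hw R hR hm hwR
    obtain ⟨Q', hQ', rfl⟩ := (hJ i).1 hi
    apply hne
    rw [core_eq_of_meet H he hQ hR hm]
    apply core_eq_of_meet H he hQ' hR
    exact ⟨w, Finset.mem_inter.2 ⟨core_sub he hQ'.1 hw, hwR⟩⟩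
  have hself : ∀ Q, NF G e Q → (Q ∩ Q).Nonempty := by
    intro Q hQ
    rw [Finset.inter_self, ← Finset.card_pos, hQ.1.2]; omega
  have hmain : ∀ Q, NF G e Q → 3 ≤ (core G e Q).card ∧ ∀ v ∈ core G e Q,
      ((nb G v).filter (fun w => ∃ i ∈ J, i ≠ core G e Q ∧ w ∈ i)).card ≤ 2 ∧
      ((nb G v).filter (fun w => ∃ i ∈ J, i ≠ core G e Q ∧ w ∈ i)).card + 2
        ≤ (core G e Q).card := by
    intro Q hQ
    by_cases hR : ∃ R, Big G e R ∧ (Q ∩ R).Nonempty ∧ Q ≠ R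
    · obtain ⟨R, hR, hm, hne⟩ := hR
      obtain ⟨h1, h2⟩ := core_eq_inter H he hQ hR hm hne
      refine ⟨by rw [h1]; omega, fun v hv => ?_⟩
      have hv' := hv
      rw [h1, Finset.mem_inter] at hv'
      have hsub : (nb G v).filter (fun w => ∃ i ∈ J, i ≠ core G e Q ∧ w ∈ i) ⊆
          cn G v \ (Q ∪ R) := by
        intro w hw
        rw [Finset.mem_filter] at hw
        obtain ⟨hw, i, hi, hne, hwi⟩ := hw
        rw [Finset.mem_sdiff, Finset.mem_union]
        refine ⟨Finset.mem_insert_of_mem hw, ?_⟩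
        rintro (h | h)
        · exact hother Q hQ i hi hne w hwi Q hQ.1 (hself Q hQ) h
        · exact hother Q hQ i hi hne w hwi R hR hm h
      have h3 := Finset.card_le_card hsub
      rw [Finset.card_sdiff_of_subset (Finset.union_subset (clq_sub_cn hQ.1.1 hv'.1)
        (clq_sub_cn hR.1 hv'.2)), card_cn] at h3
      have h4 := H.1 v
      have h5 := Finset.card_union_add_card_inter Q R
      have := hQ.1.2
      have := hR.2
      rw [h1] at h3 ⊢
      omega
    · push Not at hR
      have h1 : core G e Q = Q := by
        apply Finset.Subset.antisymm (core_sub he hQ.1)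
        intro y hy
        rw [mem_core]
        intro R hR' hm
        rwa [← hR R hR' hm]
      refine ⟨by rw [h1, hQ.1.2]; omega, fun v hv => ?_⟩
      have hv' := hv
      rw [h1] at hv'
      have hsub : (nb G v).filter (fun w => ∃ i ∈ J, i ≠ core G e Q ∧ w ∈ i) ⊆
          cn G v \ Q := by
        intro w hw
        rw [Finset.mem_filter] at hw
        obtain ⟨hw, i, hi, hne, hwi⟩ := hw
        rw [Finset.mem_sdiff]
        exact ⟨Finset.mem_insert_of_mem hw,
          hother Q hQ i hi hne w hwi Q hQ.1 (hself Q hQ)⟩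
      have h3 := Finset.card_le_card hsub
      rw [Finset.card_sdiff_of_subset (clq_sub_cn hQ.1.1 hv'), card_cn] at h3
      have h4 := H.1 v
      have := hQ.1.2
      rw [h1] at h3 ⊢
      omega
  obtain ⟨f, hf1, hf2⟩ := haxell G J id
    (by
      intro i hi j hj hij
      obtain ⟨Q, hQ, rfl⟩ := (hJ i).1 hi
      rw [Finset.disjoint_left]
      intro v hv hv'
      exact hother Q hQ j hj hij.symm v hv' Q hQ.1 (hself Q hQ) (core_sub he hQ.1 hv))
    (by
      intro i hi
      obtain ⟨Q, hQ, rfl⟩ := (hJ i).1 hi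
      rw [← Finset.card_pos]
      have := (hmain Q hQ).1
      simp only [id]
      omega)
    (by
      intro i hi
      obtain ⟨Q, hQ, rfl⟩ := (hJ i).1 hi
      intro v hv
      have h := (hmain Q hQ).2 v hv
      constructor
      · convert h.1 <;> rfl
      · convert h.2 <;> rfl)
  refine ⟨J.image f, ?_, ?_, ?_⟩
  · intro a ha b hb hab
    obtain ⟨i, hi, rfl⟩ := Finset.mem_image.1 ha
    obtain ⟨j, hj, rfl⟩ := Finset.mem_image.1 hb
    by_cases hij : i = j
    · subst hij; exact hab.ne rfl
    · exact hf2 i hi j hj hij hab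
  · intro Q hQ
    have hi : core G e Q ∈ J := (hJ _).2 ⟨Q, hQ, rfl⟩
    exact ⟨f (core G e Q), Finset.mem_image_of_mem f hi, core_sub he hQ.1 (hf1 _ hi)⟩
  · intro t ht
    obtain ⟨i, hi, rfl⟩ := Finset.mem_image.1 ht
    obtain ⟨Q, hQ, rfl⟩ := (hJ i).1 hi
    exact ⟨Q, hQ, core_sub he hQ.1 (hf1 _ hi)⟩

theorem nb_del {S : Finset V} {v : V} : nb (del G S) v ⊆ nb G v := by
  intro w hw
  rw [mem_nb] at hw ⊢
  exact hw.1

theorem clq_del {S Q : Finset V} (h : Clq (del G S) Q) : Clq G Q :=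
  fun a ha b hb hab => (h a ha b hb hab).1

theorem clq_del_disj {S Q : Finset V} (h : Clq (del G S) Q) (hc : 2 ≤ Q.card) :
    ∀ a ∈ Q, a ∉ S := by
  intro a ha
  obtain ⟨b, hb, hab⟩ := Finset.exists_mem_ne (by omega : 1 < Q.card) a
  exact (h a ha b hb hab.symm).2.1

theorem step (H : Hyp G e) (he : 5 ≤ e) :
    ∃ I, Indep G I ∧ Hyp (del G I) (e - 1) := by
  obtain ⟨T, hT1, hT2, hT3⟩ := nonfullHit H (by omega)
  obtain ⟨S, ⟨hS1, hS2⟩, hSmax⟩ := exists_max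
    (fun S => Indep G S ∧ ∀ s ∈ S, Full G e s) ∅ ⟨fun a ha => by simp at ha, by simp⟩
  obtain ⟨I, ⟨hI1, hI2⟩, hImax⟩ := exists_max
    (fun I => Indep G I ∧ T ∪ S ⊆ I) (T ∪ S) ⟨by
      have hTS : ∀ a ∈ T, ∀ b ∈ S, ¬ G.Adj a b := by
        intro a ha b hb
        obtain ⟨Q, hQ, haQ⟩ := hT3 a ha
        exact nf_not_adj_full H (by omega) hQ haQ (hS2 b hb)
      intro a ha b hb
      rcases Finset.mem_union.1 ha with ha1 | ha1 <;> rcases Finset.mem_union.1 hb with hb1 | hb1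
      · exact hT1 a ha1 b hb1
      · exact hTS a ha1 b hb1
      · exact fun h => hTS b hb1 a ha1 h.symm
      · exact hS1 a ha1 b hb1, Finset.Subset.refl _⟩
  have ext : ∀ S x, Indep G S → (∀ s ∈ S, ¬ G.Adj x s) → Indep G (insert x S) := by
    intro S x hS hx a ha b hb hab
    rcases Finset.mem_insert.1 ha with ha1 | ha1 <;> rcases Finset.mem_insert.1 hb with hb1 | hb1
    · exact hab.ne (ha1.trans hb1.symm)
    · exact hx b hb1 (ha1 ▸ hab)
    · exact hx a ha1 (hb1 ▸ hab.symm)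
    · exact hS a ha1 b hb1 hab
  refine ⟨I, hI1, ?_, ?_⟩
  · intro v
    by_cases hv : v ∈ I
    · have : nb (del G I) v = ∅ := by
        ext w
        simp only [mem_nb, Finset.notMem_empty, iff_false]
        exact fun h => h.2.1 hv
      rw [this]; simp
    · obtain ⟨s, hs, hvs⟩ : ∃ s ∈ I, G.Adj v s := by
        by_contra hcon
        push Not at hcon
        have := hImax (insert v I) ⟨ext I v hI1 hcon, hI2.trans (Finset.subset_insert _ _)⟩
        rw [Finset.card_insert_of_notMem hv] at this
        omega
      have h1 : nb (del G I) v ⊆ (nb G v).erase s := by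
        intro w hw
        rw [mem_nb] at hw
        rw [Finset.mem_erase, mem_nb]
        exact ⟨fun h => hw.2.2 (h ▸ hs), hw.1⟩
      have h2 := Finset.card_le_card h1
      rw [Finset.card_erase_of_mem (mem_nb.2 hvs)] at h2
      have := H.1 v
      omega
  · intro Q hQ
    by_contra hcon
    have hQ1 := clq_del hQ
    have hQ2 : Big G e Q := ⟨hQ1, by have := H.2 Q hQ1; omega⟩
    have hdis := clq_del_disj hQ (by have := hQ2.2; omega)
    by_cases hNF : NF G e Q
    · obtain ⟨t, ht, htQ⟩ := hT2 Q hNF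
      exact hdis t htQ (hI2 (Finset.mem_union_left _ ht))
    · have : ∃ x ∈ Q, Full G e x := by
        by_contra h
        push Not at h
        exact hNF ⟨hQ2, h⟩
      obtain ⟨x, hxQ, hx⟩ := this
      by_cases hxS : x ∈ S
      · exact hdis x hxQ (hI2 (Finset.mem_union_right _ hxS))
      obtain ⟨s, hs, hxs⟩ : ∃ s ∈ S, G.Adj x s := by
        by_contra hcon
        push Not at hcon
        have := hSmax (insert x S) ⟨ext S x hS1 hcon, by
          intro s hs
          rcases Finset.mem_insert.1 hs with rfl | hs
          · exact hx
          · exact hS2 s hs⟩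
        rw [Finset.card_insert_of_notMem hxS] at this
        omega
      have h1 := cls_eq_of_adj H he hx (hS2 s hs) hxs
      have h2 : s ∈ Q := cls_sub hQ2 hxQ (h1 ▸ mem_cls_self G e s)
      exact hdis s h2 (hI2 (Finset.mem_union_right _ hs))

end cluster
end
end KpFree

set_option linter.unusedSectionVars false
namespace KpFree
section
open Classical
variable {V : Type*} [Fintype V]

/-- no monochromatic clique on four vertices -/
def Good (G : SimpleGraph V) (c : V → Bool) : Prop :=
  ∀ Q, Clq G Q → Q.card = 4 → ∀ κ, ¬ ∀ v ∈ Q, c v = κ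

noncomputable def supp (G : SimpleGraph V) : Finset V :=
  Finset.univ.filter (fun v => ∃ w, G.Adj v w)

theorem mem_supp {G : SimpleGraph V} {v : V} : v ∈ supp G ↔ ∃ w, G.Adj v w := by
  simp [supp]

theorem hyp_del {G : SimpleGraph V} {e : ℕ} (H : Hyp G e) (S : Finset V) : Hyp (del G S) e :=
  ⟨fun v => (Finset.card_le_card nb_del).trans (H.1 v), fun Q hQ => H.2 Q (clq_del hQ)⟩

/-- outside neighbourhood -/
noncomputable def sg (G : SimpleGraph V) (M : Finset V) (v : V) : Finset V := nb G v \ M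

theorem mem_sg {G : SimpleGraph V} {M : Finset V} {v w : V} :
    w ∈ sg G M v ↔ G.Adj v w ∧ w ∉ M := by
  simp [sg, mem_nb]

def PartOK (G : SimpleGraph V) (M : Finset V) (c : V → Bool) (N : Finset V) (κ : Bool) : Prop :=
  N.card ≤ 3 ∧ (∀ y, c y = κ → ∃ m ∈ N, y ∉ sg G M m) ∧
  ∀ a ∈ N, ∀ b ∈ N, a ≠ b → ∀ y y', y ≠ y' → c y = κ → c y' = κ →
    ¬ (y ∈ sg G M a ∧ y' ∈ sg G M a ∧ y ∈ sg G M b ∧ y' ∈ sg G M b)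

theorem good_of_parts {G : SimpleGraph V} {M : Finset V} {c : V → Bool} {N N' : Finset V}
    {κ : Bool} (hsg : ∀ m ∈ M, (sg G M m).card ≤ 2) (hc : Good (del G M) c)
    (hM : ∀ m, m ∈ M ↔ m ∈ N ∨ m ∈ N') (h : PartOK G M c N κ) (h' : PartOK G M c N' (!κ)) :
    ∃ c', Good G c' := by
  refine ⟨fun v => if v ∈ N then κ else if v ∈ N' then !κ else c v, ?_⟩
  intro Q hQ hQ4 μ hmono
  have hout : ∀ y ∈ Q, y ∉ M → c y = μ := by
    intro y hy hyM
    have := hmono y hy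
    rw [hM] at hyM
    push Not at hyM
    simpa [hyM.1, hyM.2] using this
  obtain ⟨N0, hN0, hsub⟩ : ∃ N0, PartOK G M c N0 μ ∧ Q ∩ M ⊆ N0 := by
    by_cases hμ : μ = κ
    · subst hμ
      refine ⟨N, h, ?_⟩
      intro v hv
      rw [Finset.mem_inter, hM] at hv
      by_contra hvN
      have h1 := hmono v hv.1
      have h2 := hv.2.resolve_left hvN
      simp [hvN, h2] at h1
    · have hμ' : μ = !κ := by
        revert hμ; cases μ <;> cases κ <;> simp
      subst hμ'
      refine ⟨N', h', ?_⟩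
      intro v hv
      rw [Finset.mem_inter, hM] at hv
      by_contra hvN
      have h1 := hmono v hv.1
      have h2 := hv.2.resolve_right hvN
      simp [h2] at h1
  have hcard := Finset.card_sdiff_add_card_inter Q M
  have hle := Finset.card_le_card hsub
  have hN3 := hN0.1
  have hsgm : ∀ m ∈ Q, m ∈ M → Q \ M ⊆ sg G M m := by
    intro m hm hmM y hy
    rw [Finset.mem_sdiff] at hy
    rw [mem_sg]
    exact ⟨hQ m hm y hy.1 (fun h => hy.2 (h ▸ hmM)), hy.2⟩
  rcases Nat.lt_or_ge 0 (Q ∩ M).card with h0 | h0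
  · obtain ⟨m, hm⟩ := Finset.card_pos.1 h0
    have hm2 := Finset.mem_inter.1 hm
    have h2 := Finset.card_le_card (hsgm m hm2.1 hm2.2)
    have h3 := hsg m hm2.2
    by_cases h4 : (Q ∩ M).card = 3
    · have h5 : Q ∩ M = N0 := Finset.eq_of_subset_of_card_le hsub (by omega)
      have h6 : 0 < (Q \ M).card := by omega
      obtain ⟨y, hy⟩ := Finset.card_pos.1 h6
      have hy2 := Finset.mem_sdiff.1 hy
      obtain ⟨m', hm', hym⟩ := hN0.2.1 y (hout y hy2.1 hy2.2)
      rw [← h5, Finset.mem_inter] at hm'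
      exact hym (hsgm m' hm'.1 hm'.2 hy)
    · have h5 : 1 < (Q ∩ M).card := by omega
      have h6 : 1 < (Q \ M).card := by omega
      obtain ⟨a, ha, b, hb, hab⟩ := Finset.one_lt_card.1 h5
      obtain ⟨y, hy, y', hy', hyy⟩ := Finset.one_lt_card.1 h6
      have ha2 := Finset.mem_inter.1 ha
      have hb2 := Finset.mem_inter.1 hb
      have hy2 := Finset.mem_sdiff.1 hy
      have hy2' := Finset.mem_sdiff.1 hy'
      exact hN0.2.2 a (hsub ha) b (hsub hb) hab y y' hyy (hout y hy2.1 hy2.2)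
        (hout y' hy2'.1 hy2'.2) ⟨hsgm a ha2.1 ha2.2 hy, hsgm a ha2.1 ha2.2 hy',
          hsgm b hb2.1 hb2.2 hy, hsgm b hb2.1 hb2.2 hy'⟩
  · have hdis : ∀ v ∈ Q, v ∉ M := by
      intro v hv hvM
      have := Finset.card_pos.2 ⟨v, Finset.mem_inter.2 ⟨hv, hvM⟩⟩
      omega
    exact hc Q (fun a ha b hb hab => ⟨hQ a ha b hb hab, hdis a ha, hdis b hb⟩) hQ4 μ
      (fun v hv => hout v hv (hdis v hv))

theorem eq_of_pair {S U : Finset V} (hU : U.card = 2) (hS : S.card ≤ 2) {y y' : V} (hne : y ≠ y')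
    (h1 : y ∈ U) (h2 : y' ∈ U) (h3 : y ∈ S) (h4 : y' ∈ S) :
    S = U ∧ ∀ u ∈ U, u = y ∨ u = y' := by
  have e1 : ({y, y'} : Finset V) = U := Finset.eq_of_subset_of_card_le
    (by intro u hu; simp only [Finset.mem_insert, Finset.mem_singleton] at hu
        rcases hu with rfl | rfl <;> assumption) (by rw [hU, Finset.card_pair hne])
  have e2 : ({y, y'} : Finset V) = S := Finset.eq_of_subset_of_card_le
    (by intro u hu; simp only [Finset.mem_insert, Finset.mem_singleton] at hu
        rcases hu with rfl | rfl <;> assumption) (by rw [Finset.card_pair hne]; exact hS)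
  refine ⟨e2.symm.trans e1, fun u hu => ?_⟩
  rw [← e1] at hu
  simpa using hu

theorem part3 {G : SimpleGraph V} {M U W : Finset V} {c : V → Bool} {κ : Bool} {a b d : V}
    (ha : sg G M a = U) (hb : sg G M b = W) (hU : U.card = 2) (hW : W.card = 2)
    (hUW : Disjoint U W) (hd : (sg G M d).card ≤ 2)
    (h1 : ¬ (sg G M d = U ∧ ∀ u ∈ U, c u = κ)) (h2 : ¬ (sg G M d = W ∧ ∀ u ∈ W, c u = κ)) :
    PartOK G M c {a, b, d} κ := by
  have hdis : ∀ y, y ∈ U → y ∉ W := fun y hy => Finset.disjoint_left.1 hUW hy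
  have key1 : ∀ y y', y ≠ y' → c y = κ → c y' = κ → y ∈ U → y' ∈ U → y ∈ sg G M d →
      y' ∈ sg G M d → False := by
    intro y y' hne hy hy' h3 h4 h5 h6
    obtain ⟨e1, e2⟩ := eq_of_pair hU hd hne h3 h4 h5 h6
    apply h1
    refine ⟨e1, fun u hu => ?_⟩
    rcases e2 u hu with rfl | rfl <;> assumption
  have key2 : ∀ y y', y ≠ y' → c y = κ → c y' = κ → y ∈ W → y' ∈ W → y ∈ sg G M d →
      y' ∈ sg G M d → False := by
    intro y y' hne hy hy' h3 h4 h5 h6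
    obtain ⟨e1, e2⟩ := eq_of_pair hW hd hne h3 h4 h5 h6
    apply h2
    refine ⟨e1, fun u hu => ?_⟩
    rcases e2 u hu with rfl | rfl <;> assumption
  refine ⟨Finset.card_le_three, ?_, ?_⟩
  · intro y _
    by_cases hy : y ∈ U
    · exact ⟨b, by simp, by rw [hb]; exact hdis y hy⟩
    · exact ⟨a, by simp, by rwa [ha]⟩
  · intro p hp q hq hpq y y' hyy hy hy' ⟨h3, h4, h5, h6⟩
    simp only [Finset.mem_insert, Finset.mem_singleton] at hp hq
    rcases hp with rfl | rfl | rfl <;> rcases hq with rfl | rfl | rfl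
    · exact hpq rfl
    · rw [ha] at h3; rw [hb] at h5; exact hdis y h3 h5
    · rw [ha] at h3 h4; exact key1 y y' hyy hy hy' h3 h4 h5 h6
    · rw [hb] at h3; rw [ha] at h5; exact hdis y h5 h3
    · exact hpq rfl
    · rw [hb] at h3 h4; exact key2 y y' hyy hy hy' h3 h4 h5 h6
    · rw [ha] at h5 h6; exact key1 y y' hyy hy hy' h5 h6 h3 h4
    · rw [hb] at h5 h6; exact key2 y y' hyy hy hy' h5 h6 h3 h4
    · exact hpq rfl

theorem part_same {G : SimpleGraph V} {M U : Finset V} {c : V → Bool} {κ : Bool} {a b d : V}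
    (ha : sg G M a = U) (hb : sg G M b = U) (hd : sg G M d = U) (hm : ∀ u ∈ U, c u = κ) :
    PartOK G M c {a, b, d} (!κ) := by
  have key : ∀ y, c y = (!κ) → y ∉ U := by
    intro y hy hyU
    rw [hm y hyU] at hy
    simp at hy
  have hall : ∀ p ∈ ({a, b, d} : Finset V), sg G M p = U := by
    intro p hp
    simp only [Finset.mem_insert, Finset.mem_singleton] at hp
    rcases hp with rfl | rfl | rfl <;> assumption
  refine ⟨Finset.card_le_three, ?_, ?_⟩
  · intro y hy
    exact ⟨a, by simp, by rw [ha]; exact key y hy⟩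
  · intro p hp q hq hpq y y' hyy hy hy' ⟨h3, h4, h5, h6⟩
    rw [hall p hp] at h3
    exact key y hy h3

theorem or_perm1 (p1 p2 p3 p4 p5 p6 : Prop) :
    (p1 ∨ p2 ∨ p3 ∨ p4 ∨ p5 ∨ p6) ↔ ((p1 ∨ p3 ∨ p5) ∨ (p2 ∨ p4 ∨ p6)) := by tauto

theorem or_perm2 (p1 p2 p3 p4 p5 p6 : Prop) :
    (p1 ∨ p2 ∨ p3 ∨ p4 ∨ p5 ∨ p6) ↔ ((p1 ∨ p3 ∨ p4) ∨ (p2 ∨ p5 ∨ p6)) := by tauto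

theorem or_perm3 (p1 p2 p3 p4 p5 p6 : Prop) :
    (p1 ∨ p2 ∨ p3 ∨ p4 ∨ p5 ∨ p6) ↔ ((p1 ∨ p3 ∨ p2) ∨ (p4 ∨ p5 ∨ p6)) := by tauto

theorem extendM {G : SimpleGraph V} {M U W : Finset V} {c : V → Bool} {m1 m2 m3 m4 m5 m6 : V}
    (hM : M = {m1, m2, m3, m4, m5, m6}) (hsg : ∀ m ∈ M, (sg G M m).card ≤ 2)
    (h1 : sg G M m1 = U) (h2 : sg G M m2 = U) (h3 : sg G M m3 = W) (h4 : sg G M m4 = W)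
    (hU : U.card = 2) (hW : W.card = 2) (hUW : Disjoint U W) (hc : Good (del G M) c)
    (hE : (¬ ∃ κ, (∀ v ∈ U, c v = κ) ∧ ∀ v ∈ W, c v = κ) ∨
      ¬ (sg G M m5 = U ∨ sg G M m5 = W) ∨ ¬ (sg G M m6 = U ∨ sg G M m6 = W)) :
    ∃ c', Good G c' := by
  have hne : U ≠ W := by
    intro h
    rw [← h, disjoint_self] at hUW
    rw [hUW] at hU
    simp at hU
  have hUn : U.Nonempty := Finset.card_pos.1 (by omega)
  have hWn : W.Nonempty := Finset.card_pos.1 (by omega)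
  have d5 : (sg G M m5).card ≤ 2 := hsg m5 (by rw [hM]; simp)
  have d6 : (sg G M m6).card ≤ 2 := hsg m6 (by rw [hM]; simp)
  let forb : V → Bool → Prop := fun d κ =>
    (sg G M d = U ∧ ∀ u ∈ U, c u = κ) ∨ (sg G M d = W ∧ ∀ u ∈ W, c u = κ)
  have huniq : ∀ d κ, forb d κ → ¬ forb d (!κ) := by
    rintro d κ (⟨e1, f1⟩ | ⟨e1, f1⟩) (⟨e2, f2⟩ | ⟨e2, f2⟩)
    · obtain ⟨u, hu⟩ := hUn
      have := f1 u hu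
      rw [f2 u hu] at this
      simp at this
    · exact hne (e1.symm.trans e2)
    · exact hne (e2.symm.trans e1)
    · obtain ⟨u, hu⟩ := hWn
      have := f1 u hu
      rw [f2 u hu] at this
      simp at this
  by_cases hgood : ∃ κ, ¬ forb m5 κ ∧ ¬ forb m6 (!κ)
  · obtain ⟨κ, g5, g6⟩ := hgood
    have g5' := not_or.1 g5
    have g6' := not_or.1 g6
    refine good_of_parts (N := {m1, m3, m5}) (N' := {m2, m4, m6}) (κ := κ) hsg hc ?_
      (part3 h1 h3 hU hW hUW d5 g5'.1 g5'.2) (part3 h2 h4 hU hW hUW d6 g6'.1 g6'.2)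
    intro m
    rw [hM]
    simp only [Finset.mem_insert, Finset.mem_singleton]
    exact or_perm1 _ _ _ _ _ _
  · have hex : ∃ κ, forb m5 κ ∧ forb m6 κ := by
      have hall : ∀ κ, ¬ forb m5 κ → forb m6 (!κ) := by
        intro κ h
        by_contra h'
        exact hgood ⟨κ, h, h'⟩
      by_cases h5 : forb m5 true
      · have := hall false (huniq _ _ h5)
        exact ⟨true, h5, this⟩
      · have h6 := hall true h5
        refine ⟨false, ?_, h6⟩
        by_contra h5'
        exact huniq _ _ h6 (hall false h5')
    obtain ⟨κ, f5, f6⟩ := hex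
    have hboth : ¬ ((∀ u ∈ U, c u = κ) ∧ ∀ u ∈ W, c u = κ) := by
      intro hm
      rcases hE with h | h | h
      · exact h ⟨κ, hm⟩
      · exact h (f5.imp And.left And.left)
      · exact h (f6.imp And.left And.left)
    rcases f5 with ⟨e5, u5⟩ | ⟨e5, u5⟩ <;> rcases f6 with ⟨e6, u6⟩ | ⟨e6, u6⟩
    · refine good_of_parts (N := {m1, m3, m4}) (N' := {m2, m5, m6}) (κ := κ) hsg hc ?_
        (part3 h1 h3 hU hW hUW (by rw [h4, hW]) (by rw [h4]; exact fun h => hne h.1.symm)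
          (fun h => hboth ⟨u5, h.2⟩)) (part_same h2 e5 e6 u5)
      intro m
      rw [hM]
      simp only [Finset.mem_insert, Finset.mem_singleton]
      exact or_perm2 _ _ _ _ _ _
    · exact absurd ⟨u5, u6⟩ hboth
    · exact absurd ⟨u6, u5⟩ hboth
    · refine good_of_parts (N := {m1, m3, m2}) (N' := {m4, m5, m6}) (κ := κ) hsg hc ?_
        (part3 h1 h3 hU hW hUW (by rw [h2, hU]) (fun h => hboth ⟨h.2, u5⟩)
          (by rw [h2]; exact fun h => hne h.1)) (part_same h4 e5 e6 u5)
      intro m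
      rw [hM]
      simp only [Finset.mem_insert, Finset.mem_singleton]
      exact or_perm3 _ _ _ _ _ _

/-- `del G M` with all edges between `U` and `W` added -/
def joinG (G : SimpleGraph V) (M U W : Finset V) (hUW : Disjoint U W) : SimpleGraph V where
  Adj a b := (del G M).Adj a b ∨ (a ∈ U ∧ b ∈ W) ∨ (a ∈ W ∧ b ∈ U)
  symm := ⟨by
    rintro a b (h | h | h)
    · exact Or.inl h.symm
    · exact Or.inr (Or.inr ⟨h.2, h.1⟩)
    · exact Or.inr (Or.inl ⟨h.2, h.1⟩)⟩
  loopless := ⟨by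
    rintro a (h | h | h)
    · exact h.ne rfl
    · exact Finset.disjoint_left.1 hUW h.1 h.2
    · exact Finset.disjoint_left.1 hUW h.2 h.1⟩

theorem tight {T N W : Finset V} {u : V} {n : ℕ} (h : T ⊆ insert u (N ∪ W)) (hN : N.card ≤ n)
    (hW : W.card = 2) (hT : n + 3 ≤ T.card) :
    T.card = n + 3 ∧ W ⊆ T ∧ N ⊆ T ∧ Disjoint N W := by
  have h1 := Finset.card_le_card h
  have h2 := Finset.card_insert_le u (N ∪ W)
  have h3 := Finset.card_union_le N W
  have h4 := Finset.card_union_add_card_inter N W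
  have e : T = insert u (N ∪ W) := Finset.eq_of_subset_of_card_le h (by omega)
  refine ⟨by omega, ?_, ?_, ?_⟩
  · rw [e]; exact (Finset.subset_union_right).trans (Finset.subset_insert _ _)
  · rw [e]; exact (Finset.subset_union_left).trans (Finset.subset_insert _ _)
  · rw [Finset.disjoint_iff_inter_eq_empty, ← Finset.card_eq_zero]
    omega

end
end KpFree

set_option linter.unusedSectionVars false
namespace KpFree
section
open Classical
variable {V : Type*} [Fintype V]

theorem join_meet {G : SimpleGraph V} {M U W T : Finset V} {hUW : Disjoint U W} (H : Hyp G 6)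
    (hT : Clq (joinG G M U W hUW) T) (h7 : 7 ≤ T.card) :
    (∃ a ∈ T, a ∈ U) ∧ ∃ b ∈ T, b ∈ W := by
  constructor
  · by_contra hcon
    push Not at hcon
    have : Clq G T := by
      intro a ha b hb hab
      rcases hT a ha b hb hab with h | h | h
      · exact h.1
      · exact absurd h.1 (hcon a ha)
      · exact absurd h.2 (hcon b hb)
    have := H.2 T this
    omega
  · by_contra hcon
    push Not at hcon
    have : Clq G T := by
      intro a ha b hb hab
      rcases hT a ha b hb hab with h | h | h
      · exact h.1
      · exact absurd h.2 (hcon b hb)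
      · exact absurd h.1 (hcon a ha)
    have := H.2 T this
    omega

theorem join_nbU {G : SimpleGraph V} {M U W : Finset V} {hUW : Disjoint U W} {u v : V}
    (hu : u ∈ U) (h : (joinG G M U W hUW).Adj u v) : v ∈ sg G M u ∪ W := by
  rw [Finset.mem_union, mem_sg]
  rcases h with h | h | h
  · exact Or.inl ⟨h.1, h.2.2⟩
  · exact Or.inr h.2
  · exact absurd h.1 (Finset.disjoint_left.1 hUW hu)

theorem join_nbW {G : SimpleGraph V} {M U W : Finset V} {hUW : Disjoint U W} {u v : V}
    (hu : u ∈ W) (h : (joinG G M U W hUW).Adj u v) : v ∈ sg G M u ∪ U := by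
  rw [Finset.mem_union, mem_sg]
  rcases h with h | h | h
  · exact Or.inl ⟨h.1, h.2.2⟩
  · exact absurd hu (Finset.disjoint_left.1 hUW h.1)
  · exact Or.inr h.2

theorem join_cnU {G : SimpleGraph V} {M U W T : Finset V} {hUW : Disjoint U W} {u : V}
    (hT : Clq (joinG G M U W hUW) T) (hu : u ∈ U) (huT : u ∈ T) :
    T ⊆ insert u (sg G M u ∪ W) := by
  intro v hv
  rcases mem_cn.1 (clq_sub_cn hT huT hv) with h | h
  · rw [h]; exact Finset.mem_insert_self _ _
  · exact Finset.mem_insert_of_mem (join_nbU hu h)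

theorem join_cnW {G : SimpleGraph V} {M U W T : Finset V} {hUW : Disjoint U W} {u : V}
    (hT : Clq (joinG G M U W hUW) T) (hu : u ∈ W) (huT : u ∈ T) :
    T ⊆ insert u (sg G M u ∪ U) := by
  intro v hv
  rcases mem_cn.1 (clq_sub_cn hT huT hv) with h | h
  · rw [h]; exact Finset.mem_insert_self _ _
  · exact Finset.mem_insert_of_mem (join_nbW hu h)

theorem mixed {G : SimpleGraph V} {M U W T : Finset V} {hUW : Disjoint U W} (H : Hyp G 6)
    {c : V → Bool} (hc : Good (del G M) c)
    (hU : U.card = 2) (hW : W.card = 2)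
    (hsU : ∀ u ∈ U, (sg G M u).card ≤ 4) (hsW : ∀ u ∈ W, (sg G M u).card ≤ 4)
    (hT : Clq (joinG G M U W hUW) T) (h7 : 7 ≤ T.card) :
    ∃ c', Good (del G M) c' ∧ ¬ ∃ κ, ∀ v ∈ U, c' v = κ := by
  obtain ⟨⟨a, haT, haU⟩, ⟨b, hbT, hbW⟩⟩ := join_meet H hT h7
  have hWT := (tight (join_cnU hT haU haT) (hsU a haU) hW h7).2.1
  have hT7 := (tight (join_cnU hT haU haT) (hsU a haU) hW h7).1
  have hUT := (tight (join_cnW hT hbW hbT) (hsW b hbW) hU h7).2.1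
  have tU : ∀ u ∈ U, sg G M u ⊆ T ∧ Disjoint (sg G M u) W := fun u hu =>
    (tight (join_cnU hT hu (hUT hu)) (hsU u hu) hW h7).2.2
  have tW : ∀ u ∈ W, sg G M u ⊆ T ∧ Disjoint (sg G M u) U := fun u hu =>
    (tight (join_cnW hT hu (hWT hu)) (hsW u hu) hU h7).2.2
  obtain ⟨u0, u1, hu01, hUdef⟩ := Finset.card_eq_two.1 hU
  obtain ⟨w0, w1, hw01, hWdef⟩ := Finset.card_eq_two.1 hW
  let Y := T \ (U ∪ W)
  have hY : Y.card = 3 := by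
    have : (U ∪ W).card = 4 := by rw [Finset.card_union_of_disjoint hUW]; omega
    have h2 := Finset.card_sdiff_of_subset (Finset.union_subset hUT hWT)
    change (T \ (U ∪ W)).card = 3
    omega
  have memY : ∀ y, y ∈ Y ↔ y ∈ T ∧ y ∉ U ∧ y ∉ W := by
    intro y; simp only [Y, Finset.mem_sdiff, Finset.mem_union, not_or]
  have hc1 : ∃ c1 : V → Bool, (¬ ∃ κ, ∀ y ∈ Y, c1 y = κ) ∧ ∀ Q, Clq (del G M) Q → Q.card = 4 →
      (∀ v ∈ Q, v ∉ U ∧ v ∉ W) → ∀ κ, ¬ ∀ v ∈ Q, c1 v = κ := by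
    by_cases hm : ∃ κ, ∀ y ∈ Y, c y = κ
    · obtain ⟨κ, hm⟩ := hm
      obtain ⟨y1, hy1⟩ := Finset.card_pos.1 (by omega : 0 < Y.card)
      obtain ⟨y2, hy2, hy12⟩ := Finset.exists_mem_ne (by omega : 1 < Y.card) y1
      refine ⟨Function.update c y1 (!κ), ?_, ?_⟩
      · rintro ⟨μ, hμ⟩
        have e1 := hμ y1 hy1
        have e2 := hμ y2 hy2
        rw [Function.update_self] at e1
        rw [Function.update_of_ne hy12, hm y2 hy2] at e2
        rw [← e2] at e1
        simp at e1
      · intro Q hQ hQ4 hQd μ hμ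
        by_cases hyQ : y1 ∈ Q
        · have e1 := hμ y1 hyQ
          rw [Function.update_self] at e1
          have hQY : ∀ z ∈ Q, z ∈ T → z = y1 := by
            intro z hz hzT
            by_contra hne
            have e2 := hμ z hz
            rw [Function.update_of_ne hne, hm z ((memY z).2 ⟨hzT, hQd z hz⟩)] at e2
            rw [← e2] at e1
            simp at e1
          have hsub : (Q.erase y1) ∪ T ⊆ cn G y1 := by
            apply Finset.union_subset
            · exact (Finset.erase_subset _ _).trans (clq_sub_cn (clq_del hQ) hyQ)
            · intro t ht
              rw [mem_cn]
              by_cases hty : t = y1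
              · exact Or.inl hty
              · right
                have hy1' := (memY y1).1 hy1
                rcases hT y1 hy1'.1 t ht (Ne.symm hty) with h | h | h
                · exact h.1
                · exact absurd h.1 hy1'.2.1
                · exact absurd h.1 hy1'.2.2
          have hdis : Disjoint (Q.erase y1) T := by
            rw [Finset.disjoint_left]
            intro z hz hzT
            rw [Finset.mem_erase] at hz
            exact hz.1 (hQY z hz.2 hzT)
          have h1 := Finset.card_le_card hsub
          rw [Finset.card_union_of_disjoint hdis, Finset.card_erase_of_mem hyQ, card_cn] at h1
          have := H.1 y1
          omega
        · apply hc Q hQ hQ4 μ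
          intro v hv
          have := hμ v hv
          have hvy : v ≠ y1 := fun h => hyQ (h ▸ hv)
          rwa [Function.update_of_ne hvy] at this
    · exact ⟨c, hm, fun Q hQ hQ4 _ => hc Q hQ hQ4⟩
  obtain ⟨c1, hc1Y, hc1Q⟩ := hc1
  have hU2 : ∀ u, u ∈ U ↔ u = u0 ∨ u = u1 := by intro u; simp [hUdef]
  have hW2 : ∀ u, u ∈ W ↔ u = w0 ∨ u = w1 := by intro u; simp [hWdef]
  have hdj : ∀ u, u ∈ U → u ∉ W := fun u hu => Finset.disjoint_left.1 hUW hu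
  let c2 : V → Bool := fun v => if v ∈ U then decide (v = u0) else
    if v ∈ W then decide (v = w0) else c1 v
  have c2U : ∀ u ∈ U, c2 u = decide (u = u0) := fun u hu => by simp only [c2, if_pos hu]
  have c2W : ∀ u ∈ W, c2 u = decide (u = w0) := fun u hu => by
    simp only [c2, if_neg (fun h => hdj u h hu), if_pos hu]
  have c2o : ∀ u, u ∉ U → u ∉ W → c2 u = c1 u := fun u hu hu' => by
    simp only [c2, if_neg hu, if_neg hu']
  have uU : ∀ u ∈ U, ∀ u' ∈ U, c2 u = c2 u' → u = u' := by
    intro u hu u' hu' h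
    rw [c2U u hu, c2U u' hu', decide_eq_decide] at h
    rcases (hU2 u).1 hu with e1 | e1 <;> rcases (hU2 u').1 hu' with e2 | e2
    · rw [e1, e2]
    · exact e1.trans (h.1 e1).symm
    · exact (h.2 e2).trans e2.symm
    · rw [e1, e2]
  have uW : ∀ u ∈ W, ∀ u' ∈ W, c2 u = c2 u' → u = u' := by
    intro u hu u' hu' h
    rw [c2W u hu, c2W u' hu', decide_eq_decide] at h
    rcases (hW2 u).1 hu with e1 | e1 <;> rcases (hW2 u').1 hu' with e2 | e2
    · rw [e1, e2]
    · exact e1.trans (h.1 e1).symm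
    · exact (h.2 e2).trans e2.symm
    · rw [e1, e2]
  have fin : ∀ Q : Finset V, Q.card = 4 → ∀ κ, (∀ v ∈ Q, c2 v = κ) → ∀ u ∈ Q,
      (∀ v ∈ Q, v ≠ u → v ∈ Y) → False := by
    intro Q hQ4 κ hκ u hu hv
    have h1 : Q.erase u ⊆ Y := by
      intro v hv'
      rw [Finset.mem_erase] at hv'
      exact hv v hv'.2 hv'.1
    have h2 : Q.erase u = Y := Finset.eq_of_subset_of_card_le h1
      (by rw [Finset.card_erase_of_mem hu]; omega)
    apply hc1Y
    refine ⟨κ, fun y hy => ?_⟩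
    have hy' := (memY y).1 hy
    rw [← c2o y hy'.2.1 hy'.2.2]
    rw [← h2] at hy
    exact hκ y (Finset.mem_of_mem_erase hy)
  refine ⟨c2, ?_, ?_⟩
  · intro Q hQ hQ4 κ hκ
    have hQM := clq_del_disj hQ (by omega)
    by_cases hQU : ∃ u ∈ Q, u ∈ U
    · obtain ⟨u, huQ, huU⟩ := hQU
      apply fin Q hQ4 κ hκ u huQ
      intro v hv hvu
      have hadj : v ∈ sg G M u := mem_sg.2 ⟨(hQ u huQ v hv (Ne.symm hvu)).1, hQM v hv⟩
      rw [memY]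
      refine ⟨(tU u huU).1 hadj, fun h => hvu (uU v h u huU ?_), ?_⟩
      · rw [hκ v hv, hκ u huQ]
      · exact Finset.disjoint_left.1 (tU u huU).2 hadj
    by_cases hQW : ∃ u ∈ Q, u ∈ W
    · obtain ⟨u, huQ, huW⟩ := hQW
      apply fin Q hQ4 κ hκ u huQ
      intro v hv hvu
      have hadj : v ∈ sg G M u := mem_sg.2 ⟨(hQ u huQ v hv (Ne.symm hvu)).1, hQM v hv⟩
      rw [memY]
      refine ⟨(tW u huW).1 hadj, ?_, fun h => hvu (uW v h u huW ?_)⟩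
      · exact Finset.disjoint_left.1 (tW u huW).2 hadj
      · rw [hκ v hv, hκ u huQ]
    · push Not at hQU hQW
      apply hc1Q Q hQ hQ4 (fun v hv => ⟨hQU v hv, hQW v hv⟩) κ
      intro v hv
      rw [← c2o v (hQU v hv) (hQW v hv)]
      exact hκ v hv
  · rintro ⟨κ, hκ⟩
    have h0 : u0 ∈ U := (hU2 _).2 (Or.inl rfl)
    have h1 : u1 ∈ U := (hU2 _).2 (Or.inr rfl)
    exact hu01 (uU u0 h0 u1 h1 ((hκ _ h0).trans (hκ _ h1).symm))

theorem sg_card_add {G : SimpleGraph V} (H : Hyp G 6) {M A : Finset V} {u : V} (hA : A ⊆ M)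
    (hu : ∀ a ∈ A, G.Adj u a) : (sg G M u).card + A.card ≤ 7 := by
  have h1 : Disjoint (sg G M u) A := by
    rw [Finset.disjoint_left]
    intro a ha haA
    exact (mem_sg.1 ha).2 (hA haA)
  have h2 : sg G M u ∪ A ⊆ nb G u := by
    apply Finset.union_subset Finset.sdiff_subset
    intro a ha
    exact mem_nb.2 (hu a ha)
  have h3 := Finset.card_le_card h2
  rw [Finset.card_union_of_disjoint h1] at h3
  exact h3.trans (H.1 u)

theorem rPrime {G : SimpleGraph V} (H : Hyp G 6)
    (IH : ∀ G' : SimpleGraph V, Hyp G' 6 → (supp G').card < (supp G).card → ∃ c, Good G' c)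
    {M U W : Finset V} {m1 m2 m3 m4 m5 m6 : V}
    (hM : M = {m1, m2, m3, m4, m5, m6}) (hM6 : M.card = 6) (hMc : Clq G M)
    (h12 : m1 ≠ m2) (h34 : m3 ≠ m4) (h15 : m1 ≠ m5) (h16 : m1 ≠ m6) (h25 : m2 ≠ m5)
    (h26 : m2 ≠ m6) (h35 : m3 ≠ m5) (h36 : m3 ≠ m6) (h45 : m4 ≠ m5) (h46 : m4 ≠ m6)
    (h56 : m5 ≠ m6)
    (h1 : sg G M m1 = U) (h2 : sg G M m2 = U) (h3 : sg G M m3 = W) (h4 : sg G M m4 = W)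
    (hU : U.card = 2) (hW : W.card = 2) (hUW : Disjoint U W) (cU : Clq G U) (cW : Clq G W) :
    ∃ c, Good G c := by
  have mM : ∀ m, m ∈ M ↔ m = m1 ∨ m = m2 ∨ m = m3 ∨ m = m4 ∨ m = m5 ∨ m = m6 := by
    intro m; rw [hM]; simp only [Finset.mem_insert, Finset.mem_singleton]
  have M1 : m1 ∈ M := (mM _).2 (by simp)
  have M2 : m2 ∈ M := (mM _).2 (by simp)
  have M3 : m3 ∈ M := (mM _).2 (by simp)
  have M4 : m4 ∈ M := (mM _).2 (by simp)
  have M5 : m5 ∈ M := (mM _).2 (by simp)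
  have M6 : m6 ∈ M := (mM _).2 (by simp)
  have hsg : ∀ m ∈ M, (sg G M m).card ≤ 2 := by
    intro m hm
    have := sg_card_add H (A := M.erase m) (u := m) (Finset.erase_subset _ _)
      (fun a ha => hMc m hm a (Finset.mem_of_mem_erase ha) (Finset.ne_of_mem_erase ha).symm)
    rw [Finset.card_erase_of_mem hm] at this
    omega
  have m1s : m1 ∈ supp G := mem_supp.2 ⟨m2, hMc m1 M1 m2 M2 h12⟩
  have adjS : ∀ S m, sg G M m = S → ∀ u ∈ S, G.Adj u m := by
    intro S m h u hu
    rw [← h] at hu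
    exact (mem_sg.1 hu).1.symm
  have hUM : ∀ u ∈ U, u ∉ M := by
    intro u hu; rw [← h1] at hu; exact (mem_sg.1 hu).2
  have hWM : ∀ u ∈ W, u ∉ M := by
    intro u hu; rw [← h3] at hu; exact (mem_sg.1 hu).2
  obtain ⟨c, hc⟩ := IH (del G M) (hyp_del H M) (by
    apply Finset.card_lt_card
    refine (Finset.ssubset_iff_of_subset ?_).2 ⟨m1, m1s, ?_⟩
    · intro v hv
      obtain ⟨w, hw⟩ := mem_supp.1 hv
      exact mem_supp.2 ⟨w, hw.1⟩
    · intro h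
      obtain ⟨w, hw⟩ := mem_supp.1 h
      exact hw.2.1 M1)
  by_cases hboth : (sg G M m5 = U ∨ sg G M m5 = W) ∧ (sg G M m6 = U ∨ sg G M m6 = W)
  swap
  · exact extendM hM hsg h1 h2 h3 h4 hU hW hUW hc (Or.inr (not_and_or.1 hboth))
  -- degrees
  have sub2 : ∀ a ∈ M, ∀ b ∈ M, ({a, b} : Finset V) ⊆ M := by
    intro a ha b hb x hx
    simp only [Finset.mem_insert, Finset.mem_singleton] at hx
    rcases hx with rfl | rfl <;> assumption
  have deg2 : ∀ S a b, a ∈ M → b ∈ M → a ≠ b → sg G M a = S → sg G M b = S →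
      ∀ u ∈ S, (sg G M u).card ≤ 5 := by
    intro S a b ha hb hab e1 e2 u hu
    have := sg_card_add H (A := {a, b}) (u := u) (sub2 a ha b hb) (by
      intro x hx
      simp only [Finset.mem_insert, Finset.mem_singleton] at hx
      rcases hx with rfl | rfl
      · exact adjS S _ e1 u hu
      · exact adjS S _ e2 u hu)
    rw [Finset.card_pair hab] at this
    omega
  have deg3 : ∀ S a b d, a ∈ M → b ∈ M → d ∈ M → a ≠ b → a ≠ d → b ≠ d → sg G M a = S →
      sg G M b = S → sg G M d = S → ∀ u ∈ S, (sg G M u).card ≤ 4 := by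
    intro S a b d ha hb hd hab had hbd e1 e2 e3 u hu
    have := sg_card_add H (A := {a, b, d}) (u := u) (by
      intro x hx
      simp only [Finset.mem_insert, Finset.mem_singleton] at hx
      rcases hx with rfl | rfl | rfl <;> assumption) (by
      intro x hx
      simp only [Finset.mem_insert, Finset.mem_singleton] at hx
      rcases hx with rfl | rfl | rfl
      · exact adjS S _ e1 u hu
      · exact adjS S _ e2 u hu
      · exact adjS S _ e3 u hu)
    rw [Finset.card_eq_three.2 ⟨a, b, d, hab, had, hbd, rfl⟩] at this
    omega
  have deg4 : ∀ S a b, a ∈ M → b ∈ M → a ≠ b → a ≠ m5 → a ≠ m6 → b ≠ m5 → b ≠ m6 →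
      sg G M a = S → sg G M b = S → sg G M m5 = S → sg G M m6 = S →
      ∀ u ∈ S, (sg G M u).card ≤ 3 := by
    intro S a b ha hb hab ha5 ha6 hb5 hb6 e1 e2 e5 e6 u hu
    have := sg_card_add H (A := {a, b, m5, m6}) (u := u) (by
      intro x hx
      simp only [Finset.mem_insert, Finset.mem_singleton] at hx
      rcases hx with rfl | rfl | rfl | rfl <;> assumption) (by
      intro x hx
      simp only [Finset.mem_insert, Finset.mem_singleton] at hx
      rcases hx with rfl | rfl | rfl | rfl
      · exact adjS S _ e1 u hu
      · exact adjS S _ e2 u hu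
      · exact adjS S _ e5 u hu
      · exact adjS S _ e6 u hu)
    rw [Finset.card_insert_of_notMem (by simp [hab, ha5, ha6]),
      Finset.card_eq_three.2 ⟨b, m5, m6, hb5, hb6, h56, rfl⟩] at this
    omega
  by_cases hT : ∃ T, Clq (joinG G M U W hUW) T ∧ 7 ≤ T.card
  · obtain ⟨T, hT, h7⟩ := hT
    obtain ⟨⟨a, haT, haU⟩, ⟨b, hbT, hbW⟩⟩ := join_meet H hT h7
    have fin : (∀ u ∈ U, (sg G M u).card ≤ 4) → (∀ u ∈ W, (sg G M u).card ≤ 4) →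
        ∃ c, Good G c := by
      intro d1 d2
      obtain ⟨c', hc', hn⟩ := mixed H hc hU hW d1 d2 hT h7
      exact extendM hM hsg h1 h2 h3 h4 hU hW hUW hc'
        (Or.inl fun ⟨κ, hκ⟩ => hn ⟨κ, hκ.1⟩)
    obtain ⟨e5 | e5, e6 | e6⟩ := hboth
    · have h := deg4 U m1 m2 M1 M2 h12 h15 h16 h25 h26 h1 h2 e5 e6 a haU
      have := (tight (join_cnU hT haU haT) h hW (by omega)).1
      omega
    · exact fin (deg3 U m1 m2 m5 M1 M2 M5 h12 h15 h25 h1 h2 e5)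
        (deg3 W m3 m4 m6 M3 M4 M6 h34 h36 h46 h3 h4 e6)
    · exact fin (deg3 U m1 m2 m6 M1 M2 M6 h12 h16 h26 h1 h2 e6)
        (deg3 W m3 m4 m5 M3 M4 M5 h34 h35 h45 h3 h4 e5)
    · have h := deg4 W m3 m4 M3 M4 h34 h35 h36 h45 h46 h3 h4 e5 e6 b hbW
      have := (tight (join_cnW hT hbW hbT) h hU (by omega)).1
      omega
  · push Not at hT
    have degU := deg2 U m1 m2 M1 M2 h12 h1 h2
    have degW := deg2 W m3 m4 M3 M4 h34 h3 h4
    obtain ⟨c', hc'⟩ := IH (joinG G M U W hUW) ⟨by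
        intro v
        by_cases hvU : v ∈ U
        · have s : nb (joinG G M U W hUW) v ⊆ sg G M v ∪ W := fun w hw =>
            join_nbU hvU (mem_nb.1 hw)
          have := Finset.card_le_card s
          have := Finset.card_union_le (sg G M v) W
          have := degU v hvU
          omega
        by_cases hvW : v ∈ W
        · have s : nb (joinG G M U W hUW) v ⊆ sg G M v ∪ U := fun w hw =>
            join_nbW hvW (mem_nb.1 hw)
          have := Finset.card_le_card s
          have := Finset.card_union_le (sg G M v) U
          have := degW v hvW
          omega
        · refine le_trans (Finset.card_le_card ?_) (H.1 v)
          intro w hw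
          rw [mem_nb] at hw ⊢
          rcases hw with h | h | h
          · exact h.1
          · exact absurd h.1 hvU
          · exact absurd h.1 hvW, fun Q hQ => by have := hT Q hQ; omega⟩ (by
      apply Finset.card_lt_card
      refine (Finset.ssubset_iff_of_subset ?_).2 ⟨m1, m1s, ?_⟩
      · intro v hv
        obtain ⟨w, hw⟩ := mem_supp.1 hv
        rcases hw with h | h | h
        · exact mem_supp.2 ⟨w, h.1⟩
        · exact mem_supp.2 ⟨m1, adjS U m1 h1 v h.1⟩
        · exact mem_supp.2 ⟨m3, adjS W m3 h3 v h.1⟩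
      · intro h
        obtain ⟨w, hw⟩ := mem_supp.1 h
        rcases hw with h | h | h
        · exact h.2.1 M1
        · exact hUM m1 h.1 M1
        · exact hWM m1 h.1 M1)
    have hgd : Good (del G M) c' := fun Q hQ => hc' Q (fun a ha b hb hab => Or.inl (hQ a ha b hb hab))
    refine extendM hM hsg h1 h2 h3 h4 hU hW hUW hgd (Or.inl ?_)
    rintro ⟨κ, hκU, hκW⟩
    apply hc' (U ∪ W) _ (by rw [Finset.card_union_of_disjoint hUW]; omega) κ
    · intro v hv
      rcases Finset.mem_union.1 hv with hv | hv
      · exact hκU v hv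
      · exact hκW v hv
    · intro a ha b hb hab
      rcases Finset.mem_union.1 ha with ha | ha <;> rcases Finset.mem_union.1 hb with hb | hb
      · exact Or.inl ⟨cU a ha b hb hab, hUM a ha, hUM b hb⟩
      · exact Or.inr (Or.inl ⟨ha, hb⟩)
      · exact Or.inr (Or.inr ⟨ha, hb⟩)
      · exact Or.inl ⟨cW a ha b hb hab, hWM a ha, hWM b hb⟩

end
end KpFree

set_option linter.unusedSectionVars false
namespace KpFree
section
open Classical
variable {V : Type*} [Fintype V]

section four
variable {F : SimpleGraph V}

theorem cls_disj {e : ℕ} (H : Hyp F e) {x y : V} (hx : Full F e x) (hy : Full F e y)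
    (hne : cls F e x ≠ cls F e y) : Disjoint (cls F e x) (cls F e y) := by
  rw [Finset.disjoint_left]
  intro z h1 h2
  exact hne (cls_eq_of_mem H hx hy h1 h2)

theorem card_cls4 (H : Hyp F 4) {x : V} (hx : Full F 4 x) : (cls F 4 x).card = 2 := by
  have := cls_card H hx
  omega

theorem big_cls_union (H : Hyp F 4) {x y : V} (hx : Full F 4 x) (hy : Full F 4 y)
    (hne : cls F 4 x ≠ cls F 4 y) {R : Finset V} (hR : Big F 4 R) (hxR : x ∈ R) (hyR : y ∈ R) :
    cls F 4 x ∪ cls F 4 y = R := by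
  apply Finset.eq_of_subset_of_card_le (Finset.union_subset (cls_sub hR hxR) (cls_sub hR hyR))
  rw [Finset.card_union_of_disjoint (cls_disj H hx hy hne), card_cls4 H hx, card_cls4 H hy, hR.2]

theorem adj_cls (H : Hyp F 4) {x y : V} (hx : Full F 4 x) (hy : Full F 4 y)
    (hne : cls F 4 x ≠ cls F 4 y) (hxy : F.Adj x y) : Big F 4 (cls F 4 x ∪ cls F 4 y) := by
  obtain ⟨R, hR, hxR, hyR⟩ := adj_big H hx hxy
  rw [big_cls_union H hx hy hne hR hxR hyR]
  exact hR

theorem resid (H : Hyp F 4) {x y : V} (hx : Full F 4 x) (hy : Full F 4 y)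
    (hne : cls F 4 x ≠ cls F 4 y) (hxy : F.Adj x y) :
    Clq F (cn F x \ (cls F 4 x ∪ cls F 4 y)) ∧
    (cn F x \ (cls F 4 x ∪ cls F 4 y)).card = 2 := by
  have hB := adj_cls H hx hy hne hxy
  have hsub : cls F 4 x ∪ cls F 4 y ⊆ cn F x :=
    clq_sub_cn hB.1 (Finset.mem_union_left _ (mem_cls_self F 4 x))
  constructor
  · obtain ⟨Q, R, hW⟩ := id hx
    have hcn := wit_cn H hW
    have hy' : y ∈ Q ∪ R := by rw [hcn, mem_cn]; exact Or.inr hxy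
    rcases Finset.mem_union.1 hy' with hyQ | hyR
    · have e := big_cls_union H hx hy hne hW.1 hW.2.2.1 hyQ
      apply clq_mono hW.2.1.1
      intro z hz
      rw [e, ← hcn, Finset.mem_sdiff, Finset.mem_union] at hz
      exact hz.1.resolve_left hz.2
    · have e := big_cls_union H hx hy hne hW.2.1 hW.2.2.2.1 hyR
      apply clq_mono hW.1.1
      intro z hz
      rw [e, ← hcn, Finset.mem_sdiff, Finset.mem_union] at hz
      exact hz.1.resolve_right hz.2
  · rw [Finset.card_sdiff_of_subset hsub, full_cn_card H hx, hB.2]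

theorem adj_of_cn_eq {x y z : V} (h : cn F x = cn F y) (hxz : F.Adj x z) (hne : z ≠ y) :
    F.Adj y z := by
  have : z ∈ cn F y := by rw [← h, mem_cn]; exact Or.inr hxz
  rcases mem_cn.1 this with h | h
  · exact absurd h hne
  · exact h

/-- the set of chosen representatives among vertices whose closed neighbourhood is full -/
theorem exists_S0 (F : SimpleGraph V) : ∃ S0 : Finset V, Indep F S0 ∧
    (∀ s ∈ S0, Full F 4 s ∧ ∀ y, F.Adj s y → Full F 4 y) ∧
    ∀ x, Full F 4 x → (∀ y, F.Adj x y → Full F 4 y) → x ∈ S0 ∨ ∃ s ∈ S0, F.Adj x s := by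
  obtain ⟨S, ⟨h1, h2⟩, hmax⟩ := exists_max (fun S0 => Indep F S0 ∧
    (∀ s ∈ S0, Full F 4 s ∧ ∀ y, F.Adj s y → Full F 4 y)) ∅
    ⟨fun a ha => by simp at ha, fun a ha => by simp at ha⟩
  refine ⟨S, h1, h2, fun x hx hx' => ?_⟩
  by_contra hcon
  push Not at hcon
  have := hmax (insert x S) ⟨by
    intro a ha b hb hab
    rcases Finset.mem_insert.1 ha with ha1 | ha1 <;> rcases Finset.mem_insert.1 hb with hb1 | hb1
    · exact hab.ne (ha1.trans hb1.symm)
    · exact hcon.2 b hb1 (ha1 ▸ hab)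
    · exact hcon.2 a ha1 (hb1 ▸ hab.symm)
    · exact h1 a ha1 b hb1 hab, by
    intro s hs
    rcases Finset.mem_insert.1 hs with rfl | hs
    · exact ⟨hx, hx'⟩
    · exact h2 s hs⟩
  rw [Finset.card_insert_of_notMem hcon.1] at this
  omega

def Rr (F : SimpleGraph V) (S0 : Finset V) (x : V) : Prop :=
  Full F 4 x ∧ ∀ s ∈ S0, s ∉ cls F 4 x

theorem rr_of_mem (H : Hyp F 4) {S0 : Finset V} {x y : V} (hx : Rr F S0 x)
    (hy : y ∈ cls F 4 x) : Rr F S0 y := by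
  obtain ⟨h1, h2, -⟩ := full_of_mem H hx.1 hy
  exact ⟨h1, by rw [h2]; exact hx.2⟩

theorem one_nbr (H : Hyp F 4) {S0 : Finset V}
    (hS0 : ∀ x, Full F 4 x → (∀ y, F.Adj x y → Full F 4 y) → x ∈ S0 ∨ ∃ s ∈ S0, F.Adj x s)
    {x y z : V} (hx : Rr F S0 x) (hy : Rr F S0 y) (hz : Rr F S0 z) (hxy : F.Adj x y)
    (hxz : F.Adj x z) (hyx : cls F 4 x ≠ cls F 4 y) (hzx : cls F 4 x ≠ cls F 4 z) :
    cls F 4 y = cls F 4 z := by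
  by_contra hne
  have sub : cls F 4 x ∪ cls F 4 y ∪ cls F 4 z ⊆ cn F x := by
    have a1 := clq_sub_cn (adj_cls H hx.1 hy.1 hyx hxy).1
      (Finset.mem_union_left _ (mem_cls_self F 4 x))
    have a2 := clq_sub_cn (adj_cls H hx.1 hz.1 hzx hxz).1
      (Finset.mem_union_left _ (mem_cls_self F 4 x))
    exact Finset.union_subset a1 (Finset.subset_union_right.trans a2)
  have eq : cls F 4 x ∪ cls F 4 y ∪ cls F 4 z = cn F x := by
    apply Finset.eq_of_subset_of_card_le sub
    rw [full_cn_card H hx.1, Finset.card_union_of_disjoint, Finset.card_union_of_disjoint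
      (cls_disj H hx.1 hy.1 hyx), card_cls4 H hx.1, card_cls4 H hy.1, card_cls4 H hz.1]
    rw [Finset.disjoint_union_left]
    exact ⟨cls_disj H hx.1 hz.1 hzx, cls_disj H hy.1 hz.1 hne⟩
  have hall : ∀ w ∈ cn F x, Rr F S0 w := by
    intro w hw
    rw [← eq, Finset.mem_union, Finset.mem_union] at hw
    rcases hw with (h | h) | h
    · exact rr_of_mem H hx h
    · exact rr_of_mem H hy h
    · exact rr_of_mem H hz h
  rcases hS0 x hx.1 (fun w hw => (hall w (mem_cn.2 (Or.inr hw))).1) with h | ⟨s, hs, h⟩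
  · exact hx.2 x h (mem_cls_self F 4 x)
  · exact (hall s (mem_cn.2 (Or.inr h))).2 s hs (mem_cls_self F 4 s)

end four

noncomputable def Lo (G F : SimpleGraph V) (a : V) : Finset V := nb G a \ nb F a

theorem mem_Lo {G F : SimpleGraph V} {a b : V} : b ∈ Lo G F a ↔ G.Adj a b ∧ ¬ F.Adj a b := by
  simp [Lo, mem_nb]

def Blk (G F : SimpleGraph V) (a b : V) : Prop :=
  F.Adj a b ∧ Lo G F a = Lo G F b ∧ ∃ i ∈ Lo G F a, ∃ j ∈ Lo G F a, G.Adj i j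

theorem blk_symm {G F : SimpleGraph V} {a b : V} (h : Blk G F a b) : Blk G F b a :=
  ⟨h.1.symm, h.2.1.symm, by rw [← h.2.1]; exact h.2.2⟩

theorem Lo_card {G F : SimpleGraph V} (HG : Hyp G 6) (HF : Hyp F 4) (hFG : ∀ a b, F.Adj a b → G.Adj a b)
    {a : V} (ha : Full F 4 a) : (Lo G F a).card ≤ 2 := by
  have h1 := full_cn_card HF ha
  rw [card_cn] at h1
  have h2 : nb F a ⊆ nb G a := fun w hw => mem_nb.2 (hFG _ _ (mem_nb.1 hw))
  rw [Lo, Finset.card_sdiff_of_subset h2]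
  have := HG.1 a
  omega

theorem caseK6 {G F : SimpleGraph V} (HG : Hyp G 6) (HF : Hyp F 4)
    (hFG : ∀ a b, F.Adj a b → G.Adj a b)
    (IH : ∀ G' : SimpleGraph V, Hyp G' 6 → (supp G').card < (supp G).card → ∃ c, Good G' c)
    {x x' s s' i j : V} (hx : Full F 4 x) (hs : Full F 4 s) (hxs : F.Adj x s)
    (hne : cls F 4 x ≠ cls F 4 s) (hx' : x' ∈ cls F 4 x) (hxx' : x ≠ x')
    (hs' : s' ∈ cls F 4 s) (hss' : s ≠ s') (hij : G.Adj i j)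
    (L1 : Lo G F x = {i, j}) (L2 : Lo G F x' = {i, j}) (L3 : Lo G F s = {i, j})
    (L4 : Lo G F s' = {i, j}) : ∃ c, Good G c := by
  have hB := adj_cls HF hx hs hne hxs
  set C := cls F 4 x ∪ cls F 4 s with hC
  have cx : cls F 4 x = {x, x'} := by
    symm
    apply Finset.eq_of_subset_of_card_le
    · intro u hu
      simp only [Finset.mem_insert, Finset.mem_singleton] at hu
      rcases hu with rfl | rfl
      · exact mem_cls_self F 4 _
      · exact hx'
    · rw [card_cls4 HF hx, Finset.card_pair hxx']
  have cs : cls F 4 s = {s, s'} := by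
    symm
    apply Finset.eq_of_subset_of_card_le
    · intro u hu
      simp only [Finset.mem_insert, Finset.mem_singleton] at hu
      rcases hu with rfl | rfl
      · exact mem_cls_self F 4 _
      · exact hs'
    · rw [card_cls4 HF hs, Finset.card_pair hss']
  have memC : ∀ z, z ∈ C ↔ z = x ∨ z = x' ∨ z = s ∨ z = s' := by
    intro z
    rw [hC, cx, cs]
    simp only [Finset.mem_union, Finset.mem_insert, Finset.mem_singleton, or_assoc]
  have LC : ∀ z ∈ C, Lo G F z = {i, j} := by
    intro z hz
    rcases (memC z).1 hz with rfl | rfl | rfl | rfl <;> assumption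
  have LC' : ∀ z ∈ C, ∀ w, (G.Adj z w ∧ ¬ F.Adj z w) ↔ w = i ∨ w = j := by
    intro z hz w
    rw [← mem_Lo, LC z hz]; simp
  have hiC : ∀ z ∈ C, z ≠ i := fun z hz => (((LC' z hz i).2 (Or.inl rfl)).1).ne
  have hjC : ∀ z ∈ C, z ≠ j := fun z hz => (((LC' z hz j).2 (Or.inr rfl)).1).ne
  let M : Finset V := {x, x', s, s', i, j}
  have memM : ∀ z, z ∈ M ↔ z ∈ C ∨ z = i ∨ z = j := by
    intro z
    rw [memC]
    simp only [M, Finset.mem_insert, Finset.mem_singleton, or_assoc]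
  have hiC' : i ∉ C := fun h => hiC i h rfl
  have hjC' : j ∉ C := fun h => hjC j h rfl
  have hMC : M = insert i (insert j C) := by
    ext z
    rw [memM, Finset.mem_insert, Finset.mem_insert]
    constructor
    · rintro (h | h | h)
      · exact Or.inr (Or.inr h)
      · exact Or.inl h
      · exact Or.inr (Or.inl h)
    · rintro (h | h | h)
      · exact Or.inr (Or.inl h)
      · exact Or.inr (Or.inr h)
      · exact Or.inl h
  have hCG : Clq G C := fun a ha b hb hab => hFG a b (hB.1 a ha b hb hab)
  have hMc : Clq G M := by
    rw [hMC]
    have hjc : Clq G (insert j C) := clq_insert hCG (fun z hz =>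
      mem_cn.2 (Or.inr ((LC' z hz j).2 (Or.inr rfl)).1.symm))
    apply clq_insert hjc
    intro z hz
    rcases Finset.mem_insert.1 hz with rfl | hz
    · exact mem_cn.2 (Or.inr hij)
    · exact mem_cn.2 (Or.inr ((LC' z hz i).2 (Or.inl rfl)).1.symm)
  have hM6 : M.card = 6 := by
    rw [hMC, Finset.card_insert_of_notMem, Finset.card_insert_of_notMem hjC', hB.2]
    rw [Finset.mem_insert, not_or]
    exact ⟨hij.ne, hiC'⟩
  have hsg : ∀ z ∈ C, sg G M z = cn F z \ C := by
    intro z hz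
    ext w
    rw [mem_sg, Finset.mem_sdiff, mem_cn, memM]
    constructor
    · rintro ⟨h1, h2⟩
      push Not at h2
      refine ⟨Or.inr ?_, h2.1⟩
      by_contra h3
      rcases (LC' z hz w).1 ⟨h1, h3⟩ with h | h
      · exact h2.2.1 h
      · exact h2.2.2 h
    · rintro ⟨h1, h2⟩
      have h1' : F.Adj z w := by
        rcases h1 with h | h
        · exact absurd (h ▸ hz) h2
        · exact h
      refine ⟨hFG _ _ h1', ?_⟩
      rintro (h | h)
      · exact h2 h
      · exact ((LC' z hz w).2 h).2 h1'
  have xC : x ∈ C := (memC x).2 (Or.inl rfl)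
  have xC' : x' ∈ C := (memC x').2 (Or.inr (Or.inl rfl))
  have sC : s ∈ C := (memC s).2 (Or.inr (Or.inr (Or.inl rfl)))
  have sC' : s' ∈ C := (memC s').2 (Or.inr (Or.inr (Or.inr rfl)))
  have r1 := resid HF hx hs hne hxs
  have r2 := resid HF hs hx hne.symm hxs.symm
  rw [Finset.union_comm] at r2
  have cnx := (full_of_mem HF hx hx').2.2
  have cns := (full_of_mem HF hs hs').2.2
  refine rPrime HG IH (M := M) (U := cn F x \ C) (W := cn F s \ C) (m1 := x) (m2 := x') (m3 := s)
    (m4 := s') (m5 := i) (m6 := j) rfl hM6 hMc hxx' hss' (hiC _ xC) (hjC _ xC) (hiC _ xC')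
    (hjC _ xC') (hiC _ sC) (hjC _ sC) (hiC _ sC') (hjC _ sC') hij.ne (hsg _ xC)
    (by rw [hsg _ xC', cnx]) (hsg _ sC) (by rw [hsg _ sC', cns]) r1.2 r2.2 ?_
    (fun a ha b hb hab => hFG _ _ (r1.1 a ha b hb hab))
    (fun a ha b hb hab => hFG _ _ (r2.1 a ha b hb hab))
  rw [Finset.disjoint_left]
  intro w hw hw'
  rw [Finset.mem_sdiff] at hw hw'
  have hcl : Clq F (insert w C) := by
    apply clq_insert hB.1
    intro z hz
    have hzw : w ∈ cn F z := by
      rcases (memC z).1 hz with h | h | h | h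
      · rw [h]; exact hw.1
      · rw [h, cnx]; exact hw.1
      · rw [h]; exact hw'.1
      · rw [h, cns]; exact hw'.1
    rw [mem_cn] at hzw ⊢
    rcases hzw with h | h
    · exact Or.inl h.symm
    · exact Or.inr h.symm
  have := HF.2 _ hcl
  rw [Finset.card_insert_of_notMem hw.2, hB.2] at this
  omega

theorem other_mem {F : SimpleGraph V} (HF : Hyp F 4) {x : V} (hx : Full F 4 x) :
    ∃ x' ∈ cls F 4 x, x ≠ x' := by
  obtain ⟨y, hy, hyx⟩ := Finset.exists_mem_ne (by rw [card_cls4 HF hx]; omega) x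
  exact ⟨y, hy, hyx.symm⟩

theorem exists_S {G F : SimpleGraph V} (HG : Hyp G 6) (HF : Hyp F 4)
    (hFG : ∀ a b, F.Adj a b → G.Adj a b)
    (IH : ∀ G' : SimpleGraph V, Hyp G' 6 → (supp G').card < (supp G).card → ∃ c, Good G' c)
    {S0 : Finset V}
    (hS0 : ∀ x, Full F 4 x → (∀ y, F.Adj x y → Full F 4 y) → x ∈ S0 ∨ ∃ s ∈ S0, F.Adj x s)
    (hno : ¬ ∃ c, Good G c) :
    ∃ S : Finset V, (∀ s ∈ S, Rr F S0 s) ∧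
      (∀ s ∈ S, ∀ t ∈ S, cls F 4 s = cls F 4 t → s = t) ∧
      (∀ s ∈ S, ∀ t ∈ S, ¬ Blk G F s t) ∧
      ∀ x, Rr F S0 x → ∃ s ∈ S, s ∈ cls F 4 x := by
  obtain ⟨S, ⟨h1, h2, h3⟩, hmax⟩ := exists_max (fun S => (∀ s ∈ S, Rr F S0 s) ∧
      (∀ s ∈ S, ∀ t ∈ S, cls F 4 s = cls F 4 t → s = t) ∧
      (∀ s ∈ S, ∀ t ∈ S, ¬ Blk G F s t)) ∅ (by simp)
  refine ⟨S, h1, h2, h3, ?_⟩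
  intro x hx
  by_contra hcon
  push Not at hcon
  have hcne : ∀ s ∈ S, cls F 4 x ≠ cls F 4 s := by
    intro s hs h
    exact hcon s hs (h ▸ mem_cls_self F 4 s)
  have blkex : ∀ z ∈ cls F 4 x, ∃ s ∈ S, Blk G F z s := by
    intro z hz
    by_contra hb
    push Not at hb
    have hzS : z ∉ S := fun h => hcon z h hz
    have hzc := (full_of_mem HF hx.1 hz).2.1
    have := hmax (insert z S) ⟨by
      intro s hs
      rcases Finset.mem_insert.1 hs with rfl | hs
      · exact rr_of_mem HF hx hz
      · exact h1 s hs, by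
      intro s hs t ht hst
      rcases Finset.mem_insert.1 hs with hs1 | hs1 <;>
        rcases Finset.mem_insert.1 ht with ht1 | ht1
      · exact hs1.trans ht1.symm
      · rw [hs1, hzc] at hst; exact absurd hst (hcne t ht1)
      · rw [ht1, hzc] at hst; exact absurd hst.symm (hcne s hs1)
      · exact h2 s hs1 t ht1 hst, by
      intro s hs t ht hst
      rcases Finset.mem_insert.1 hs with hs1 | hs1 <;>
        rcases Finset.mem_insert.1 ht with ht1 | ht1
      · exact hst.1.ne (hs1.trans ht1.symm)
      · exact hb t ht1 (hs1 ▸ hst)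
      · exact hb s hs1 (ht1 ▸ blk_symm hst)
      · exact h3 s hs1 t ht1 hst⟩
    rw [Finset.card_insert_of_notMem hzS] at this
    omega
  obtain ⟨x', hx', hxx'⟩ := other_mem HF hx.1
  obtain ⟨-, hcx', hcnx'⟩ := full_of_mem HF hx.1 hx'
  obtain ⟨s, hs, hb⟩ := blkex x (mem_cls_self F 4 x)
  obtain ⟨t, ht, hb'⟩ := blkex x' hx'
  have hxS : x ∉ S := fun h => hcon x h (mem_cls_self F 4 x)
  have hadjt : F.Adj x t := adj_of_cn_eq hcnx' hb'.1 (fun h => hxS (h ▸ ht))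
  have hst : s = t := h2 s hs t ht
    (one_nbr HF hS0 hx (h1 s hs) (h1 t ht) hb.1 hadjt (hcne s hs) (hcne t ht))
  subst hst
  obtain ⟨s', hs', hss'⟩ := other_mem HF (h1 s hs).1
  obtain ⟨hfs', hcs', hcns'⟩ := full_of_mem HF (h1 s hs).1 hs'
  by_cases hL : Lo G F s' = Lo G F s
  · obtain ⟨hxs, e1, i, hi, j, hj, hij⟩ := hb
    have hLc := Lo_card HG HF hFG hx.1
    have e2 : Lo G F x = {i, j} := (eq_of_pair (U := {i, j}) (Finset.card_pair hij.ne) hLc hij.ne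
      (by simp) (by simp) hi hj).1
    exact hno (caseK6 HG HF hFG IH hx.1 (h1 s hs).1 hxs (hcne s hs) hx' hxx' hs' hss' hij e2
      (by rw [hb'.2.1, ← e1, e2]) (by rw [← e1, e2]) (by rw [hL, ← e1, e2]))
  · have hs'S : s' ∉ S := fun h => hss' (h2 s hs s' h hcs'.symm)
    have hRs' : Rr F S0 s' := rr_of_mem HF (h1 s hs) hs'
    have hxs' : x ≠ s' := by
      intro h
      apply hcne s hs
      rw [h, hcs']
    have hs'x : F.Adj s' x := adj_of_cn_eq hcns'.symm hb.1.symm hxs'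
    have b1 : ∀ t ∈ S, t ≠ s → ¬ Blk G F x t := by
      intro t ht hts hbt
      exact hts (h2 t ht s hs (one_nbr HF hS0 hx (h1 t ht) (h1 s hs) hbt.1 hb.1 (hcne t ht)
        (hcne s hs)))
    have b2 : ¬ Blk G F x s' := by
      intro h
      exact hL (h.2.1.symm.trans hb.2.1)
    have b3 : ∀ t ∈ S, t ≠ s → ¬ Blk G F s' t := by
      intro t ht hts hbt
      exact hcne t ht (one_nbr HF hS0 hRs' hx (h1 t ht) hs'x hbt.1
        (by rw [hcs']; exact (hcne s hs).symm)
        (by rw [hcs']; exact fun h => hts (h2 s hs t ht h).symm))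
    have mem' : ∀ t, t ∈ insert x (insert s' (S.erase s)) ↔ t = x ∨ t = s' ∨ (t ≠ s ∧ t ∈ S) := by
      intro t
      rw [Finset.mem_insert, Finset.mem_insert, Finset.mem_erase]
    have := hmax (insert x (insert s' (S.erase s))) ⟨by
      intro t ht
      rcases (mem' t).1 ht with rfl | rfl | ⟨_, h⟩
      · exact hx
      · exact hRs'
      · exact h1 t h, by
      intro a ha b hb' hab
      rcases (mem' a).1 ha with ha1 | ha1 | ⟨ha1, ha2⟩ <;>
        rcases (mem' b).1 hb' with hb1 | hb1 | ⟨hb1, hb2⟩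
      · exact ha1.trans hb1.symm
      · rw [ha1, hb1, hcs'] at hab; exact absurd hab (hcne s hs)
      · rw [ha1] at hab; exact absurd hab (hcne b hb2)
      · rw [ha1, hb1, hcs'] at hab; exact absurd hab.symm (hcne s hs)
      · exact ha1.trans hb1.symm
      · rw [ha1, hcs'] at hab; exact absurd (h2 s hs b hb2 hab).symm hb1
      · rw [hb1] at hab; exact absurd hab.symm (hcne a ha2)
      · rw [hb1, hcs'] at hab; exact absurd (h2 a ha2 s hs hab) ha1
      · exact h2 a ha2 b hb2 hab, by
      intro a ha b hb' hab
      rcases (mem' a).1 ha with ha1 | ha1 | ⟨ha1, ha2⟩ <;>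
        rcases (mem' b).1 hb' with hb1 | hb1 | ⟨hb1, hb2⟩
      · exact hab.1.ne (ha1.trans hb1.symm)
      · rw [ha1, hb1] at hab; exact b2 hab
      · rw [ha1] at hab; exact b1 b hb2 hb1 hab
      · rw [ha1, hb1] at hab; exact b2 (blk_symm hab)
      · exact hab.1.ne (ha1.trans hb1.symm)
      · rw [ha1] at hab; exact b3 b hb2 hb1 hab
      · rw [hb1] at hab; exact b1 a ha2 ha1 (blk_symm hab)
      · rw [hb1] at hab; exact b3 a ha2 ha1 (blk_symm hab)
      · exact h3 a ha2 b hb2 hab⟩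
    have hs'e : s' ∉ S.erase s := fun h => hs'S (Finset.mem_of_mem_erase h)
    have hxe : x ∉ insert s' (S.erase s) := by
      rw [Finset.mem_insert, not_or]
      exact ⟨hxs', fun h => hxS (Finset.mem_of_mem_erase h)⟩
    rw [Finset.card_insert_of_notMem hxe, Finset.card_insert_of_notMem hs'e] at this
    have := Finset.card_erase_add_one hs
    omega

end
end KpFree

set_option linter.unusedSectionVars false
namespace KpFree
section
open Classical
variable {V : Type*} [Fintype V]

theorem l33 (n : ℕ) : ∀ G : SimpleGraph V, Hyp G 6 → (supp G).card = n → ∃ c, Good G c := by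
  induction n using Nat.strong_induction_on with
  | _ n ih =>
  intro G HG hn
  by_contra hno
  have IH : ∀ G' : SimpleGraph V, Hyp G' 6 → (supp G').card < (supp G).card → ∃ c, Good G' c :=
    fun G' h1 h2 => ih _ (hn ▸ h2) G' h1 rfl
  obtain ⟨I, hI, H6⟩ := step HG (by omega)
  obtain ⟨I', hI', HF⟩ := step H6 (by omega)
  simp only [Nat.add_one_sub_one, Nat.reduceSub] at H6 HF
  set F := del (del G I) I' with hFdef
  have Fadj : ∀ a b, F.Adj a b ↔ G.Adj a b ∧ (a ∉ I ∧ a ∉ I') ∧ (b ∉ I ∧ b ∉ I') := by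
    intro a b
    constructor
    · rintro ⟨⟨h1, h2, h3⟩, h4, h5⟩
      exact ⟨h1, ⟨h2, h4⟩, h3, h5⟩
    · rintro ⟨h1, ⟨h2, h4⟩, h3, h5⟩
      exact ⟨⟨h1, h2, h3⟩, h4, h5⟩
  have hFG : ∀ a b, F.Adj a b → G.Adj a b := fun a b h => ((Fadj a b).1 h).1
  obtain ⟨T, hT1, hT2, hT3⟩ := nonfullHit HF (by omega)
  obtain ⟨S0, hS01, hS02, hS03⟩ := exists_S0 F
  obtain ⟨S, hS1, hS2, hS3, hS4⟩ := exists_S HG HF hFG IH hS03 hno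
  apply hno
  refine ⟨fun v => decide (v ∈ I ∨ v ∈ I' ∨ v ∈ T ∨ v ∈ S), ?_⟩
  intro Q hQ hQ4 κ hκ
  cases κ with
  | false =>
    simp only [decide_eq_false_iff_not, not_or] at hκ
    have hQF : Big F 4 Q := ⟨fun a ha b hb hab => (Fadj a b).2
      ⟨hQ a ha b hb hab, ⟨(hκ a ha).1, (hκ a ha).2.1⟩, (hκ b hb).1, (hκ b hb).2.1⟩, hQ4⟩
    have hit : ∀ y ∈ Q, ¬ Rr F S0 y := by
      intro y hy hR
      obtain ⟨s, hs, hsy⟩ := hS4 y hR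
      exact (hκ s (cls_sub hQF hy hsy)).2.2.2 hs
    by_cases hNF : NF F 4 Q
    · obtain ⟨t, ht, htQ⟩ := hT2 Q hNF
      exact (hκ t htQ).2.2.1 ht
    · obtain ⟨x, hxQ, hx⟩ : ∃ x ∈ Q, Full F 4 x := by
        by_contra h
        push Not at h
        exact hNF ⟨hQF, h⟩
      have inS : ∀ y ∈ Q, Full F 4 y → ∃ s ∈ S0, s ∈ cls F 4 y := by
        intro y hy hfy
        by_contra h
        push Not at h
        exact hit y hy ⟨hfy, h⟩
      obtain ⟨s, hs, hsx⟩ := inS x hxQ hx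
      obtain ⟨y, hyQ, hyx⟩ : ∃ y ∈ Q, y ∉ cls F 4 x := by
        by_contra h
        push Not at h
        have := Finset.card_le_card (show Q ⊆ cls F 4 x from h)
        rw [card_cls4 HF hx] at this
        omega
      have hsQ := cls_sub hQF hxQ hsx
      have hy : Full F 4 y := (hS02 s hs).2 y (hQF.1 s hsQ y hyQ (fun h => hyx (h ▸ hsx)))
      obtain ⟨s', hs', hsy⟩ := inS y hyQ hy
      have hne : s ≠ s' := by
        intro h
        apply hyx
        rw [cls_eq_of_mem HF hx hy hsx (h ▸ hsy)]
        exact mem_cls_self F 4 y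
      exact hS01 s hs s' hs' (hQF.1 s hsQ s' (cls_sub hQF hyQ hsy) hne)
  | true =>
    simp only [decide_eq_true_eq] at hκ
    have c1 : (Q.filter (fun v => v ∈ I)).card ≤ 1 := by
      rw [Finset.card_le_one]
      intro a ha b hb
      rw [Finset.mem_filter] at ha hb
      by_contra hab
      exact hI a ha.2 b hb.2 (hQ a ha.1 b hb.1 hab)
    have c2 : (Q.filter (fun v => v ∉ I ∧ v ∈ I')).card ≤ 1 := by
      rw [Finset.card_le_one]
      intro a ha b hb
      rw [Finset.mem_filter] at ha hb
      by_contra hab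
      exact hI' a ha.2.2 b hb.2.2 ⟨hQ a ha.1 b hb.1 hab, ha.2.1, hb.2.1⟩
    let R := Q.filter (fun v => v ∉ I ∧ v ∉ I')
    have csum : (Q.filter (fun v => v ∈ I)).card + (Q.filter (fun v => v ∉ I ∧ v ∈ I')).card
        + R.card = 4 := by
      rw [← hQ4]
      have e1 := Finset.card_filter_add_card_filter_not (s := Q) (fun v => v ∈ I)
      have e2 := Finset.card_filter_add_card_filter_not (s := Q.filter (fun v => v ∉ I))
        (fun v => v ∈ I')
      rw [Finset.filter_filter, Finset.filter_filter] at e2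
      simp only [R]
      omega
    have memR : ∀ v, v ∈ R ↔ v ∈ Q ∧ v ∉ I ∧ v ∉ I' := by
      intro v; simp only [R, Finset.mem_filter]
    have hRF : Clq F R := by
      intro a ha b hb hab
      rw [memR] at ha hb
      exact (Fadj a b).2 ⟨hQ a ha.1 b hb.1 hab, ha.2, hb.2⟩
    have hRS : ∀ v ∈ R, v ∈ S := by
      intro v hv
      by_contra hvS
      have hv' := (memR v).1 hv
      have hvT : v ∈ T := by
        rcases hκ v hv'.1 with h | h | h | h
        · exact absurd h hv'.2.1
        · exact absurd h hv'.2.2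
        · exact h
        · exact absurd h hvS
      obtain ⟨w, hw, hwv⟩ := Finset.exists_mem_ne (by omega : 1 < R.card) v
      have hadj := hRF v hv w hw hwv.symm
      have hw' := (memR w).1 hw
      rcases hκ w hw'.1 with h | h | h | h
      · exact hw'.2.1 h
      · exact hw'.2.2 h
      · exact hT1 v hvT w h hadj
      · obtain ⟨Q', hQ', hvQ'⟩ := hT3 v hvT
        exact nf_not_adj_full HF (by omega) hQ' hvQ' (hS1 w h).1 hadj
    have hcl : ∀ a ∈ R, ∀ b ∈ R, a ≠ b → cls F 4 a ≠ cls F 4 b := by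
      intro a ha b hb hab h
      exact hab (hS2 a (hRS a ha) b (hRS b hb) h)
    by_cases hR3 : 2 < R.card
    · obtain ⟨x, y, z, hx, hy, hz, hxy, hxz, hyz⟩ := Finset.two_lt_card_iff.1 hR3
      exact hcl y hy z hz hyz (one_nbr HF hS03 (hS1 x (hRS x hx)) (hS1 y (hRS y hy))
        (hS1 z (hRS z hz)) (hRF x hx y hy hxy) (hRF x hx z hz hxz) (hcl x hx y hy hxy)
        (hcl x hx z hz hxz))
    · obtain ⟨x, hx, y, hy, hxy⟩ := Finset.one_lt_card.1 (by omega : 1 < R.card)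
      obtain ⟨i, hi⟩ := Finset.card_pos.1 (by omega : 0 < (Q.filter (fun v => v ∈ I)).card)
      obtain ⟨j, hj⟩ := Finset.card_pos.1
        (by omega : 0 < (Q.filter (fun v => v ∉ I ∧ v ∈ I')).card)
      rw [Finset.mem_filter] at hi hj
      have hij : i ≠ j := fun h => hj.2.1 (h ▸ hi.2)
      have hLi : ∀ a ∈ R, i ∈ Lo G F a ∧ j ∈ Lo G F a := by
        intro a ha
        have ha' := (memR a).1 ha
        rw [mem_Lo, mem_Lo]
        refine ⟨⟨hQ a ha'.1 i hi.1 (fun h => ha'.2.1 (h ▸ hi.2)), fun h => ?_⟩,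
          ⟨hQ a ha'.1 j hj.1 (fun h => ha'.2.2 (h ▸ hj.2.2)), fun h => ?_⟩⟩
        · exact ((Fadj _ _).1 h).2.2.1 hi.2
        · exact ((Fadj _ _).1 h).2.2.2 hj.2.2
      have hL : ∀ a ∈ R, Lo G F a = {i, j} := by
        intro a ha
        exact (eq_of_pair (U := {i, j}) (Finset.card_pair hij)
          (Lo_card HG HF hFG (hS1 a (hRS a ha)).1) hij (by simp) (by simp) (hLi a ha).1
          (hLi a ha).2).1
      apply hS3 x (hRS x hx) y (hRS y hy)
      exact ⟨hRF x hx y hy hxy, by rw [hL x hx, hL y hy], i, (hLi x hx).1, j, (hLi x hx).2,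
        hQ i hi.1 j hj.1 hij⟩

theorem remove (e : ℕ) (he : 4 ≤ e) (r : ℕ) : ∀ G : SimpleGraph V, Hyp G (e + r) →
    ∃ S : Finset V, (∀ Q, Clq G Q → Q ⊆ S → Q.card ≤ r) ∧ Hyp (del G S) e := by
  induction r with
  | zero =>
    intro G HG
    refine ⟨∅, ?_, hyp_del HG _⟩
    intro Q _ hQ
    rw [Finset.subset_empty.1 hQ]
    simp
  | succ r ih =>
    intro G HG
    obtain ⟨I, hI, H1⟩ := step HG (by omega)
    have : e + (r + 1) - 1 = e + r := by omega
    rw [this] at H1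
    obtain ⟨S, hS, H2⟩ := ih _ H1
    refine ⟨I ∪ S, ?_, ?_⟩
    · intro Q hQ hQS
      have c1 : (Q ∩ I).card ≤ 1 := by
        rw [Finset.card_le_one]
        intro a ha b hb
        rw [Finset.mem_inter] at ha hb
        by_contra hab
        exact hI a ha.2 b hb.2 (hQ a ha.1 b hb.1 hab)
      have c2 := hS (Q \ I) (by
        intro a ha b hb hab
        rw [Finset.mem_sdiff] at ha hb
        exact ⟨hQ a ha.1 b hb.1 hab, ha.2, hb.2⟩) (by
        intro a ha
        rw [Finset.mem_sdiff] at ha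
        exact (Finset.mem_union.1 (hQS ha.1)).resolve_left ha.2)
      have := Finset.card_sdiff_add_card_inter Q I
      omega
    · have : del G (I ∪ S) = del (del G I) S := by
        ext a b
        simp only [del, Finset.mem_union, not_or]
        tauto
      rw [this]
      exact H2

theorem colorAll (q : ℕ) (hq : 3 ≤ q) (k : ℕ) : ∀ G : SimpleGraph V, Hyp G ((k + 1) * q) →
    ∃ c : V → ℕ, (∀ v, c v < k + 1) ∧
      ∀ Q, Clq G Q → Q.card = q + 1 → ∀ κ, ¬ ∀ v ∈ Q, c v = κ := by
  induction k with
  | zero =>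
    intro G HG
    refine ⟨fun _ => 0, by simp, ?_⟩
    intro Q hQ hc
    have := HG.2 Q hQ
    omega
  | succ k ih =>
    intro G HG
    by_cases hb : q = 3 ∧ k = 0
    · obtain ⟨rfl, rfl⟩ := hb
      obtain ⟨c, hc⟩ := l33 _ G HG rfl
      refine ⟨fun v => if c v = true then 1 else 0, ?_, ?_⟩
      · intro v; dsimp only; split_ifs <;> omega
      · intro Q hQ hQ4 κ hκ
        apply hc Q hQ hQ4 (decide (κ = 1))
        intro v hv
        have := hκ v hv
        dsimp only at this
        cases hcv : c v
        · rw [hcv] at this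
          simp at this
          subst this
          simp
        · rw [hcv] at this
          simp at this
          subst this
          simp
    · have he : 4 ≤ (k + 1) * q := by
        by_cases hk : k = 0
        · subst hk; omega
        · have : 2 * q ≤ (k + 1) * q := Nat.mul_le_mul_right q (by omega)
          omega
      obtain ⟨S, hS, H2⟩ := remove _ he q G (by
        have : (k + 1) * q + q = (k + 1 + 1) * q := by ring
        rw [this]; exact HG)
      obtain ⟨c, hc1, hc2⟩ := ih _ H2
      refine ⟨fun v => if v ∈ S then k + 1 else c v, ?_, ?_⟩
      · intro v
        dsimp only
        have := hc1 v
        split_ifs <;> omega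
      · intro Q hQ hQc κ hκ
        dsimp only at hκ
        by_cases hk : κ = k + 1
        · have : Q ⊆ S := by
            intro v hv
            by_contra hvS
            have h1 := hκ v hv
            rw [if_neg hvS] at h1
            have := hc1 v
            omega
          have := hS Q hQ this
          omega
        · have hd : ∀ v ∈ Q, v ∉ S := by
            intro v hv hvS
            have h1 := hκ v hv
            rw [if_pos hvS] at h1
            exact hk h1.symm
          refine hc2 Q (fun a ha b hb hab => ⟨hQ a ha b hb hab, hd a ha, hd b hb⟩) hQc κ ?_
          intro v hv
          have h1 := hκ v hv
          rwa [if_neg (hd v hv)] at h1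

end
end KpFree

/-- Let `p ≥ 4` and let `H` be a finite simple graph with `Δ(H) ≥ 6` and
`ω(H) ≤ Δ(H) − 1`. Then `V(H)` can be partitioned into at most `⌈(Δ(H)−1)/(p−1)⌉`
sets each of which induces a `K_p`-free subgraph, i.e.
`χ_{K_p}(H) ≤ ⌈(Δ(H)−1)/(p−1)⌉`. -/
theorem statement2 {V : Type*} [Fintype V] (H : SimpleGraph V) [DecidableRel H.Adj]
    (p : ℕ) (hp : 4 ≤ p)
    (hΔ : 6 ≤ H.maxDegree) (hω : H.cliqueNum ≤ H.maxDegree - 1) :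
    ∃ P : Fin ((H.maxDegree - 1) ⌈/⌉ (p - 1)) → Set V,
      (∀ x : V, ∃! i, x ∈ P i) ∧
      ∀ i, H.CliqueFreeOn (P i) p := by
  obtain ⟨q, rfl⟩ : ∃ q, p = q + 1 := ⟨p - 1, by omega⟩
  simp only [Nat.add_one_sub_one]
  have hle : H.maxDegree - 1 ≤ q * ((H.maxDegree - 1) ⌈/⌉ q) := by
    have := le_smul_ceilDiv (a := q) (b := H.maxDegree - 1) (by omega)
    simpa using this
  generalize (H.maxDegree - 1) ⌈/⌉ q = m at hle
  cases m with
  | zero => simp at hle; omega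
  | succ k =>
  have hyp : KpFree.Hyp H ((k + 1) * q) := by
    rw [Nat.mul_comm q] at hle
    constructor
    · intro v
      have h1 := H.degree_le_maxDegree v
      have h2 : (KpFree.nb H v).card = H.degree v := by
        rw [← SimpleGraph.card_neighborFinset_eq_degree]
        congr 1
        ext w
        rw [KpFree.mem_nb, SimpleGraph.mem_neighborFinset]
      omega
    · intro Q hQ
      have : H.IsClique (Q : Set V) := fun a ha b hb hab => hQ a ha b hb hab
      have := this.card_le_cliqueNum
      omega
  obtain ⟨c, hc1, hc2⟩ := KpFree.colorAll q (by omega) k H hyp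
  refine ⟨fun i => {v | c v = i}, ?_, ?_⟩
  · intro x
    refine ⟨⟨c x, hc1 x⟩, rfl, ?_⟩
    intro j hj
    exact Fin.ext (Eq.symm hj)
  · intro i Q hQi hQ
    exact hc2 Q (fun a ha b hb hab => hQ.isClique ha hb hab) hQ.card_eq i (fun v hv => hQi hv)
end
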